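/- arXiv:math-ph/0702051 — 5 statements merged into one kernel-verified Lean document; each statement's English description precedes it below -/
import Mathlib

section
/- (Theorem 2, case of vanishing diffusion with nonvanishing drift at the zeros.) Let p and q be π-periodic real trigonometric polynomials of degree at most 4, with p ≥ 0, p not identically zero, and suppose that q(θ̂) ≠ 0 for every θ̂ ∈ ℝ/πℤ with p(θ̂) = 0 (note p, being a nonnegative trigonometric polynomial of degree 4, has at most two zeros on ℝ/πℤ, each of even order). Then there exists exactly one pair (ρ, C), where C ∈ ℝ and ρ : ℝ/πℤ → [0,∞) is continuous with ∫_0^π ρ(θ) dθ = 1, such that ρ is continuously differentiable on the complement of the zero set of p and satisfies p ρ′ + (p′ − q) ρ = C there; moreover this ρ is C^∞ on all of ℝ/πℤ. -/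
/-!
The flux `w = p ρ` satisfies `w' = (q / p) w + C`. At a zero of `p` also `p' = 0` while `q ≠ 0`, so
with an integrating factor `e^{-A}`, `A' = q / p`, L'Hôpital's rule shows that every continuous
solution has `w / p → -C / q` there. The same applies to the equation obtained by differentiating,
and smoothness of `ρ` follows by induction.

*Uniqueness.* The difference of two groundstates has mean zero, so unless it vanishes it changes
sign. At the left end of a sign interval its flux has derivative `C`, so `C ≥ 0` or `C ≤ 0`
according to the sign, and hence `C = 0`. Then each sign interval runs from a zero of `p` with
`q > 0` to a zero of `p` with `q < 0`. A positive and a negative interval together need three zeros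
of `p` per period, whereas `p ≥ 0` of degree `4` has only double zeros, hence at most two.

*Existence.* For `p + ε` there is an explicit periodic solution. At a maximum of `ρ` the equation
reads `(p' - q) ρ = C`, and `p + |p' - q|` is bounded below, so all bounds are uniform in `ε` and
Arzelà–Ascoli yields a limit flux, which is divisible by `p`.
-/

/- Statement 7 (Theorem 2, vanishing diffusion with nonvanishing drift at the zeros):
for π-periodic trigonometric polynomial coefficients p ≥ 0 (not identically zero) and
q with q ≠ 0 at every zero of p, the once-integrated Fokker-Planck equation has a
unique continuous nonnegative normalized groundstate (ρ, C), which is moreover C^∞. -/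

open MeasureTheory Real Set

namespace FokkerPlanck7

/-- A real trigonometric polynomial of degree at most 4 on `S¹_π = ℝ/πℤ`. -/
def IsTrigPoly4 (p : ℝ → ℝ) : Prop :=
  ∃ c : Fin 5 → ℝ, ∀ θ : ℝ,
    p θ = c 0 + c 1 * Real.cos (2 * θ) + c 2 * Real.sin (2 * θ) +
      c 3 * Real.cos (4 * θ) + c 4 * Real.sin (4 * θ)

/-- The (weak) groundstate property: `ρ` is continuous, nonnegative, `π`-periodic and
normalized, is continuously differentiable away from the zero set of `p`, and solves
the once-integrated Fokker-Planck equation `p ρ' + (p' - q) ρ = C` there. -/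
def IsGroundstateW (p q : ℝ → ℝ) (ρ : ℝ → ℝ) (C : ℝ) : Prop :=
  Continuous ρ ∧ Function.Periodic ρ π ∧ (∀ θ, 0 ≤ ρ θ) ∧
    (∫ θ in (0:ℝ)..π, ρ θ) = 1 ∧
    ContDiffOn ℝ 1 ρ {θ | p θ ≠ 0} ∧
    ∀ θ, p θ ≠ 0 → p θ * deriv ρ θ + (deriv p θ - q θ) * ρ θ = C

section FluxEquation

open Filter Topology

/-- A diffusion coefficient: a nonnegative `C¹` function that may vanish, but only at isolated
points. -/
structure IsDiffusion (p : ℝ → ℝ) : Prop where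
  contDiff : ContDiff ℝ 1 p
  nonneg : ∀ x, 0 ≤ p x
  eventually_ne : ∀ x, ∀ᶠ y in 𝓝[≠] x, p y ≠ 0

namespace IsDiffusion

variable {p : ℝ → ℝ} (hp : IsDiffusion p) {x : ℝ}

include hp

lemma differentiable : Differentiable ℝ p :=
  hp.contDiff.differentiable one_ne_zero

lemma continuous : Continuous p :=
  hp.contDiff.continuous

lemma continuous_deriv : Continuous (deriv p) :=
  hp.contDiff.continuous_deriv le_rfl

lemma hasDerivAt (x : ℝ) : HasDerivAt p (deriv p x) x :=
  (hp.differentiable x).hasDerivAt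

lemma deriv_eq_zero (hx : p x = 0) : deriv p x = 0 :=
  IsLocalMin.deriv_eq_zero <| Eventually.of_forall fun y ↦ hx ▸ hp.nonneg y

lemma pos (hx : p x ≠ 0) : 0 < p x :=
  (hp.nonneg x).lt_of_ne' hx

lemma eventually_pos_nhdsGT (x : ℝ) : ∀ᶠ y in 𝓝[>] x, 0 < p y :=
  ((hp.eventually_ne x).filter_mono (nhdsGT_le_nhdsNE x)).mono fun _ ↦ hp.pos

lemma dense_ne_zero : Dense {x | p x ≠ 0} := fun x ↦
  mem_closure_iff_frequently.2 <|
    (hp.eventually_ne x).frequently.filter_mono nhdsWithin_le_nhds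

lemma ae_ne_zero : ∀ᵐ x, p x ≠ 0 := by
  have hmem : {x | p x ≠ 0} ∈ codiscreteWithin (univ : Set ℝ) :=
    mem_codiscreteWithin_iff_forall_mem_nhdsNE.2 fun x _ ↦
      (hp.eventually_ne x).mono fun y hy ↦ Or.inl hy
  have hae := ae_restrict_le_codiscreteWithin (μ := volume) MeasurableSet.univ hmem
  rwa [Measure.restrict_univ] at hae

lemma comp_neg : IsDiffusion fun x ↦ p (-x) where
  contDiff := hp.contDiff.comp contDiff_neg
  nonneg _ := hp.nonneg _
  eventually_ne x := by
    have hneg : Tendsto (fun y : ℝ ↦ -y) (𝓝[≠] x) (𝓝[≠] (-x)) :=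
      continuous_neg.continuousWithinAt.tendsto_nhdsWithin fun y hy ↦ by simpa using hy
    exact hneg.eventually (hp.eventually_ne (-x))

end IsDiffusion

lemma hasDerivAt_of_eventually_hasDerivAt_of_ne {f g : ℝ → ℝ} {x : ℝ}
    (hd : ∀ᶠ y in 𝓝[≠] x, HasDerivAt f (g y) y) (hf : ContinuousAt f x)
    (hg : ContinuousAt g x) : HasDerivAt f (g x) x := by
  set s := {y | HasDerivAt f (g y) y}
  have hs : DifferentiableOn ℝ f s := fun y hy ↦ hy.differentiableAt.differentiableWithinAt
  have hlim : Tendsto (deriv f) (𝓝[≠] x) (𝓝 (g x)) :=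
    (hg.tendsto.mono_left nhdsWithin_le_nhds).congr' (hd.mono fun y hy ↦ hy.deriv.symm)
  have hright : HasDerivWithinAt f (g x) (Ici x) x :=
    hasDerivWithinAt_Ici_of_tendsto_deriv hs hf.continuousWithinAt
      (nhdsGT_le_nhdsNE x hd) (hlim.mono_left (nhdsGT_le_nhdsNE x))
  have hleft : HasDerivWithinAt f (g x) (Iic x) x :=
    hasDerivWithinAt_Iic_of_tendsto_deriv hs hf.continuousWithinAt
      (nhdsLT_le_nhdsNE x hd) (hlim.mono_left (nhdsLT_le_nhdsNE x))
  simpa using hright.union hleft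

lemma tendsto_atBot_nhdsGT_of_div_sub_le_deriv {B B' : ℝ → ℝ} {a c : ℝ} (hc : 0 < c)
    (hB : ∀ᶠ x in 𝓝[>] a, HasDerivAt B (B' x) x)
    (hle : ∀ᶠ x in 𝓝[>] a, c / (x - a) ≤ B' x) : Tendsto B (𝓝[>] a) atBot := by
  obtain ⟨b, hab : a < b, hsub⟩ := mem_nhdsGT_iff_exists_Ioc_subset.1 (hB.and hle)
  have hd : ∀ x ∈ Ioc a b, HasDerivAt (fun x ↦ B x - c * log (x - a)) (B' x - c / (x - a)) x := by
    intro x hx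
    simpa [div_eq_mul_inv] using (hsub hx).1.fun_sub
      ((((hasDerivAt_id x).sub_const a).log (sub_pos.2 hx.1).ne').const_mul c)
  have hmono : MonotoneOn (fun x ↦ B x - c * log (x - a)) (Ioc a b) := by
    refine monotoneOn_of_hasDerivWithinAt_nonneg (convex_Ioc a b)
      (fun x hx ↦ (hd x hx).continuousAt.continuousWithinAt)
      (fun x hx ↦ (hd x (interior_subset hx)).hasDerivWithinAt)
      fun x hx ↦ sub_nonneg.2 (hsub (interior_subset hx)).2
  have hsub_lim : Tendsto (fun x ↦ x - a) (𝓝[>] a) (𝓝[>] 0) := by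
    have hcont : Continuous fun x : ℝ ↦ x - a := by fun_prop
    simpa using hcont.continuousWithinAt.tendsto_nhdsWithin (s := Ioi a) (x := a) (t := Ioi 0)
      fun x hx ↦ sub_pos.2 hx
  have hlog : Tendsto (fun x ↦ B b - c * log (b - a) + c * log (x - a)) (𝓝[>] a) atBot :=
    tendsto_atBot_add_const_left _ _ ((tendsto_log_nhdsGT_zero.comp hsub_lim).const_mul_atBot hc)
  refine tendsto_atBot_mono' _ ?_ hlog
  filter_upwards [Ioc_mem_nhdsGT hab] with x hx
  linarith [hmono hx (right_mem_Ioc.2 hab) hx.2]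

lemma isLittleO_of_isLittleO_deriv_nhdsGT {f g f' g' : ℝ → ℝ} {a : ℝ}
    (hf : ∀ᶠ x in 𝓝[>] a, HasDerivAt f (f' x) x)
    (hg : ∀ᶠ x in 𝓝[>] a, HasDerivAt g (g' x) x)
    (hg' : ∀ᶠ x in 𝓝[>] a, g' x ≤ 0) (hgt : Tendsto g (𝓝[>] a) atTop)
    (hfg : f' =o[𝓝[>] a] g') : f =o[𝓝[>] a] g := by
  refine Asymptotics.isLittleO_iff.2 fun ε hε ↦ ?_
  obtain ⟨b, hab : a < b, hsub⟩ := mem_nhdsGT_iff_exists_Ioc_subset.1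
    (hf.and <| hg.and <| hg'.and <| Asymptotics.isLittleO_iff.1 hfg (half_pos hε))
  have hbound : ∀ x ∈ Ioc a b, ‖f b - f x‖ ≤ ε / 2 * (g x - g b) := by
    intro x hx
    have hIcc : ∀ y ∈ Icc x b, y ∈ Ioc a b := fun y hy ↦ ⟨hx.1.trans_le hy.1, hy.2⟩
    refine image_norm_le_of_norm_deriv_right_le_deriv_boundary' (a := x) (b := b)
      (f := fun y ↦ f y - f x) (f' := f') (B := fun y ↦ ε / 2 * (g x - g y))
      (B' := fun y ↦ ε / 2 * (0 - g' y)) ?_ ?_ (by simp) ?_ ?_ ?_ (right_mem_Icc.2 hx.2)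
    · exact fun y hy ↦ ((hsub (hIcc y hy)).1.sub_const _).continuousAt.continuousWithinAt
    · exact fun y hy ↦ ((hsub (hIcc y (Ico_subset_Icc_self hy))).1.sub_const _).hasDerivWithinAt
    · exact fun y hy ↦ (((hsub (hIcc y hy)).2.1.const_sub _).const_mul _).continuousAt
        |>.continuousWithinAt
    · intro y hy
      simpa using (((hsub (hIcc y (Ico_subset_Icc_self hy))).2.1.const_sub (g x)).const_mul
        (ε / 2)).hasDerivWithinAt
    · intro y hy
      obtain ⟨-, -, hneg, hle⟩ := hsub (hIcc y (Ico_subset_Icc_self hy))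
      simpa [abs_of_nonpos hneg] using hle
  filter_upwards [Ioc_mem_nhdsGT hab, hgt.eventually_ge_atTop 0,
    hgt.eventually_ge_atTop (2 / ε * (‖f b‖ - ε / 2 * g b))] with x hx hx0 hlarge
  have hlarge : ‖f b‖ - ε / 2 * g b ≤ ε / 2 * g x := by
    rw [div_mul_eq_mul_div, div_le_iff₀ hε] at hlarge
    linarith
  have htri : ‖f x‖ ≤ ‖f b‖ + ‖f b - f x‖ := by
    simpa using norm_sub_le (f b) (f b - f x)
  rw [norm_of_nonneg hx0]
  linarith [hbound x hx]

lemma lhopital_atTop_nhdsGT {f g f' g' : ℝ → ℝ} {a L : ℝ}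
    (hf : ∀ᶠ x in 𝓝[>] a, HasDerivAt f (f' x) x)
    (hg : ∀ᶠ x in 𝓝[>] a, HasDerivAt g (g' x) x)
    (hg' : ∀ᶠ x in 𝓝[>] a, g' x < 0) (hgt : Tendsto g (𝓝[>] a) atTop)
    (hdiv : Tendsto (fun x ↦ f' x / g' x) (𝓝[>] a) (𝓝 L)) :
    Tendsto (fun x ↦ f x / g x) (𝓝[>] a) (𝓝 L) := by
  have hcancel : ∀ {F G : ℝ → ℝ}, (∀ᶠ x in 𝓝[>] a, G x ≠ 0) →
      (fun x ↦ F x / G x - L) =ᶠ[𝓝[>] a] fun x ↦ (F x - L * G x) / G x :=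
    fun hG ↦ hG.mono fun x hx ↦ by field_simp
  have hlittle : (fun x ↦ f' x - L * g' x) =o[𝓝[>] a] g' := by
    refine (Asymptotics.isLittleO_iff_tendsto' (hg'.mono fun x hx h ↦ absurd h hx.ne)).2 ?_
    exact (tendsto_sub_nhds_zero_iff.2 hdiv).congr' (hcancel (hg'.mono fun x hx ↦ hx.ne))
  have hmain : (fun x ↦ f x - L * g x) =o[𝓝[>] a] g :=
    isLittleO_of_isLittleO_deriv_nhdsGT (hf.and hg |>.mono fun x hx ↦ hx.1.sub (hx.2.const_mul L))
      hg (hg'.mono fun x hx ↦ hx.le) hgt hlittle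
  exact tendsto_sub_nhds_zero_iff.1 <| hmain.tendsto_div_nhds_zero.congr'
    (hcancel (hgt.eventually_ne_atTop 0)).symm

lemma hasDerivAt_mul_exp_neg {u A : ℝ → ℝ} {c s x : ℝ} (hu : HasDerivAt u (c * u x + s) x)
    (hA : HasDerivAt A c x) :
    HasDerivAt (fun x ↦ u x * exp (-A x)) (s * exp (-A x)) x :=
  (hu.mul hA.fun_neg.exp).congr_deriv (by ring)

namespace IsDiffusion

variable {p a s u A : ℝ → ℝ} {x₀ : ℝ}

lemma tendsto_atBot_of_hasDerivAt_div {b B : ℝ → ℝ} {c : ℝ} (hp : IsDiffusion p)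
    (hx₀ : p x₀ = 0) (hc : 0 < c) (hB : ∀ᶠ x in 𝓝[>] x₀, HasDerivAt B (b x / p x) x)
    (hb : ∀ᶠ x in 𝓝[>] x₀, c ≤ b x) : Tendsto B (𝓝[>] x₀) atBot := by
  refine tendsto_atBot_nhdsGT_of_div_sub_le_deriv hc hB ?_
  have hlin : p =o[𝓝 x₀] fun x ↦ x - x₀ := by
    simpa [hx₀, hp.deriv_eq_zero hx₀] using (hp.hasDerivAt x₀).isLittleO
  filter_upwards [hb, hp.eventually_pos_nhdsGT x₀, self_mem_nhdsWithin,
    nhdsWithin_le_nhds (hlin.def one_pos)] with x hbx hpx (hx : x₀ < x) hle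
  rw [norm_of_nonneg hpx.le, norm_of_nonneg (sub_pos.2 hx).le, one_mul] at hle
  exact div_le_div₀ (hc.le.trans hbx) hbx hpx hle

lemma exists_hasDerivAt_div (hp : IsDiffusion p) (ha : Continuous a) (x₀ : ℝ) :
    ∃ A : ℝ → ℝ, ∀ᶠ x in 𝓝[>] x₀, HasDerivAt A (a x / p x) x := by
  obtain ⟨y, hy : x₀ < y, hpos⟩ :=
    mem_nhdsGT_iff_exists_Ioo_subset.1 (hp.eventually_pos_nhdsGT x₀)
  obtain ⟨m, hm⟩ := exists_between hy
  have hcont : ContinuousOn (fun t ↦ a t / p t) (Ioo x₀ y) :=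
    ha.continuousOn.div hp.continuous.continuousOn fun x hx ↦ (hpos hx).ne'
  refine ⟨fun x ↦ ∫ t in m..x, a t / p t, ?_⟩
  filter_upwards [Ioo_mem_nhdsGT hy] with x hx
  exact intervalIntegral.integral_hasDerivAt_right
    (hcont.mono (ordConnected_Ioo.uIcc_subset hm hx)).intervalIntegrable
    (hcont.stronglyMeasurableAtFilter isOpen_Ioo x hx)
    (hcont.continuousAt (isOpen_Ioo.mem_nhds hx))

lemma tendsto_exp_neg_of_neg (hp : IsDiffusion p) (hx₀ : p x₀ = 0) (ha : Continuous a)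
    (ha₀ : a x₀ < 0) (hA : ∀ᶠ x in 𝓝[>] x₀, HasDerivAt A (a x / p x) x) :
    Tendsto (fun x ↦ exp (-A x)) (𝓝[>] x₀) (𝓝 0) := by
  refine tendsto_exp_atBot.comp <| hp.tendsto_atBot_of_hasDerivAt_div (b := fun x ↦ -a x)
    (c := -a x₀ / 2) hx₀ (by linarith) ?_ ?_
  · exact hA.mono fun x hx ↦ by simpa [neg_div] using hx.fun_neg
  · filter_upwards [nhdsWithin_le_nhds <|
      ha.continuousAt.eventually_lt_const (show a x₀ < a x₀ / 2 by linarith)] with x hx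
    linarith

-- The logarithm of `p e^{-A}` has derivative `(p' - a) / p`, whose numerator is negative near `x₀`.
lemma tendsto_mul_exp_neg_of_pos (hp : IsDiffusion p) (hx₀ : p x₀ = 0) (ha : Continuous a)
    (ha₀ : 0 < a x₀) (hA : ∀ᶠ x in 𝓝[>] x₀, HasDerivAt A (a x / p x) x) :
    Tendsto (fun x ↦ p x * exp (-A x)) (𝓝[>] x₀) atTop := by
  have hlog : Tendsto (fun x ↦ A x - log (p x)) (𝓝[>] x₀) atBot := by
    refine hp.tendsto_atBot_of_hasDerivAt_div (b := fun x ↦ a x - deriv p x)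
      (c := a x₀ / 2) hx₀ (by linarith) ?_ ?_
    · filter_upwards [hA, hp.eventually_pos_nhdsGT x₀] with x hAx hpx
      exact (hAx.fun_sub ((hp.hasDerivAt x).log hpx.ne')).congr_deriv (by ring)
    · have hcont : Continuous fun x ↦ a x - deriv p x := ha.sub hp.continuous_deriv
      refine nhdsWithin_le_nhds <| (hcont.continuousAt.eventually_const_lt ?_).mono fun x ↦ le_of_lt
      simpa [hp.deriv_eq_zero hx₀] using ha₀
  refine (tendsto_exp_atTop.comp (tendsto_neg_atBot_atTop.comp hlog)).congr' ?_
  filter_upwards [hp.eventually_pos_nhdsGT x₀] with x hpx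
  rw [Function.comp_apply, Function.comp_apply, neg_sub, sub_eq_add_neg, exp_add, exp_log hpx]

-- With `A' = a / p`, this is L'Hôpital's rule for `u / p = (u e^{-A}) / (p e^{-A})`, of the form
-- `0 / 0` or with an infinite denominator according to the sign of `a x₀`.
lemma tendsto_div_nhdsGT (hp : IsDiffusion p) (hx₀ : p x₀ = 0) (ha : Continuous a)
    (ha₀ : a x₀ ≠ 0) (hs : Continuous s) (hu : Continuous u)
    (hode : ∀ x, p x ≠ 0 → HasDerivAt u (a x / p x * u x + s x) x) :
    Tendsto (fun x ↦ u x / p x) (𝓝[>] x₀) (𝓝 (-(s x₀ / a x₀))) := by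
  obtain ⟨A, hA⟩ := hp.exists_hasDerivAt_div ha x₀
  have hnum : ∀ᶠ x in 𝓝[>] x₀, HasDerivAt (fun x ↦ u x * exp (-A x)) (s x * exp (-A x)) x := by
    filter_upwards [hA, hp.eventually_pos_nhdsGT x₀] with x hAx hpx
    exact hasDerivAt_mul_exp_neg (hode x hpx.ne') hAx
  have hden : ∀ᶠ x in 𝓝[>] x₀,
      HasDerivAt (fun x ↦ p x * exp (-A x)) ((deriv p x - a x) * exp (-A x)) x := by
    filter_upwards [hA, hp.eventually_pos_nhdsGT x₀] with x hAx hpx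
    refine hasDerivAt_mul_exp_neg ?_ hAx
    simpa [div_mul_cancel₀ _ hpx.ne'] using hp.hasDerivAt x
  have hlim : Tendsto (fun x ↦ deriv p x - a x) (𝓝[>] x₀) (𝓝 (-a x₀)) := by
    simpa [hp.deriv_eq_zero hx₀] using
      ((hp.continuous_deriv.fun_sub ha).tendsto x₀).mono_left nhdsWithin_le_nhds
  have hdiv : Tendsto (fun x ↦ (s x * exp (-A x)) / ((deriv p x - a x) * exp (-A x)))
      (𝓝[>] x₀) (𝓝 (-(s x₀ / a x₀))) := by
    simp only [mul_div_mul_right _ _ (exp_ne_zero _), ← div_neg]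
    exact ((hs.tendsto x₀).mono_left nhdsWithin_le_nhds).div hlim (neg_ne_zero.2 ha₀)
  suffices Tendsto (fun x ↦ (u x * exp (-A x)) / (p x * exp (-A x))) (𝓝[>] x₀)
      (𝓝 (-(s x₀ / a x₀))) by
    simpa only [mul_div_mul_right _ _ (exp_ne_zero _)] using this
  rcases ha₀.lt_or_gt with hneg | hpos
  · have hexp := hp.tendsto_exp_neg_of_neg hx₀ ha hneg hA
    refine HasDerivAt.lhopital_zero_nhdsGT hnum hden ?_ ?_ ?_ hdiv
    · exact (hlim.eventually_ne (neg_ne_zero.2 ha₀)).mono fun x hx ↦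
        mul_ne_zero hx (exp_ne_zero _)
    · simpa using ((hu.tendsto x₀).mono_left nhdsWithin_le_nhds).mul hexp
    · simpa using ((hp.continuous.tendsto x₀).mono_left nhdsWithin_le_nhds).mul hexp
  · refine lhopital_atTop_nhdsGT hnum hden ?_ (hp.tendsto_mul_exp_neg_of_pos hx₀ ha hpos hA) hdiv
    exact (hlim.eventually_lt_const (neg_neg_of_pos hpos)).mono fun x hx ↦
      mul_neg_of_neg_of_pos hx (exp_pos _)

lemma tendsto_div_nhdsNE (hp : IsDiffusion p) (hx₀ : p x₀ = 0) (ha : Continuous a)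
    (ha₀ : a x₀ ≠ 0) (hs : Continuous s) (hu : Continuous u)
    (hode : ∀ x, p x ≠ 0 → HasDerivAt u (a x / p x * u x + s x) x) :
    Tendsto (fun x ↦ u x / p x) (𝓝[≠] x₀) (𝓝 (-(s x₀ / a x₀))) := by
  rw [← nhdsLT_sup_nhdsGT, tendsto_sup]
  refine ⟨?_, hp.tendsto_div_nhdsGT hx₀ ha ha₀ hs hu hode⟩
  have hright := hp.comp_neg.tendsto_div_nhdsGT (x₀ := -x₀) (a := fun x ↦ -a (-x))
    (s := fun x ↦ -s (-x)) (u := fun x ↦ u (-x)) (by simpa using hx₀) (by fun_prop)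
    (by simpa using ha₀) (by fun_prop) (by fun_prop) fun x hx ↦
      ((hode (-x) hx).comp x (hasDerivAt_neg x)).congr_deriv (by ring)
  simpa [Function.comp_def] using hright.comp (tendsto_neg_nhdsLT (a := x₀))

lemma exists_continuous_eq_mul (hp : IsDiffusion p) (ha : Continuous a)
    (ha₀ : ∀ x, p x = 0 → a x ≠ 0) (hs : Continuous s) (hu : Continuous u)
    (hode : ∀ x, p x ≠ 0 → HasDerivAt u (a x / p x * u x + s x) x) :
    ∃ z : ℝ → ℝ, Continuous z ∧ ∀ x, u x = p x * z x := by
  have hcont : ∀ x, p x ≠ 0 → ContinuousAt (fun x ↦ u x / p x) x := fun x hx ↦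
    hu.continuousAt.div hp.continuous.continuousAt hx
  have hlim : ∀ x, ∃ l, Tendsto (fun x ↦ u x / p x) (𝓝[{x | p x ≠ 0}] x) (𝓝 l) := by
    intro x
    by_cases hx : p x = 0
    · have hle : 𝓝[{x | p x ≠ 0}] x ≤ 𝓝[≠] x :=
        nhdsWithin_mono x fun y (hy : p y ≠ 0) (hyx : y = x) ↦ hy (hyx ▸ hx)
      exact ⟨_, (hp.tendsto_div_nhdsNE hx ha (ha₀ x hx) hs hu hode).mono_left hle⟩
    · exact ⟨_, (hcont x hx).tendsto.mono_left nhdsWithin_le_nhds⟩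
  have hz := continuous_extendFrom hp.dense_ne_zero hlim
  have hext := extendFrom_extends (f := fun x ↦ u x / p x) (A := {x | p x ≠ 0})
    fun x hx ↦ (hcont x hx).continuousWithinAt
  refine ⟨_, hz, congrFun <| hu.ext_on hp.dense_ne_zero (hp.continuous.mul hz) fun x hx ↦ ?_⟩
  rw [hext x hx, mul_div_cancel₀ _ hx]

-- `u = a y + f` satisfies `u' = (a / p) u + (a' y + f')`, so `y' = u / p` extends continuously.
lemma contDiff_one_of_ode {y f : ℝ → ℝ} (hp : IsDiffusion p) (ha : ContDiff ℝ 1 a)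
    (ha₀ : ∀ x, p x = 0 → a x ≠ 0) (hf : ContDiff ℝ 1 f) (hy : Continuous y)
    (hode : ∀ x, p x ≠ 0 → HasDerivAt y ((a x * y x + f x) / p x) x) :
    ContDiff ℝ 1 y ∧ ∀ x, p x * deriv y x = a x * y x + f x := by
  have ha' := ha.continuous_deriv le_rfl
  have hf' := hf.continuous_deriv le_rfl
  have hu : ∀ x, p x ≠ 0 → HasDerivAt (fun x ↦ a x * y x + f x)
      (a x / p x * (a x * y x + f x) + (deriv a x * y x + deriv f x)) x := fun x hx ↦
    ((((ha.differentiable one_ne_zero x).hasDerivAt.fun_mul (hode x hx)).fun_add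
      (hf.differentiable one_ne_zero x).hasDerivAt).congr_deriv (by ring))
  obtain ⟨z, hz, huz⟩ := hp.exists_continuous_eq_mul ha.continuous ha₀
    (s := fun x ↦ deriv a x * y x + deriv f x) ((ha'.fun_mul hy).fun_add hf')
    ((ha.continuous.fun_mul hy).fun_add hf.continuous) hu
  have hyz : ∀ x, HasDerivAt y (z x) x := fun x ↦ by
    refine hasDerivAt_of_eventually_hasDerivAt_of_ne ?_ hy.continuousAt hz.continuousAt
    filter_upwards [hp.eventually_ne x] with t ht
    simpa [huz t, mul_div_cancel_left₀ _ ht] using hode t ht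
  have hderiv : deriv y = z := funext fun x ↦ (hyz x).deriv
  exact ⟨contDiff_one_iff_deriv.2 ⟨fun x ↦ (hyz x).differentiableAt, hderiv ▸ hz⟩,
    fun x ↦ by rw [hderiv, huz]⟩

-- Induction on `n`: `y'` is a continuous solution of `p z' = (a - p') z + (a' y + f')`.
lemma contDiff_of_ode (hp : IsDiffusion p) (n : ℕ) {a f y : ℝ → ℝ} (hpn : ContDiff ℝ n p)
    (ha : ContDiff ℝ n a) (ha₀ : ∀ x, p x = 0 → a x ≠ 0) (hf : ContDiff ℝ n f)
    (hy : Continuous y) (hode : ∀ x, p x ≠ 0 → HasDerivAt y ((a x * y x + f x) / p x) x) :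
    ContDiff ℝ n y := by
  induction n generalizing a f y with
  | zero => exact contDiff_zero.2 hy
  | succ n ih =>
    have hle : (n : WithTop ℕ∞) ≤ (n + 1 : ℕ) := by exact_mod_cast n.le_succ
    have hone : (1 : WithTop ℕ∞) ≤ (n + 1 : ℕ) := by exact_mod_cast Nat.le_add_left 1 n
    have hyn := ih (hpn.of_le hle) (ha.of_le hle) ha₀ (hf.of_le hle) hy hode
    obtain ⟨hy1, hpy⟩ :=
      hp.contDiff_one_of_ode (ha.of_le hone) ha₀ (hf.of_le hone) hy hode
    have ha1 := ha.differentiable (by simp)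
    have hf1 := hf.differentiable (by simp)
    rw [Nat.cast_succ] at ha hf hpn ⊢
    have ha' := (contDiff_succ_iff_deriv.1 ha).2.2
    have hf' := (contDiff_succ_iff_deriv.1 hf).2.2
    have hp' := (contDiff_succ_iff_deriv.1 hpn).2.2
    refine contDiff_succ_iff_deriv.2 ⟨hy1.differentiable one_ne_zero, by simp, ?_⟩
    refine ih (a := fun x ↦ a x - deriv p x) (f := fun x ↦ deriv a x * y x + deriv f x)
      (hpn.of_le hle) ((ha.of_le hle).sub hp') (fun x hx ↦ ?_) ((ha'.mul hyn).add hf')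
      (hy1.continuous_deriv le_rfl) fun x hx ↦ ?_
    · simpa [hp.deriv_eq_zero hx] using ha₀ x hx
    · have hyx := (hy1.differentiable one_ne_zero x).hasDerivAt
      have hquot := (((ha1 x).hasDerivAt.fun_mul hyx).fun_add (hf1 x).hasDerivAt).fun_div
        (hp.hasDerivAt x) hx
      have hloc : deriv y =ᶠ[𝓝 x] fun t ↦ (a t * y t + f t) / p t := by
        filter_upwards [hp.continuous.continuousAt.eventually_ne hx] with t ht
        rw [← hpy, mul_div_cancel_left₀ _ ht]
      refine (hquot.congr_of_eventuallyEq hloc).congr_deriv ?_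
      rw [← hpy x]
      field_simp
      ring

end IsDiffusion

/-- The integrated Fokker–Planck equation in flux form, `(p ρ)' = q ρ + C`. Away from the zeros of
`p` it says `p ρ' + (p' - q) ρ = C`, but it makes sense for a merely continuous `ρ` and is required
at the zeros of `p` too. -/
structure IsFluxSolution (p q ρ : ℝ → ℝ) (C : ℝ) : Prop where
  continuous : Continuous ρ
  hasDerivAt : ∀ x, HasDerivAt (fun t ↦ p t * ρ t) (q x * ρ x + C) x

namespace IsFluxSolution

variable {p q ρ σ : ℝ → ℝ} {C D : ℝ}

lemma sub (hρ : IsFluxSolution p q ρ C) (hσ : IsFluxSolution p q σ D) :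
    IsFluxSolution p q (fun x ↦ ρ x - σ x) (C - D) where
  continuous := hρ.continuous.sub hσ.continuous
  hasDerivAt x := by
    simp only [mul_sub]
    exact ((hρ.hasDerivAt x).fun_sub (hσ.hasDerivAt x)).congr_deriv (by ring)

lemma neg (hρ : IsFluxSolution p q ρ C) : IsFluxSolution p q (fun x ↦ -ρ x) (-C) where
  continuous := hρ.continuous.neg
  hasDerivAt x := by
    simp only [mul_neg]
    exact (hρ.hasDerivAt x).fun_neg.congr_deriv (by ring)

lemma comp_neg (hρ : IsFluxSolution p q ρ C) :
    IsFluxSolution (fun x ↦ p (-x)) (fun x ↦ -q (-x)) (fun x ↦ ρ (-x)) (-C) where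
  continuous := hρ.continuous.comp continuous_neg
  hasDerivAt x := ((hρ.hasDerivAt (-x)).comp x (hasDerivAt_neg x)).congr_deriv (by ring)

lemma hasDerivAt_of_ne_zero (hρ : IsFluxSolution p q ρ C) (hp : IsDiffusion p) {x : ℝ}
    (hx : p x ≠ 0) : HasDerivAt ρ (((q x - deriv p x) * ρ x + C) / p x) x := by
  have hloc : ρ =ᶠ[𝓝 x] fun t ↦ p t * ρ t / p t := by
    filter_upwards [hp.continuous.continuousAt.eventually_ne hx] with t ht
    rw [mul_div_cancel_left₀ _ ht]
  have hquot := (hρ.hasDerivAt x).fun_div (hp.hasDerivAt x) hx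
  refine (hquot.congr_of_eventuallyEq hloc).congr_deriv ?_
  field_simp
  ring

end IsFluxSolution

lemma isFluxSolution_of_forall_ne_zero {p q ρ : ℝ → ℝ} {C : ℝ} (hp : IsDiffusion p)
    (hq : Continuous q) (hρ : Continuous ρ)
    (hode : ∀ x, p x ≠ 0 → HasDerivAt (fun t ↦ p t * ρ t) (q x * ρ x + C) x) :
    IsFluxSolution p q ρ C where
  continuous := hρ
  hasDerivAt x := hasDerivAt_of_eventually_hasDerivAt_of_ne (g := fun x ↦ q x * ρ x + C)
    ((hp.eventually_ne x).mono hode) (hp.continuous.mul hρ).continuousAt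
    ((hq.mul hρ).add continuous_const).continuousAt

/-- A groundstate for coefficients of period `T`, with the equation in flux form. -/
structure IsFluxGroundstate (T : ℝ) (p q ρ : ℝ → ℝ) (C : ℝ) : Prop
    extends IsFluxSolution p q ρ C where
  periodic : Function.Periodic ρ T
  nonneg : ∀ x, 0 ≤ ρ x
  integral_eq_one : ∫ x in (0 : ℝ)..T, ρ x = 1

lemma isGroundstateW_iff {p q ρ : ℝ → ℝ} {C : ℝ} (hp : IsDiffusion p) (hq : Continuous q) :
    IsGroundstateW p q ρ C ↔ IsFluxGroundstate π p q ρ C := by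
  have hopen : IsOpen {x | p x ≠ 0} := isOpen_ne_fun hp.continuous continuous_const
  refine ⟨fun ⟨hcont, hper, hnn, hint, hdiff, hode⟩ ↦ ?_, fun h ↦ ?_⟩
  · refine ⟨isFluxSolution_of_forall_ne_zero hp hq hcont fun x hx ↦ ?_, hper, hnn, hint⟩
    have hρ : HasDerivAt ρ (deriv ρ x) x :=
      ((hdiff.differentiableOn one_ne_zero).differentiableAt (hopen.mem_nhds hx)).hasDerivAt
    exact ((hp.hasDerivAt x).fun_mul hρ).congr_deriv (by linarith [hode x hx])
  · have hderiv := fun x (hx : p x ≠ 0) ↦ h.hasDerivAt_of_ne_zero hp hx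
    refine ⟨h.continuous, h.periodic, h.nonneg, h.integral_eq_one, ?_, fun x hx ↦ ?_⟩
    · refine (contDiffOn_one_iff_derivWithin hopen.uniqueDiffOn).2
        ⟨fun x hx ↦ (hderiv x hx).differentiableAt.differentiableWithinAt, ContinuousOn.congr ?_
          fun x hx ↦ (hderiv x hx).hasDerivWithinAt.derivWithin (hopen.uniqueDiffOn x hx)⟩
      have hnum : Continuous fun x ↦ (q x - deriv p x) * ρ x + C :=
        ((hq.sub hp.continuous_deriv).mul h.continuous).add continuous_const
      exact hnum.continuousOn.div hp.continuous.continuousOn fun x hx ↦ hx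
    · rw [(hderiv x hx).deriv]
      field_simp
      ring

lemma IsFluxSolution.contDiff {p q ρ : ℝ → ℝ} {C : ℝ} (hρ : IsFluxSolution p q ρ C)
    (hp : IsDiffusion p) (hq₀ : ∀ x, p x = 0 → q x ≠ 0) (n : ℕ) (hpn : ContDiff ℝ (n + 1) p)
    (hqn : ContDiff ℝ n q) : ContDiff ℝ n ρ := by
  refine hp.contDiff_of_ode n (a := fun x ↦ q x - deriv p x) (f := fun _ ↦ C)
    (hpn.of_le le_self_add) (hqn.sub (contDiff_succ_iff_deriv.1 hpn).2.2) (fun x hx ↦ ?_)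
    contDiff_const hρ.continuous fun x hx ↦ hρ.hasDerivAt_of_ne_zero hp hx
  simpa [hp.deriv_eq_zero hx] using hq₀ x hx

lemma exists_pos_of_periodic_of_integral_eq_zero {w : ℝ → ℝ} {T : ℝ} (hT : 0 < T)
    (hw : Continuous w) (hper : Function.Periodic w T) (hint : ∫ x in (0 : ℝ)..T, w x = 0)
    (hne : ∃ x, w x ≠ 0) : ∃ x, 0 < w x := by
  by_contra! hle
  obtain ⟨x, hx⟩ := hne
  have hxT : x < x + T := lt_add_of_pos_right x hT
  have hpos : 0 < ∫ t in x..(x + T), -w t :=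
    intervalIntegral.integral_pos hxT hw.neg.continuousOn (fun t _ ↦ neg_nonneg.2 (hle t))
      ⟨x, left_mem_Icc.2 hxT.le, neg_pos.2 ((hle x).lt_of_ne hx)⟩
  have hshift := hper.intervalIntegral_add_eq x 0
  rw [zero_add, hint] at hshift
  simp [hshift] at hpos

lemma exists_eq_zero_forall_Ioc_pos {f : ℝ → ℝ} (hf : Continuous f) {x z : ℝ} (hzx : z < x)
    (hz : f z ≤ 0) (hx : 0 < f x) : ∃ α ∈ Ico z x, f α = 0 ∧ ∀ t ∈ Ioc α x, 0 < f t := by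
  have hivt : ∀ t ∈ Icc z x, f t ≤ 0 → ∃ r ∈ Icc t x, f r = 0 := fun t ht hft ↦
    intermediate_value_Icc ht.2 hf.continuousOn ⟨hft, hx.le⟩
  obtain ⟨r, hr, hr0⟩ := hivt z (left_mem_Icc.2 hzx.le) hz
  obtain ⟨α, ⟨hα, hα0⟩, hmax⟩ := (isCompact_Icc.inter_right
    (isClosed_eq hf continuous_const)).exists_isGreatest ⟨r, hr, hr0⟩
  have hαx : α ≠ x := fun h ↦ hx.ne' (h ▸ hα0)
  refine ⟨α, ⟨hα.1, hα.2.lt_of_ne hαx⟩, hα0, fun t ht ↦ ?_⟩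
  by_contra! hft
  obtain ⟨r, hr, hr0⟩ := hivt t ⟨hα.1.trans ht.1.le, ht.2⟩ hft
  have hrα : r ≤ α := hmax ⟨⟨hα.1.trans (ht.1.le.trans hr.1), hr.2⟩, hr0⟩
  linarith [ht.1, hr.1]

namespace IsFluxSolution

variable {p q w : ℝ → ℝ} {x z α D T : ℝ}

-- Just right of the last zero `α` before `x` the flux `p w` is nonnegative, and `(p w)' α = D`.
lemma const_nonneg (hw : IsFluxSolution p q w D) (hp : ∀ x, 0 ≤ p x) (hzx : z < x)
    (hz : w z ≤ 0) (hx : 0 < w x) : 0 ≤ D := by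
  obtain ⟨α, hα, hα0, hpos⟩ := exists_eq_zero_forall_Ioc_pos hw.continuous hzx hz hx
  have hslope : Tendsto (slope (fun t ↦ p t * w t) α) (𝓝[>] α) (𝓝 D) := by
    simpa [hα0] using (hw.hasDerivAt α).tendsto_slope.mono_left (nhdsGT_le_nhdsNE α)
  refine ge_of_tendsto hslope ?_
  filter_upwards [Ioc_mem_nhdsGT hα.2] with t ht
  rw [slope_def_field, hα0, mul_zero, sub_zero]
  exact div_nonneg (mul_nonneg (hp t) (hpos t ht).le) (sub_nonneg.2 ht.1.le)

-- Where `p ≠ 0`, the flux `W = p w` solves the regular linear equation `W' = (q / p) W`.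
lemma eq_zero_of_forall_Ioc_pos (hw : IsFluxSolution p q w 0) (hp : Continuous p)
    (hq : Continuous q) (hαx : α < x) (hα : w α = 0) (hpos : ∀ t ∈ Ioc α x, 0 < w t) :
    p α = 0 := by
  by_contra hpα
  obtain ⟨K, hK⟩ := exists_gt |q α / p α|
  have hev : ∀ᶠ t in 𝓝[≥] α, |q t / p t| < K ∧ p t ≠ 0 := nhdsWithin_le_nhds <|
    ((hq.continuousAt.div hp.continuousAt hpα).abs.eventually_lt_const hK).and
      (hp.continuousAt.eventually_ne hpα)
  obtain ⟨y, hy, hsub⟩ := mem_nhdsGE_iff_exists_Icc_subset.1 (hev.and (Icc_mem_nhdsGE hαx))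
  have hflux : ∀ t, HasDerivAt (fun t ↦ p t * w t) (q t * w t) t := by simpa using hw.hasDerivAt
  have hzero := eq_zero_of_abs_deriv_le_mul_abs_self_of_eq_zero_right (K := K) (a := α) (b := y)
    (fun t _ ↦ (hflux t).continuousAt.continuousWithinAt)
    (fun t _ ↦ (hflux t).hasDerivWithinAt) (by simp [hα]) ?_ y (right_mem_Icc.2 hy.le)
  · obtain ⟨⟨-, hpy⟩, hyx⟩ := hsub (right_mem_Icc.2 hy.le)
    exact mul_ne_zero hpy (hpos y ⟨hy, hyx.2⟩).ne' hzero
  · intro t ht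
    obtain ⟨⟨hKt, hpt⟩, -⟩ := hsub (Ico_subset_Icc_self ht)
    have hqp : q t * w t = q t / p t * (p t * w t) := by field_simp
    rw [hqp, norm_mul]
    exact mul_le_mul_of_nonneg_right hKt.le (norm_nonneg _)

-- If `q α < 0`, the flux `p w` would decrease from `0` to a positive value.
lemma nonneg_of_forall_Ioc_pos (hw : IsFluxSolution p q w 0) (hp : IsDiffusion p)
    (hq : Continuous q) (hαx : α < x) (hα : w α = 0) (hpos : ∀ t ∈ Ioc α x, 0 < w t) :
    0 ≤ q α := by
  by_contra! hqα
  have hev : ∀ᶠ t in 𝓝[>] α, q t < 0 ∧ p t ≠ 0 :=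
    ((hq.continuousAt.eventually_lt_const hqα).filter_mono nhdsWithin_le_nhds).and
      (nhdsGT_le_nhdsNE α (hp.eventually_ne α))
  obtain ⟨y, hy, hsub⟩ := mem_nhdsGT_iff_exists_Ioc_subset.1 (hev.and (Ioc_mem_nhdsGT hαx))
  have hanti : AntitoneOn (fun t ↦ p t * w t) (Icc α y) := by
    refine antitoneOn_of_hasDerivWithinAt_nonpos (convex_Icc α y)
      (fun t _ ↦ (hw.hasDerivAt t).continuousAt.continuousWithinAt)
      (fun t _ ↦ (hw.hasDerivAt t).hasDerivWithinAt) fun t ht ↦ ?_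
    rw [interior_Icc] at ht
    obtain ⟨⟨hqt, -⟩, htx⟩ := hsub (Ioo_subset_Ioc_self ht)
    rw [add_zero]
    exact mul_nonpos_of_nonpos_of_nonneg hqt.le (hpos t htx).le
  obtain ⟨⟨-, hpy⟩, hyx⟩ := hsub (right_mem_Ioc.2 hy)
  have hflux := hanti (left_mem_Icc.2 hy.le) (right_mem_Icc.2 hy.le) hy.le
  simp only [hα, mul_zero] at hflux
  exact hflux.not_gt (mul_pos (hp.pos hpy) (hpos y hyx))

lemma exists_left_zero (hw : IsFluxSolution p q w 0) (hp : IsDiffusion p) (hq : Continuous q)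
    (hq₀ : ∀ x, p x = 0 → q x ≠ 0) (hzx : z < x) (hz : w z ≤ 0) (hx : 0 < w x) :
    ∃ α ∈ Ico z x, w α = 0 ∧ p α = 0 ∧ 0 < q α ∧ ∀ t ∈ Ioc α x, 0 < w t := by
  obtain ⟨α, hα, hα0, hpos⟩ := exists_eq_zero_forall_Ioc_pos hw.continuous hzx hz hx
  have hpα := hw.eq_zero_of_forall_Ioc_pos hp.continuous hq hα.2 hα0 hpos
  have hqα := hw.nonneg_of_forall_Ioc_pos hp hq hα.2 hα0 hpos
  exact ⟨α, hα, hα0, hpα, hqα.lt_of_ne' (hq₀ α hpα), hpos⟩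

lemma exists_right_zero (hw : IsFluxSolution p q w 0) (hp : IsDiffusion p) (hq : Continuous q)
    (hq₀ : ∀ x, p x = 0 → q x ≠ 0) (hxz : x < z) (hz : w z ≤ 0) (hx : 0 < w x) :
    ∃ β ∈ Ioc x z, w β = 0 ∧ p β = 0 ∧ q β < 0 ∧ ∀ t ∈ Ico x β, 0 < w t := by
  have hrefl : IsFluxSolution (fun x ↦ p (-x)) (fun x ↦ -q (-x)) (fun x ↦ w (-x)) 0 := by
    simpa using hw.comp_neg
  obtain ⟨α, hα, hα0, hpα, hqα, hpos⟩ := hrefl.exists_left_zero hp.comp_neg (by fun_prop)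
    (fun t ht ↦ neg_ne_zero.2 (hq₀ _ ht)) (neg_lt_neg hxz) (by simpa using hz) (by simpa using hx)
  refine ⟨-α, ⟨lt_neg.2 hα.2, neg_le.2 hα.1⟩, hα0, hpα, neg_pos.1 hqα, fun t ht ↦ ?_⟩
  simpa using hpos (-t) ⟨lt_neg.2 ht.2, neg_le_neg ht.1⟩

-- Each sign interval of `w` runs from a zero of `p` with `q > 0` to a zero of `p` with `q < 0`.
lemma exists_three_zeros (hw : IsFluxSolution p q w 0) (hp : IsDiffusion p) (hq : Continuous q)
    (hq₀ : ∀ x, p x = 0 → q x ≠ 0) (hT : 0 < T) (hper : Function.Periodic w T)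
    (hpos : ∃ x, 0 < w x) (hneg : ∃ x, w x < 0) :
    ∃ β γ δ, β < γ ∧ γ < δ ∧ δ < β + T ∧ p β = 0 ∧ p γ = 0 ∧ p δ = 0 := by
  obtain ⟨x, hx⟩ := hpos
  obtain ⟨y₀, hy₀⟩ := hneg
  obtain ⟨y, hyI, hyw⟩ := hper.exists_mem_Ico hT y₀ x
  have hy : 0 < -w y := neg_pos.2 (hyw ▸ hy₀)
  have hxy : x < y := hyI.1.lt_of_ne fun h ↦ by subst h; linarith
  have hwneg : IsFluxSolution p q (fun t ↦ -w t) 0 := by simpa using hw.neg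
  obtain ⟨β, hβ, -, hpβ, hqβ, hβpos⟩ := hw.exists_right_zero hp hq hq₀ hxy (by linarith) hx
  obtain ⟨γ, hγ, hwγ, hpγ, hqγ, -⟩ := hwneg.exists_left_zero hp hq hq₀ hxy (by linarith) hy
  obtain ⟨δ, hδ, -, hpδ, -, -⟩ := hwneg.exists_right_zero hp hq hq₀ hyI.2
    (by simpa [hper x] using hx.le) hy
  have hβγ : β ≤ γ := by
    by_contra! hγβ
    exact (hβpos γ ⟨hγ.1, hγβ⟩).ne' (neg_eq_zero.1 hwγ)
  refine ⟨β, γ, δ, hβγ.lt_of_ne fun h ↦ ?_, hγ.2.trans hδ.1, by linarith [hδ.2, hβ.1],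
    hpβ, hpγ, hpδ⟩
  subst h
  exact hqβ.not_gt hqγ

end IsFluxSolution

section ZeroSet

variable {p : ℝ → ℝ} {T : ℝ}

lemma isDiffusion_of_finite_zeros (hT : 0 < T) (hp : ContDiff ℝ 1 p) (hnn : ∀ x, 0 ≤ p x)
    (hfin : ((↑) '' {x | p x = 0} : Set (AddCircle T)).Finite) : IsDiffusion p where
  contDiff := hp
  nonneg := hnn
  eventually_ne x := by
    have := Fact.mk hT
    set I := Ico (x - T / 2) (x - T / 2 + T)
    have hinj : InjOn ((↑) : ℝ → AddCircle T) ({x | p x = 0} ∩ I) := fun y hy z hz h ↦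
      (AddCircle.coe_eq_coe_iff_of_mem_Ico hy.2 hz.2).1 h
    have hI : ({x | p x = 0} ∩ I).Finite :=
      .of_finite_image (hfin.subset (image_mono inter_subset_left)) hinj
    have hxI : I ∈ 𝓝[≠] x :=
      nhdsWithin_le_nhds (Ico_mem_nhds (by linarith) (by linarith))
    filter_upwards [nhdsNE_le_cofinite x hI.compl_mem_cofinite, hxI] with y hy hyI hpy
    exact hy ⟨hpy, hyI⟩

lemma not_three_zeros_of_encard_le_two
    (hcard : ((↑) '' {x | p x = 0} : Set (AddCircle T)).encard ≤ 2) {β γ δ : ℝ} (hβγ : β < γ)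
    (hγδ : γ < δ) (hδ : δ < β + T) (hpβ : p β = 0) (hpγ : p γ = 0) : p δ ≠ 0 := by
  intro hpδ
  have : Fact (0 < T) := ⟨by linarith⟩
  have hne : ∀ {y z}, y ∈ Ico β (β + T) → z ∈ Ico β (β + T) → y < z →
      (y : AddCircle T) ≠ z := fun hy hz hyz h ↦
    hyz.ne ((AddCircle.coe_eq_coe_iff_of_mem_Ico hy hz).1 h)
  have hβI : β ∈ Ico β (β + T) := ⟨le_rfl, by linarith⟩
  have hγI : γ ∈ Ico β (β + T) := ⟨hβγ.le, by linarith⟩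
  have hδI : δ ∈ Ico β (β + T) := ⟨by linarith, hδ⟩
  have hthree : ({(β : AddCircle T), (γ : AddCircle T), (δ : AddCircle T)} : Set _).encard = 3 :=
    encard_eq_three.2 ⟨β, γ, δ, hne hβI hγI hβγ, hne hβI hδI (hβγ.trans hγδ),
      hne hγI hδI hγδ, rfl⟩
  have hsub : ({(β : AddCircle T), (γ : AddCircle T), (δ : AddCircle T)} : Set _) ⊆
      (↑) '' {x | p x = 0} := by
    rintro - (rfl | rfl | rfl)
    exacts [⟨β, hpβ, rfl⟩, ⟨γ, hpγ, rfl⟩, ⟨δ, hpδ, rfl⟩]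
  have h32 := hthree ▸ (encard_le_encard hsub).trans hcard
  exact absurd h32 (by decide)

end ZeroSet

section Uniqueness

variable {p q ρ σ w : ℝ → ℝ} {C D T : ℝ}

lemma IsFluxSolution.const_nonneg_of_periodic (hw : IsFluxSolution p q w D) (hp : ∀ x, 0 ≤ p x)
    (hT : 0 < T) (hper : Function.Periodic w T) (hpos : ∃ x, 0 < w x) (hneg : ∃ x, w x < 0) :
    0 ≤ D := by
  obtain ⟨x, hx⟩ := hpos
  obtain ⟨y, hy⟩ := hneg
  obtain ⟨z, hz, hzy⟩ := hper.exists_mem_Ico hT y (x - T)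
  exact hw.const_nonneg hp (by linarith [hz.2]) (hzy ▸ hy.le) hx

lemma IsFluxSolution.eq_zero_of_integral_eq_zero (hw : IsFluxSolution p q w D)
    (hp : IsDiffusion p) (hq : Continuous q) (hq₀ : ∀ x, p x = 0 → q x ≠ 0) (hT : 0 < T)
    (hcard : ((↑) '' {x | p x = 0} : Set (AddCircle T)).encard ≤ 2)
    (hper : Function.Periodic w T) (hint : ∫ x in (0 : ℝ)..T, w x = 0) : ∀ x, w x = 0 := by
  by_contra! hne
  have hper' : Function.Periodic (fun x ↦ -w x) T := fun x ↦ congrArg (- ·) (hper x)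
  have hpos := exists_pos_of_periodic_of_integral_eq_zero hT hw.continuous hper hint hne
  have hneg : ∃ x, 0 < -w x := exists_pos_of_periodic_of_integral_eq_zero hT hw.neg.continuous
    hper' (by simp [hint]) (by simpa using hne)
  have hnonneg := hw.const_nonneg_of_periodic hp.nonneg hT hper hpos (by simpa using hneg)
  have hnonpos := hw.neg.const_nonneg_of_periodic hp.nonneg hT hper' hneg (by simpa using hpos)
  obtain rfl : D = 0 := by linarith
  obtain ⟨β, γ, δ, hβγ, hγδ, hδ, hpβ, hpγ, hpδ⟩ :=
    hw.exists_three_zeros hp hq hq₀ hT hper hpos (by simpa using hneg)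
  exact not_three_zeros_of_encard_le_two hcard hβγ hγδ hδ hpβ hpγ hpδ

lemma IsFluxGroundstate.unique (hρ : IsFluxGroundstate T p q ρ C)
    (hσ : IsFluxGroundstate T p q σ D) (hp : IsDiffusion p) (hq : Continuous q)
    (hq₀ : ∀ x, p x = 0 → q x ≠ 0) (hT : 0 < T)
    (hcard : ((↑) '' {x | p x = 0} : Set (AddCircle T)).encard ≤ 2) : ρ = σ ∧ C = D := by
  have hw := hρ.toIsFluxSolution.sub hσ.toIsFluxSolution
  have hint : ∫ x in (0 : ℝ)..T, (ρ x - σ x) = 0 := by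
    rw [intervalIntegral.integral_sub (hρ.continuous.intervalIntegrable _ _)
      (hσ.continuous.intervalIntegrable _ _), hρ.integral_eq_one, hσ.integral_eq_one, sub_self]
  have hzero := hw.eq_zero_of_integral_eq_zero hp hq hq₀ hT hcard
    (hρ.periodic.sub hσ.periodic) hint
  refine ⟨funext fun x ↦ sub_eq_zero.1 (hzero x), sub_eq_zero.1 ?_⟩
  have hflux := hw.hasDerivAt 0
  simp only [hzero, mul_zero, zero_add] at hflux
  exact hflux.unique (hasDerivAt_const 0 0)

end Uniqueness

section PositiveDiffusion

variable {P q r : ℝ → ℝ} {T : ℝ}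

lemma exists_hasDerivAt_add_period (hr : Continuous r) (hper : Function.Periodic r T) :
    ∃ (R : ℝ → ℝ) (c : ℝ), (∀ x, HasDerivAt R (r x) x) ∧ ∀ x, R (x + T) = R x + c := by
  refine ⟨fun x ↦ ∫ t in (0 : ℝ)..x, r t, ∫ t in (0 : ℝ)..T, r t,
    fun x ↦ (hr.integral_hasStrictDerivAt 0 x).hasDerivAt, fun x ↦ ?_⟩
  have hshift : ∫ t in x..x + T, r t = ∫ t in (0 : ℝ)..T, r t := by
    simpa using hper.intervalIntegral_add_eq x 0
  rw [← hshift, intervalIntegral.integral_add_adjacent_intervals (hr.intervalIntegrable _ _)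
    (hr.intervalIntegrable _ _)]

lemma hasDerivAt_integral_add_const {f : ℝ → ℝ} (hf : Continuous f) (T x : ℝ) :
    HasDerivAt (fun x ↦ ∫ t in x..x + T, f t) (f (x + T) - f x) x := by
  have hF := fun x ↦ (hf.integral_hasStrictDerivAt 0 x).hasDerivAt
  have hsub : (fun x ↦ ∫ t in x..x + T, f t) =
      fun x ↦ (∫ t in (0 : ℝ)..x + T, f t) - ∫ t in (0 : ℝ)..x, f t := funext fun x ↦
    (intervalIntegral.integral_interval_sub_left (hf.intervalIntegrable _ _)
      (hf.intervalIntegrable _ _)).symm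
  rw [hsub]
  exact ((hF (x + T)).comp_add_const x T).fun_sub (hF x)

-- If `R' = r`, the solution is `v x = ∫ exp (R x - R t)` over `t ∈ [x, x + T]`.
lemma exists_periodic_pos_solution (hT : 0 < T) (hr : Continuous r)
    (hper : Function.Periodic r T) :
    ∃ (v : ℝ → ℝ) (C : ℝ), (∀ x, HasDerivAt v (r x * v x + C) x) ∧ Function.Periodic v T ∧
      ∀ x, 0 < v x := by
  obtain ⟨R, c, hR, hadd⟩ := exists_hasDerivAt_add_period hr hper
  have hRc : Continuous R := continuous_iff_continuousAt.2 fun x ↦ (hR x).continuousAt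
  have hexp : Continuous fun t ↦ exp (-R t) := by fun_prop
  refine ⟨fun x ↦ exp (R x) * ∫ t in x..x + T, exp (-R t), exp (-c) - 1, fun x ↦ ?_, fun x ↦ ?_,
    fun x ↦ ?_⟩
  · refine ((hR x).exp.fun_mul (hasDerivAt_integral_add_const hexp T x)).congr_deriv ?_
    have hcancel : exp (R x) * exp (-R x) = 1 := by rw [← exp_add, add_neg_cancel, exp_zero]
    simp only [hadd, neg_add, exp_add]
    linear_combination (exp (-c) - 1) * hcancel
  · have hshift : ∫ t in x + T..x + T + T, exp (-R t) =
        exp (-c) * ∫ t in x..x + T, exp (-R t) := by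
      rw [← intervalIntegral.integral_comp_add_right (fun t ↦ exp (-R t)),
        ← intervalIntegral.integral_const_mul]
      simp only [hadd, neg_add_rev, exp_add]
    have hcancel : exp c * exp (-c) = 1 := by rw [← exp_add, add_neg_cancel, exp_zero]
    simp only [hshift, hadd, exp_add]
    linear_combination (exp (R x) * ∫ t in x..x + T, exp (-R t)) * hcancel
  · exact mul_pos (exp_pos _) <| intervalIntegral.intervalIntegral_pos_of_pos
      (hexp.intervalIntegrable _ _) (fun t ↦ exp_pos _) (lt_add_of_pos_right x hT)

lemma exists_isFluxGroundstate_of_pos (hT : 0 < T) (hP : Continuous P) (hpos : ∀ x, 0 < P x)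
    (hPper : Function.Periodic P T) (hq : Continuous q) (hqper : Function.Periodic q T) :
    ∃ ρ C, IsFluxGroundstate T P q ρ C := by
  have hPne : ∀ x, P x ≠ 0 := fun x ↦ (hpos x).ne'
  obtain ⟨v, C, hv, hvper, hvpos⟩ :=
    exists_periodic_pos_solution hT (hq.div hP hPne) (hqper.div hPper)
  have hvP : Continuous fun x ↦ v x / P x :=
    (continuous_iff_continuousAt.2 fun x ↦ (hv x).continuousAt).div hP hPne
  set I := ∫ x in (0 : ℝ)..T, v x / P x with hI
  have hIpos : 0 < I := intervalIntegral.intervalIntegral_pos_of_pos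
    (hvP.intervalIntegrable _ _) (fun x ↦ div_pos (hvpos x) (hpos x)) hT
  refine ⟨fun x ↦ I⁻¹ * (v x / P x), I⁻¹ * C, ?_, fun x ↦ ?_, fun x ↦ ?_, ?_⟩
  · refine ⟨hvP.const_mul _, fun x ↦ ?_⟩
    have hflux : (fun t ↦ P t * (I⁻¹ * (v t / P t))) = fun t ↦ I⁻¹ * v t := funext fun t ↦ by
      field_simp [hPne t]
    rw [hflux]
    exact ((hv x).const_mul I⁻¹).congr_deriv (by simp only [Pi.div_apply]; ring)
  · simp only [hvper x, hPper x]
  · exact mul_nonneg (inv_nonneg.2 hIpos.le) (div_nonneg (hvpos x).le (hpos x).le)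
  · rw [intervalIntegral.integral_const_mul, ← hI, inv_mul_cancel₀ hIpos.ne']

end PositiveDiffusion

section Bounds

variable {p q ρ : ℝ → ℝ} {C T : ℝ}

-- At a maximum `x` of `ρ` the nonnegative function `p (ρ x - ρ)` has a minimum.
lemma IsFluxSolution.const_eq_of_isMax (hρ : IsFluxSolution p q ρ C) (hp : ∀ x, 0 ≤ p x) {x : ℝ}
    (hdiff : DifferentiableAt ℝ p x) (hmax : ∀ y, ρ y ≤ ρ x) : C = (deriv p x - q x) * ρ x := by
  have hmin : IsLocalMin (fun y ↦ p y * ρ x - p y * ρ y) x := Eventually.of_forall fun y ↦ by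
    simpa using mul_le_mul_of_nonneg_left (hmax y) (hp y)
  have hzero := hmin.hasDerivAt_eq_zero
    ((hdiff.hasDerivAt.mul_const (ρ x)).fun_sub (hρ.hasDerivAt x))
  linarith

namespace IsFluxGroundstate

variable {K B m : ℝ}

lemma integral_add_period (hρ : IsFluxGroundstate T p q ρ C) (x : ℝ) :
    ∫ t in x..x + T, ρ t = 1 := by
  rw [hρ.periodic.intervalIntegral_add_eq x 0, zero_add, hρ.integral_eq_one]

lemma abs_const_le (hρ : IsFluxGroundstate T p q ρ C) (hT : 0 < T)
    (hpper : Function.Periodic p T) (hq : Continuous q) (hK : ∀ x, |q x| ≤ K) : |C| ≤ K / T := by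
  have hqρ : Continuous fun x ↦ q x * ρ x := hq.mul hρ.continuous
  have hftc := intervalIntegral.integral_eq_sub_of_hasDerivAt (a := 0) (b := T)
    (fun x _ ↦ hρ.hasDerivAt x) ((hqρ.add continuous_const).intervalIntegrable _ _)
  have hends : p T * ρ T = p 0 * ρ 0 := by simpa using (hpper.mul hρ.periodic) 0
  rw [hends, sub_self, intervalIntegral.integral_add (hqρ.intervalIntegrable _ _) (by simp),
    intervalIntegral.integral_const, sub_zero, smul_eq_mul] at hftc
  have hle : ‖∫ x in (0 : ℝ)..T, q x * ρ x‖ ≤ ∫ x in (0 : ℝ)..T, K * ρ x :=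
    intervalIntegral.norm_integral_le_of_norm_le hT.le
      (Eventually.of_forall fun x _ ↦ by
        rw [norm_mul, norm_of_nonneg (hρ.nonneg x)]
        exact mul_le_mul_of_nonneg_right (hK x) (hρ.nonneg x))
      ((continuous_const.mul hρ.continuous).intervalIntegrable _ _)
  rw [intervalIntegral.integral_const_mul, hρ.integral_eq_one, mul_one,
    eq_neg_of_add_eq_zero_left hftc, norm_neg, norm_mul, norm_of_nonneg hT.le] at hle
  exact (le_div_iff₀' hT).2 hle

-- `ρ` takes its mean value `1 / T` within one period to the left of `x`, and from there the flux
-- grows at the rate `q ρ + C`.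
lemma flux_le (hρ : IsFluxGroundstate T p q ρ C) (hT : 0 < T) (hpper : Function.Periodic p T)
    (hB : ∀ x, p x ≤ B) (hq : Continuous q) (hK : ∀ x, |q x| ≤ K) (x : ℝ) :
    p x * ρ x ≤ B / T + 2 * K := by
  have hK₀ : 0 ≤ K := (abs_nonneg _).trans (hK 0)
  have hC : C ≤ K / T := (le_abs_self C).trans (hρ.abs_const_le hT hpper hq hK)
  have hmass : ∫ t in x - T..x, ρ t = 1 := by simpa using hρ.integral_add_period (x - T)
  obtain ⟨y, hy, hρy⟩ := exists_eq_interval_average (a := x - T) (b := x) (by linarith)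
    hρ.continuous.continuousOn
  rw [interval_average_eq_div, hmass, sub_sub_cancel] at hρy
  rw [uIoo_of_le (by linarith)] at hy
  have hbound : Continuous fun t ↦ K * ρ t + K / T :=
    (hρ.continuous.const_mul K).add continuous_const
  have hgrowth : p x * ρ x - p y * ρ y ≤ 2 * K := calc
    p x * ρ x - p y * ρ y = ∫ t in y..x, (q t * ρ t + C) :=
      (intervalIntegral.integral_eq_sub_of_hasDerivAt (fun t _ ↦ hρ.hasDerivAt t)
        (((hq.mul hρ.continuous).add continuous_const).intervalIntegrable _ _)).symm
    _ ≤ ∫ t in y..x, (K * ρ t + K / T) := intervalIntegral.integral_mono_on hy.2.le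
      (((hq.mul hρ.continuous).add continuous_const).intervalIntegrable _ _)
      (hbound.intervalIntegrable _ _) fun t _ ↦ add_le_add
        (mul_le_mul_of_nonneg_right ((le_abs_self _).trans (hK t)) (hρ.nonneg t)) hC
    _ ≤ ∫ t in x - T..x, (K * ρ t + K / T) := by
      refine intervalIntegral.integral_mono_interval hy.1.le hy.2.le le_rfl
        (Eventually.of_forall fun t ↦ ?_) (hbound.intervalIntegrable _ _)
      exact add_nonneg (mul_nonneg hK₀ (hρ.nonneg t)) (div_nonneg hK₀ hT.le)
    _ = 2 * K := by
      rw [intervalIntegral.integral_add ((hρ.continuous.const_mul K).intervalIntegrable _ _)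
        (by simp), intervalIntegral.integral_const_mul, hmass, intervalIntegral.integral_const,
        sub_sub_cancel, smul_eq_mul, mul_div_cancel₀ _ hT.ne']
      ring
  have hstart : p y * ρ y ≤ B / T := by
    rw [hρy, mul_one_div]
    exact div_le_div_of_nonneg_right (hB y) hT.le
  linarith

lemma le_div_of_le (hρ : IsFluxGroundstate T p q ρ C) (hT : 0 < T) (hp : ∀ x, 0 ≤ p x)
    (hpdiff : Differentiable ℝ p) (hpper : Function.Periodic p T) (hB : ∀ x, p x ≤ B)
    (hq : Continuous q) (hK : ∀ x, |q x| ≤ K) (hm : 0 < m)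
    (hmle : ∀ x, m ≤ p x + |deriv p x - q x|) (x : ℝ) :
    ρ x ≤ (B / T + 2 * K + K / T) / m := by
  obtain ⟨-, ⟨z, rfl⟩, hz⟩ := (hρ.periodic.compact_of_continuous hT.ne'
    hρ.continuous).exists_isGreatest (range_nonempty ρ)
  have hmax : ∀ y, ρ y ≤ ρ z := forall_mem_range.1 hz
  have hcrit : |deriv p z - q z| * ρ z = |C| := by
    rw [hρ.const_eq_of_isMax hp (hpdiff z) hmax, abs_mul, abs_of_nonneg (hρ.nonneg z)]
  refine (hmax x).trans ((le_div_iff₀' hm).2 ?_)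
  calc
    m * ρ z ≤ (p z + |deriv p z - q z|) * ρ z :=
      mul_le_mul_of_nonneg_right (hmle z) (hρ.nonneg z)
    _ = p z * ρ z + |C| := by rw [add_mul, hcrit]
    _ ≤ B / T + 2 * K + K / T :=
      add_le_add (hρ.flux_le hT hpper hB hq hK z) (hρ.abs_const_le hT hpper hq hK)

lemma abs_mul_add_const_le {M : ℝ} (hρ : IsFluxGroundstate T p q ρ C) {x : ℝ} (hK : |q x| ≤ K)
    (hM : ρ x ≤ M) (hCM : |C| ≤ M) : |q x * ρ x + C| ≤ K * M + M := by
  refine (abs_add_le _ _).trans (add_le_add ?_ hCM)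
  rw [abs_mul, abs_of_nonneg (hρ.nonneg x)]
  exact mul_le_mul hK hM (hρ.nonneg x) ((abs_nonneg _).trans hK)

end IsFluxGroundstate

end Bounds

section Existence

variable {p q ρ w : ℝ → ℝ} {c T : ℝ}

lemma IsDiffusion.exists_pos_le_add_abs (hp : IsDiffusion p) (hT : T ≠ 0)
    (hpper : Function.Periodic p T) (hq : Continuous q) (hqper : Function.Periodic q T)
    (hq₀ : ∀ x, p x = 0 → q x ≠ 0) : ∃ m > 0, ∀ x, m ≤ p x + |deriv p x - q x| := by
  have hcont : Continuous fun x ↦ p x + |deriv p x - q x| :=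
    hp.continuous.add (hp.continuous_deriv.sub hq).abs
  have hper : Function.Periodic (fun x ↦ p x + |deriv p x - q x|) T := fun x ↦ by
    have hderiv : deriv p (x + T) = deriv p x := by
      rw [← deriv_comp_add_const, funext hpper]
    simp only [hpper x, hqper x, hderiv]
  obtain ⟨-, ⟨z, rfl⟩, hz⟩ :=
    (hper.compact_of_continuous hT hcont).exists_isLeast (range_nonempty _)
  refine ⟨_, ?_, forall_mem_range.1 hz⟩
  by_cases hpz : p z = 0
  · simpa [hpz, hp.deriv_eq_zero hpz] using hq₀ z hpz
  · exact add_pos_of_pos_of_nonneg (hp.pos hpz) (abs_nonneg _)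

lemma exists_forall_abs_le_of_periodic (hq : Continuous q) (hqper : Function.Periodic q T)
    (hT : T ≠ 0) : ∃ K, ∀ x, |q x| ≤ K :=
  ((hqper.isBounded_of_continuous hT hq).exists_norm_le).imp fun _ ↦ forall_mem_range.1

-- The three bounds depend on `p + ε` only through an upper bound for it and through a lower bound
-- for `p + ε + |p' - q|`, so they are uniform in `ε`.
lemma IsDiffusion.exists_isFluxGroundstate_add_const_le (hp : IsDiffusion p) (hT : 0 < T)
    (hpper : Function.Periodic p T) (hq : Continuous q) (hqper : Function.Periodic q T)
    (hq₀ : ∀ x, p x = 0 → q x ≠ 0) :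
    ∃ M, ∀ ε, 0 < ε → ε ≤ 1 → ∃ ρ C, IsFluxGroundstate T (fun x ↦ p x + ε) q ρ C ∧
      |C| ≤ M ∧ (∀ x, |(p x + ε) * ρ x| ≤ M) ∧ ∀ x, ρ x ≤ M := by
  obtain ⟨K, hK⟩ := exists_forall_abs_le_of_periodic hq hqper hT.ne'
  obtain ⟨B, hB⟩ := exists_forall_abs_le_of_periodic hp.continuous hpper hT.ne'
  obtain ⟨m, hm, hmle⟩ := hp.exists_pos_le_add_abs hT.ne' hpper hq hqper hq₀
  refine ⟨max (K / T) (max ((B + 1) / T + 2 * K) (((B + 1) / T + 2 * K + K / T) / m)),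
    fun ε hε hε₁ ↦ ?_⟩
  have hpos : ∀ x, 0 < p x + ε := fun x ↦ add_pos_of_nonneg_of_pos (hp.nonneg x) hε
  have hPper : Function.Periodic (fun x ↦ p x + ε) T := fun x ↦ congrArg (· + ε) (hpper x)
  have hPB : ∀ x, p x + ε ≤ B + 1 := fun x ↦ add_le_add ((le_abs_self _).trans (hB x)) hε₁
  obtain ⟨ρ, C, hρ⟩ : ∃ ρ C, IsFluxGroundstate T (fun x ↦ p x + ε) q ρ C :=
    exists_isFluxGroundstate_of_pos hT (hp.continuous.add continuous_const) hpos hPper hq hqper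
  refine ⟨ρ, C, hρ, ?_, fun x ↦ ?_, fun x ↦ ?_⟩
  · exact (hρ.abs_const_le hT hPper hq hK).trans (le_max_left _ _)
  · rw [abs_of_nonneg (mul_nonneg (hpos x).le (hρ.nonneg x))]
    exact (hρ.flux_le hT hPper hPB hq hK x).trans ((le_max_left _ _).trans (le_max_right _ _))
  · refine (hρ.le_div_of_le hT (fun x ↦ (hpos x).le) (hp.differentiable.add_const ε) hPper hPB hq
      hK hm (fun x ↦ ?_) x).trans ((le_max_right _ _).trans (le_max_right _ _))
    rw [deriv_add_const]
    linarith [hmle x]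

lemma exists_subseq_tendsto_of_lipschitzWith {v : ℕ → ℝ → ℝ} {M : ℝ} {L : NNReal}
    (hv : ∀ n x, |v n x| ≤ M) (hL : ∀ n, LipschitzWith L (v n)) :
    ∃ (φ : ℕ → ℕ) (w : ℝ → ℝ), StrictMono φ ∧ Continuous w ∧
      ∀ x, Tendsto (fun n ↦ v (φ n) x) atTop (𝓝 (w x)) := by
  set S : Set C(ℝ, ℝ) := {f | (∀ x, |f x| ≤ M) ∧ LipschitzWith L f}
  have himage : ContinuousMap.toFun '' S =
      (univ.pi fun _ : ℝ ↦ Icc (-M) M) ∩ {f | LipschitzWith L f} := by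
    ext f
    constructor
    · rintro ⟨g, hg, rfl⟩
      exact ⟨fun x _ ↦ abs_le.1 (hg.1 x), hg.2⟩
    · rintro ⟨hbound, hlip⟩
      exact ⟨⟨f, LipschitzWith.continuous hlip⟩, ⟨fun x ↦ abs_le.2 (hbound x trivial), hlip⟩, rfl⟩
  have hcomp : IsCompact S := by
    refine ArzelaAscoli.isCompact_of_equicontinuous S ?_
      (LipschitzWith.uniformEquicontinuous _ L fun f : S ↦ f.2.2).equicontinuous
    rw [himage]
    exact (isCompact_univ_pi fun _ ↦ isCompact_Icc).inter_right
      (isClosed_setOfPred_lipschitzWith L)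
  obtain ⟨w, -, φ, hφ, hlim⟩ := hcomp.tendsto_subseq
    (x := fun n ↦ (⟨v n, (hL n).continuous⟩ : C(ℝ, ℝ))) fun n ↦ ⟨hv n, hL n⟩
  exact ⟨φ, w, hφ, w.continuous, fun x ↦ ((continuous_eval_const x).tendsto w).comp hlim⟩

lemma hasDerivAt_of_tendsto_of_ae_tendsto {v g : ℕ → ℝ → ℝ} {w h : ℝ → ℝ} {L x : ℝ}
    (hv : ∀ n y, HasDerivAt (v n) (g n y) y) (hg : ∀ n, Continuous (g n))
    (hL : ∀ n y, |g n y| ≤ L) (hvw : ∀ y, Tendsto (fun n ↦ v n y) atTop (𝓝 (w y)))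
    (hgh : ∀ᵐ y, Tendsto (fun n ↦ g n y) atTop (𝓝 (h y))) (hx : ContinuousAt h x) :
    HasDerivAt w (h x) x := by
  have hmeas : AEStronglyMeasurable h volume :=
    aestronglyMeasurable_of_tendsto_ae atTop (fun n ↦ (hg n).aestronglyMeasurable) hgh
  have hhL : ∀ᵐ y, ‖h y‖ ≤ L := hgh.mono fun y hy ↦ le_of_tendsto' hy.norm fun n ↦ hL n y
  have hint : IntervalIntegrable h volume 0 x :=
    (intervalIntegrable_const (c := L)).mono_fun' hmeas.restrict (ae_restrict_of_ae hhL)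
  have hftc : ∀ y, ∫ t in (0 : ℝ)..y, h t = w y - w 0 := fun y ↦ by
    have hlim : Tendsto (fun n ↦ ∫ t in (0 : ℝ)..y, g n t) atTop (𝓝 (∫ t in (0 : ℝ)..y, h t)) :=
      intervalIntegral.tendsto_integral_filter_of_dominated_convergence (fun _ ↦ L)
        (Eventually.of_forall fun n ↦ (hg n).aestronglyMeasurable)
        (Eventually.of_forall fun n ↦ Eventually.of_forall fun t _ ↦ hL n t)
        intervalIntegrable_const (hgh.mono fun t ht _ ↦ ht)
    refine tendsto_nhds_unique (hlim.congr fun n ↦ ?_) ((hvw y).sub (hvw 0))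
    exact intervalIntegral.integral_eq_sub_of_hasDerivAt (fun t _ ↦ hv n t)
      ((hg n).intervalIntegrable _ _)
  have hderiv := (intervalIntegral.integral_hasDerivAt_right hint
    hmeas.stronglyMeasurableAtFilter hx).add_const (w 0)
  simpa only [hftc, sub_add_cancel] using hderiv

lemma IsFluxSolution.isFluxGroundstate_of_tendsto {P r : ℕ → ℝ → ℝ} {C : ℕ → ℝ} {M : ℝ}
    (hρ : IsFluxSolution p q ρ c) (hp : IsDiffusion p)
    (hr : ∀ n, IsFluxGroundstate T (P n) q (r n) (C n)) (hM : ∀ n x, r n x ≤ M)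
    (hlim : ∀ x, p x ≠ 0 → Tendsto (fun n ↦ r n x) atTop (𝓝 (ρ x)))
    (hpper : Function.Periodic p T) : IsFluxGroundstate T p q ρ c where
  toIsFluxSolution := hρ
  periodic := by
    refine congrFun <| (hρ.continuous.comp (continuous_add_const T)).ext_on hp.dense_ne_zero
      hρ.continuous fun x hx ↦ ?_
    refine tendsto_nhds_unique (hlim (x + T) (by rwa [hpper x])) ((hlim x hx).congr fun n ↦ ?_)
    exact ((hr n).periodic x).symm
  nonneg := hp.dense_ne_zero.induction
    (fun x hx ↦ ge_of_tendsto' (hlim x hx) fun n ↦ (hr n).nonneg x)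
    (isClosed_le continuous_const hρ.continuous)
  integral_eq_one := by
    have hint : Tendsto (fun n ↦ ∫ x in (0 : ℝ)..T, r n x) atTop
        (𝓝 (∫ x in (0 : ℝ)..T, ρ x)) := by
      refine intervalIntegral.tendsto_integral_filter_of_dominated_convergence (fun _ ↦ M)
        (Eventually.of_forall fun n ↦ (hr n).continuous.aestronglyMeasurable)
        (Eventually.of_forall fun n ↦ Eventually.of_forall fun x _ ↦ ?_)
        intervalIntegrable_const (hp.ae_ne_zero.mono fun x hx _ ↦ hlim x hx)
      rw [norm_of_nonneg ((hr n).nonneg x)]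
      exact hM n x
    simp only [(hr _).integral_eq_one] at hint
    exact tendsto_nhds_unique hint tendsto_const_nhds

-- The limit flux `w` solves `w' = (q / p) w + c` off the zeros of `p`, so it is divisible by `p`.
lemma IsDiffusion.exists_isFluxGroundstate_of_tendsto {r : ℕ → ℝ → ℝ} {C ε : ℕ → ℝ} {K M : ℝ}
    (hp : IsDiffusion p) (hpper : Function.Periodic p T) (hq : Continuous q)
    (hK : ∀ x, |q x| ≤ K) (hq₀ : ∀ x, p x = 0 → q x ≠ 0) (hε : Tendsto ε atTop (𝓝 0))
    (hr : ∀ n, IsFluxGroundstate T (fun x ↦ p x + ε n) q (r n) (C n)) (hM : ∀ n x, r n x ≤ M)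
    (hCM : ∀ n, |C n| ≤ M) (hC : Tendsto C atTop (𝓝 c)) (hw : Continuous w)
    (hrw : ∀ x, Tendsto (fun n ↦ (p x + ε n) * r n x) atTop (𝓝 (w x))) :
    ∃ ρ, IsFluxGroundstate T p q ρ c := by
  have hlim : ∀ x, p x ≠ 0 → Tendsto (fun n ↦ r n x) atTop (𝓝 (w x / p x)) := fun x hx ↦ by
    have hP : Tendsto (fun n ↦ p x + ε n) atTop (𝓝 (p x)) := by
      simpa using tendsto_const_nhds.add hε
    refine ((hrw x).div hP hx).congr' ?_
    filter_upwards [hP.eventually_ne hx] with n hn using mul_div_cancel_left₀ _ hn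
  have hode : ∀ x, p x ≠ 0 → HasDerivAt w (q x / p x * w x + c) x := fun x hx ↦ by
    refine (hasDerivAt_of_tendsto_of_ae_tendsto (h := fun y ↦ q y * (w y / p y) + c)
      (fun n ↦ (hr n).hasDerivAt) (fun n ↦ (hq.mul (hr n).continuous).add continuous_const)
      (fun n x ↦ (hr n).abs_mul_add_const_le (hK x) (hM n x) (hCM n)) hrw
      (hp.ae_ne_zero.mono fun y hy ↦ (tendsto_const_nhds.mul (hlim y hy)).add hC)
      ?_).congr_deriv (by ring)
    exact (hq.continuousAt.mul (hw.continuousAt.div hp.continuous.continuousAt hx)).add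
      continuousAt_const
  obtain ⟨ρ, hρ, hwρ⟩ := hp.exists_continuous_eq_mul hq hq₀ continuous_const hw hode
  have hdiv : ∀ x, p x ≠ 0 → w x / p x = ρ x := fun x hx ↦ by
    rw [hwρ, mul_div_cancel_left₀ _ hx]
  have hsol : IsFluxSolution p q ρ c := isFluxSolution_of_forall_ne_zero hp hq hρ fun x hx ↦ by
    rw [← funext hwρ, ← hdiv x hx]
    exact (hode x hx).congr_deriv (by ring)
  exact ⟨ρ, hsol.isFluxGroundstate_of_tendsto hp hr hM
    (fun x hx ↦ hdiv x hx ▸ hlim x hx) hpper⟩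

lemma IsDiffusion.exists_isFluxGroundstate (hp : IsDiffusion p) (hT : 0 < T)
    (hpper : Function.Periodic p T) (hq : Continuous q) (hqper : Function.Periodic q T)
    (hq₀ : ∀ x, p x = 0 → q x ≠ 0) : ∃ ρ C, IsFluxGroundstate T p q ρ C := by
  obtain ⟨M, hM⟩ := hp.exists_isFluxGroundstate_add_const_le hT hpper hq hqper hq₀
  obtain ⟨K, hK⟩ := exists_forall_abs_le_of_periodic hq hqper hT.ne'
  have hε : Tendsto (fun n : ℕ ↦ 1 / ((n : ℝ) + 1)) atTop (𝓝 0) :=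
    tendsto_one_div_add_atTop_nhds_zero_nat
  choose r C hr hCM hflux hrM using fun n : ℕ ↦
    hM (1 / ((n : ℝ) + 1)) Nat.one_div_pos_of_nat
      (by simpa using Nat.one_div_le_one_div (α := ℝ) n.zero_le)
  have hL : ∀ n : ℕ, LipschitzWith (K * M + M).toNNReal
      fun x ↦ (p x + 1 / ((n : ℝ) + 1)) * r n x := by
    refine fun n ↦ lipschitzWith_of_nnnorm_deriv_le
      (fun x ↦ ((hr n).hasDerivAt x).differentiableAt) fun x ↦ ?_
    rw [((hr n).hasDerivAt x).deriv, ← NNReal.coe_le_coe, coe_nnnorm]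
    exact ((hr n).abs_mul_add_const_le (hK x) (hrM n x) (hCM n)).trans (le_max_left _ _)
  obtain ⟨φ, w, hφ, hw, hlim⟩ := exists_subseq_tendsto_of_lipschitzWith hflux hL
  obtain ⟨c, -, ψ, hψ, hC⟩ := tendsto_subseq_of_bounded
    (Metric.isBounded_closedBall (x := (0 : ℝ)) (r := M)) (x := C ∘ φ) fun n ↦ by simpa using hCM _
  obtain ⟨ρ, hρ⟩ := hp.exists_isFluxGroundstate_of_tendsto hpper hq hK hq₀
    (hε.comp (hφ.comp hψ).tendsto_atTop) (fun n ↦ hr (φ (ψ n))) (fun n ↦ hrM _) (fun n ↦ hCM _)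
    hC hw fun x ↦ (hlim x).comp hψ.tendsto_atTop
  exact ⟨ρ, c, hρ⟩

end Existence

section TrigonometricPolynomials

open Polynomial

lemma encard_setOf_isRoot_derivative_le {R : Type*} [CommRing R] [IsDomain R] {P : R[X]} {n : ℕ}
    (hP : P ≠ 0) (hdeg : P.natDegree ≤ 2 * n) :
    {z | P.IsRoot z ∧ (derivative P).IsRoot z}.encard ≤ n := by
  classical
  set S := P.roots.toFinset.filter fun z ↦ 1 < P.roots.count z
  have hS : {z | P.IsRoot z ∧ (derivative P).IsRoot z} ⊆ S := fun z hz ↦ by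
    have hmult : 1 < P.rootMultiplicity z := (one_lt_rootMultiplicity_iff_isRoot hP).2 hz
    simpa [S, hP] using ⟨hz.1, hmult⟩
  have hcard : S.card * 2 ≤ 2 * n := calc
    S.card * 2 ≤ ∑ z ∈ S, P.roots.count z :=
      Finset.card_nsmul_le_sum S _ 2 fun z hz ↦ (Finset.mem_filter.1 hz).2
    _ ≤ ∑ z ∈ P.roots.toFinset, P.roots.count z :=
      Finset.sum_le_sum_of_subset (Finset.filter_subset _ _)
    _ = P.roots.card := P.roots.toFinset_sum_count_eq
    _ ≤ 2 * n := P.card_roots'.trans hdeg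
  refine (encard_le_encard hS).trans ?_
  rw [encard_coe_eq_coe_finsetCard]
  exact_mod_cast (by omega : S.card ≤ n)

variable {p : ℝ → ℝ} {T : ℝ} {P : ℂ[X]} {n : ℕ}

lemma hasDerivAt_toCircle (T x : ℝ) :
    HasDerivAt (fun x : ℝ ↦ (AddCircle.toCircle (x : AddCircle T) : ℂ))
      (AddCircle.toCircle (x : AddCircle T) * (2 * π / T * Complex.I)) x := by
  simp only [AddCircle.toCircle_apply_mk, Circle.coe_exp]
  have hlin : HasDerivAt (fun x : ℝ ↦ ((2 * π / T * x : ℝ) : ℂ) * Complex.I)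
      (2 * π / T * Complex.I) x := by
    simpa using (((hasDerivAt_id x).const_mul (2 * π / T)).ofReal_comp.mul_const Complex.I)
  exact hlin.cexp

lemma derivative_isRoot_toCircle (hT : T ≠ 0)
    (hP : ∀ x : ℝ, P.eval (AddCircle.toCircle (x : AddCircle T) : ℂ) =
      AddCircle.toCircle (x : AddCircle T) ^ n * p x)
    {x : ℝ} (hp : HasDerivAt p 0 x) (hx : p x = 0) :
    (derivative P).IsRoot (AddCircle.toCircle (x : AddCircle T) : ℂ) := by
  have he := hasDerivAt_toCircle T x
  have hright := (he.fun_pow n).fun_mul hp.ofReal_comp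
  rw [← funext hP] at hright
  have hzero := ((P.hasDerivAt _).comp x he).unique hright
  simpa [hx, hT, Real.pi_ne_zero] using hzero

-- A zero of `p ≥ 0` is double, so it accounts for two of the `2 n` roots of `P`.
lemma encard_zeros_le_of_eval_toCircle (hT : T ≠ 0) (hdeg : P.natDegree ≤ 2 * n)
    (hP : ∀ x : ℝ, P.eval (AddCircle.toCircle (x : AddCircle T) : ℂ) =
      AddCircle.toCircle (x : AddCircle T) ^ n * p x)
    (hdiff : Differentiable ℝ p) (hnn : ∀ x, 0 ≤ p x) (hne : ∃ x, p x ≠ 0) :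
    ((↑) '' {x | p x = 0} : Set (AddCircle T)).encard ≤ n := by
  have hP₀ : P ≠ 0 := by
    rintro rfl
    obtain ⟨x, hx⟩ := hne
    simpa [hx] using hP x
  have hinj : Function.Injective fun x : AddCircle T ↦ (AddCircle.toCircle x : ℂ) :=
    Circle.coe_injective.comp (AddCircle.injective_toCircle hT)
  rw [← hinj.encard_image]
  refine (encard_le_encard ?_).trans (encard_setOf_isRoot_derivative_le hP₀ hdeg)
  rintro - ⟨-, ⟨x, hx : p x = 0, rfl⟩, rfl⟩
  have hmin : IsLocalMin p x := Eventually.of_forall fun y ↦ hx ▸ hnn y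
  have hderiv : HasDerivAt p 0 x := hmin.deriv_eq_zero ▸ (hdiff x).hasDerivAt
  exact ⟨by simp [hP, hx], derivative_isRoot_toCircle hT hP hderiv hx⟩

lemma IsTrigPoly4.contDiff (hp : IsTrigPoly4 p) {k : WithTop ℕ∞} : ContDiff ℝ k p := by
  obtain ⟨c, hc⟩ := hp
  rw [funext hc]
  fun_prop

lemma IsTrigPoly4.periodic (hp : IsTrigPoly4 p) : Function.Periodic p π := by
  obtain ⟨c, hc⟩ := hp
  intro x
  have h2 : 2 * (x + π) = 2 * x + 2 * π := by ring
  have h4 : 4 * (x + π) = 4 * x + 2 * π + 2 * π := by ring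
  simp only [hc, h2, h4, cos_add_two_pi, sin_add_two_pi]

lemma IsTrigPoly4.exists_eval_toCircle (hp : IsTrigPoly4 p) :
    ∃ P : ℂ[X], P.natDegree ≤ 4 ∧ ∀ x : ℝ, P.eval (AddCircle.toCircle (x : AddCircle π) : ℂ) =
      AddCircle.toCircle (x : AddCircle π) ^ 2 * p x := by
  obtain ⟨c, hc⟩ := hp
  refine ⟨C ((c 3 - c 4 * Complex.I) / 2) * X ^ 4 + C ((c 1 - c 2 * Complex.I) / 2) * X ^ 3 +
    C (c 0 : ℂ) * X ^ 2 + C ((c 1 + c 2 * Complex.I) / 2) * X +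
    C ((c 3 + c 4 * Complex.I) / 2), by compute_degree, fun x ↦ ?_⟩
  set z := Complex.exp (2 * x * Complex.I) with hz
  have hcircle : (AddCircle.toCircle (x : AddCircle π) : ℂ) = z := by
    rw [AddCircle.toCircle_apply_mk, Circle.coe_exp, mul_div_cancel_right₀ _ Real.pi_ne_zero, hz]
    push_cast
    rfl
  have hinv : z * Complex.exp (-(2 * x) * Complex.I) = 1 := by
    rw [hz, ← Complex.exp_add, neg_mul, add_neg_cancel, Complex.exp_zero]
  have hsq : Complex.exp (4 * x * Complex.I) = z ^ 2 := by
    rw [hz, ← Complex.exp_nat_mul]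
    ring_nf
  have hsq' : Complex.exp (-(4 * x) * Complex.I) = Complex.exp (-(2 * x) * Complex.I) ^ 2 := by
    rw [← Complex.exp_nat_mul]
    ring_nf
  simp only [hcircle, hc, eval_add, eval_mul, eval_C, eval_pow, eval_X]
  push_cast
  simp only [Complex.cos, Complex.sin, hsq, hsq', ← hz]
  set w := Complex.exp (-(2 * x) * Complex.I)
  have hsq'' : z ^ 2 * w ^ 2 = 1 := by rw [← mul_pow, hinv, one_pow]
  linear_combination (-(c 1 + c 2 * Complex.I) / 2 * z) * hinv -
    (c 3 + c 4 * Complex.I) / 2 * hsq''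

lemma IsTrigPoly4.encard_zeros_le (hp : IsTrigPoly4 p) (hnn : ∀ x, 0 ≤ p x)
    (hne : ∃ x, p x ≠ 0) : ((↑) '' {x | p x = 0} : Set (AddCircle π)).encard ≤ 2 := by
  obtain ⟨P, hdeg, hP⟩ := hp.exists_eval_toCircle
  exact encard_zeros_le_of_eval_toCircle (n := 2) Real.pi_ne_zero hdeg hP
    (hp.contDiff.differentiable one_ne_zero) hnn hne

end TrigonometricPolynomials

theorem groundstate_degenerate_general {p q : ℝ → ℝ} (hp : ContDiff ℝ 1 p) (hq : Continuous q)
    (hpper : Function.Periodic p π) (hqper : Function.Periodic q π) (hppos : ∀ θ, 0 ≤ p θ)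
    (hzeros : ((↑) '' {θ | p θ = 0} : Set (AddCircle π)).encard ≤ 2)
    (hq0 : ∀ θ, p θ = 0 → q θ ≠ 0) :
    (∃! z : (ℝ → ℝ) × ℝ, IsGroundstateW p q z.1 z.2) ∧
    ∀ ρ C, IsGroundstateW p q ρ C → ∀ n : ℕ, ContDiff ℝ (n + 1) p → ContDiff ℝ n q →
      ContDiff ℝ n ρ := by
  have hdiff : IsDiffusion p :=
    isDiffusion_of_finite_zeros pi_pos hp hppos (finite_of_encard_le_coe hzeros)
  simp only [isGroundstateW_iff hdiff hq]
  refine ⟨?_, fun ρ C h n hpn hqn ↦ h.contDiff hdiff hq0 n hpn hqn⟩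
  obtain ⟨ρ, C, h⟩ := hdiff.exists_isFluxGroundstate pi_pos hpper hq hqper hq0
  refine ⟨(ρ, C), h, fun z hz ↦ ?_⟩
  obtain ⟨hρ, hC⟩ := hz.unique h hdiff hq hq0 pi_pos hzeros
  exact Prod.ext hρ hC

end FluxEquation

/-- **Theorem 2 (vanishing diffusion, nonvanishing drift at the zeros).**
If `p, q` are `π`-periodic trigonometric polynomials of degree `≤ 4`, `p ≥ 0` is not
identically zero, and `q(θ̂) ≠ 0` at every zero `θ̂` of `p`, then there is exactly one
pair `(ρ, C)` with `ρ` continuous, nonnegative, normalized, `C¹` off the zero set of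
`p` and solving `p ρ' + (p'-q)ρ = C` there; moreover this `ρ` is `C^∞` on all of `ℝ`. -/
theorem groundstate_degenerate (p q : ℝ → ℝ)
    (hp : IsTrigPoly4 p) (hq : IsTrigPoly4 q)
    (hppos : ∀ θ, 0 ≤ p θ) (hpne : ∃ θ, p θ ≠ 0)
    (hq0 : ∀ θ, p θ = 0 → q θ ≠ 0) :
    (∃! z : (ℝ → ℝ) × ℝ, IsGroundstateW p q z.1 z.2) ∧
    (∀ ρ C, IsGroundstateW p q ρ C → ContDiff ℝ (⊤ : ℕ∞) ρ) := by
  have hmain := groundstate_degenerate_general hp.contDiff (hq.contDiff (k := 0)).continuous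
    hp.periodic hq.periodic hppos (hp.encard_zeros_le hppos hpne) hq0
  exact ⟨hmain.1, fun ρ C h ↦ contDiff_infty.2 fun n ↦ hmain.2 ρ C h n hp.contDiff hq.contDiff⟩

end FokkerPlanck7
end

section
/- (Lemma 1, part 1: perturbative expansion of the logarithmic norm growth.) With the expansion M T_{λ,σ} M^{−1} = ± exp(Σ_k λ^{η_k} P_{η_k,σ}) and the coefficients α_{η,σ}, β_{η,σ}, γ_{η,σ}, δ_{η_1,η_2,σ} defined in the context: (a) p_{k,σ}(θ) = Im(α_{η_k,σ} − β_{η_k,σ} e^{2iθ}); and (b) uniformly in θ ∈ S¹_π and σ ∈ Σ, log‖M T_{λ,σ} M^{−1} e_θ‖ = Re Σ_{k≥1} ( λ^{η_k} β_{η_k,σ} e^{2iθ} + (λ^{2η_k}/2)( |β_{η_k,σ}|² + γ_{η_k,σ} e^{2iθ} − β_{η_k,σ}² e^{4iθ} ) ) + Re Σ_{k_1<k_2} λ^{η_{k_1}+η_{k_2}} ( β_{η_{k_1},σ} \overline{β_{η_{k_2},σ}} + δ_{η_{k_1},η_{k_2},σ} e^{2iθ} − β_{η_{k_1},σ} β_{η_{k_2},σ}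 e^{4iθ} ) + O(λ^{3η_1}), where the sums run over the (finitely many) exponents with η_k < 3η_1, respectively η_{k_1}+η_{k_2} < 3η_1. -/
/- Statement 10 (Lemma 1, part 1): perturbative expansion of the logarithmic norm
growth log‖M T_{λ,σ} M⁻¹ e_θ‖ at an anomaly, with uniform error O(λ^{3η_1}). -/

open MeasureTheory Filter Real Set

namespace Anomaly10

/-- The exponential of a 2×2 real matrix, `exp A = Σ_n A^n / n!`. -/
noncomputable def matExp (A : Matrix (Fin 2) (Fin 2) ℝ) : Matrix (Fin 2) (Fin 2) ℝ :=
  ∑' n : ℕ, ((n.factorial : ℝ)⁻¹) • A ^ n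

/-- Complexification of a real 2×2 matrix. -/
noncomputable def toC (P : Matrix (Fin 2) (Fin 2) ℝ) : Matrix (Fin 2) (Fin 2) ℂ :=
  P.map (fun x => (x : ℂ))

/-- The vector `v = (1, -i)ᵀ/√2`. -/
noncomputable def vplus : Fin 2 → ℂ := ![1 / Real.sqrt 2, -Complex.I / Real.sqrt 2]

/-- The vector `v̄ = (1, i)ᵀ/√2`. -/
noncomputable def vminus : Fin 2 → ℂ := ![1 / Real.sqrt 2, Complex.I / Real.sqrt 2]

/-- The complex inner product `⟨u|w⟩` on `ℂ²` (conjugate-linear in the first slot). -/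
noncomputable def dotc (u w : Fin 2 → ℂ) : ℂ :=
  starRingEnd ℂ (u 0) * w 0 + starRingEnd ℂ (u 1) * w 1

/-- `α_{η,σ} = ⟨v|P|v⟩`. -/
noncomputable def alphaC (P : Matrix (Fin 2) (Fin 2) ℝ) : ℂ :=
  dotc vplus ((toC P).mulVec vplus)

/-- `β_{η,σ} = ⟨v̄|P|v⟩`. -/
noncomputable def betaC (P : Matrix (Fin 2) (Fin 2) ℝ) : ℂ :=
  dotc vminus ((toC P).mulVec vplus)

/-- `γ_{η,σ} = ⟨v̄| |P|² |v⟩ = ⟨v̄| P*P |v⟩`. -/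
noncomputable def gammaC (P : Matrix (Fin 2) (Fin 2) ℝ) : ℂ :=
  dotc vminus (((toC P).conjTranspose * toC P).mulVec vplus)

/-- `δ_{η_1,η_2,σ} = ½⟨v̄|(P₁+P₁*)P₂ + (P₂+P₂*)P₁|v⟩`. -/
noncomputable def deltaC (P₁ P₂ : Matrix (Fin 2) (Fin 2) ℝ) : ℂ :=
  (1 / 2 : ℂ) * dotc vminus
    (((toC P₁ + (toC P₁).conjTranspose) * toC P₂ +
      (toC P₂ + (toC P₂).conjTranspose) * toC P₁).mulVec vplus)

/-- The Euclidean norm on `ℝ²`. -/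
noncomputable def vnorm (w : Fin 2 → ℝ) : ℝ := Real.sqrt ((w 0) ^ 2 + (w 1) ^ 2)

/-- The trigonometric polynomial `p_P(θ) = Im(⟨v|P|e_θ⟩/⟨v|e_θ⟩)`. -/
noncomputable def polP (P : Matrix (Fin 2) (Fin 2) ℝ) (θ : ℝ) : ℝ :=
  ((((P.mulVec ![Real.cos θ, Real.sin θ]) 0 : ℝ) +
      ((P.mulVec ![Real.cos θ, Real.sin θ]) 1 : ℝ) * Complex.I) *
    Complex.exp (-(θ : ℂ) * Complex.I)).im

/-!
Identify `ℝ²` with `ℂ`, so that `e_θ = e^{iθ}`. A real matrix acts as `z ↦ α z + β̄ z̄`, hence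
`⟨v|P|e_θ⟩ / ⟨v|e_θ⟩ = P e_θ / e_θ = α + conj (β e^{2iθ})`; its imaginary part is `p_P(θ)`, and its
modulus is `‖P e_θ‖`. For traceless `Q = ∑ λ^{η_k} P_k` one has `ᾱ = -α` and `Q² = |β|² - |α|²`, so
`exp (Q + R) e_θ / e_θ = 1 + z + (|β|² - |α|²) / 2 + O(λ^{3η_1})` with `z = α + conj (β e^{2iθ})`.
Taking the real part of the complex logarithm, `α` survives only in the product `α β`, which is
`γ / 2`, and leaves the expansion for the single generator `Q`. Its second-order part is a quadratic
form in `Q` whose polarization gives the mixed terms with `β_{k₁} β̄_{k₂}` and `δ_{k₁,k₂}`.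

Uniformity in `(σ, θ)` is expressed by big-O statements along the filter `𝓝[>] 0 ×ˢ ⊤`.
-/

open Asymptotics Topology Matrix

/-! ### Taylor expansions of second order -/

theorem isBigO_exp_sub_quadratic {𝔸 : Type*} [NormedRing 𝔸] [NormedAlgebra ℝ 𝔸]
    [CompleteSpace 𝔸] :
    (fun a : 𝔸 => NormedSpace.exp a - (1 + a + (1 / 2 : ℝ) • a ^ 2)) =O[𝓝 0]
      fun a => ‖a‖ ^ 3 := by
  have h := (NormedSpace.exp_hasFPowerSeriesAt_zero (𝕂 := ℝ) (𝔸 := 𝔸)).isBigO_sub_partialSum_pow 3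
  simpa [FormalMultilinearSeries.partialSum, Finset.sum_range_succ,
    NormedSpace.expSeries_apply_eq] using h

theorem isBigO_clog_one_add_sub_quadratic :
    (fun z : ℂ => Complex.log (1 + z) - (z - z ^ 2 / 2)) =O[𝓝 0] fun z => z ^ 3 := by
  refine (Complex.log_sub_logTaylor_isBigO 2).congr_left fun z => ?_
  norm_num [Complex.logTaylor, Finset.sum_range_succ]
  ring

section Perturbation

variable {X : Type*} {l : Filter X} {g : X → ℝ}

theorem isBigO_exp_add_sub_quadratic {𝔸 : Type*} [NormedRing 𝔸] [NormedAlgebra ℝ 𝔸]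
    [CompleteSpace 𝔸] (hg : Tendsto g l (𝓝 0)) {a r : X → 𝔸} (ha : a =O[l] g)
    (hr : r =O[l] fun x => g x ^ 3) :
    (fun x => NormedSpace.exp (a x + r x) - (1 + a x + (1 / 2 : ℝ) • a x ^ 2))
      =O[l] fun x => g x ^ 3 := by
  have hg3 : (fun x => g x ^ 3) =O[l] g :=
    (isLittleO_pow_id (by norm_num)).isBigO.comp_tendsto hg
  have har : (fun x => a x + r x) =O[l] g := ha.add (hr.trans hg3)
  have hexp := (isBigO_exp_sub_quadratic.comp_tendsto (har.trans_tendsto hg)).trans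
    (har.norm_left.pow 3)
  have hg_mul : (fun x => g x * g x ^ 3) =O[l] fun x => g x ^ 3 := by
    simpa using (hg.isBigO_one ℝ).mul (isBigO_refl (fun x => g x ^ 3) l)
  have hcross : (fun x => (1 / 2 : ℝ) • (a x * r x + r x * (a x + r x))) =O[l]
      fun x => g x ^ 3 := by
    have h₁ := (ha.mul hr).trans hg_mul
    have h₂ := (hr.mul har).trans (by simpa only [mul_comm] using hg_mul)
    exact (h₁.add h₂).const_smul_left (1 / 2 : ℝ)
  refine ((hexp.add hr).add hcross).congr_left fun x => ?_
  have hsq : (a x + r x) ^ 2 = a x ^ 2 + (a x * r x + r x * (a x + r x)) := by noncomm_ring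
  simp only [Function.comp_apply, hsq, smul_add]
  abel

theorem isBigO_clog_one_add_sub (hg : Tendsto g l (𝓝 0)) {z q r : X → ℂ} (hz : z =O[l] g)
    (hq : q =O[l] fun x => g x ^ 2) (hr : r =O[l] fun x => g x ^ 3) :
    (fun x => Complex.log (1 + (z x + q x + r x)) - (z x + q x - z x ^ 2 / 2))
      =O[l] fun x => g x ^ 3 := by
  have hg2 : (fun x => g x ^ 2) =O[l] g :=
    (isLittleO_pow_id (by norm_num)).isBigO.comp_tendsto hg
  have hg3 : (fun x => g x ^ 3) =O[l] fun x => g x ^ 2 :=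
    (isLittleO_pow_pow (by norm_num)).isBigO.comp_tendsto hg
  have hqr : (fun x => q x + r x) =O[l] fun x => g x ^ 2 := hq.add (hr.trans hg3)
  have hζ : (fun x => z x + q x + r x) =O[l] g := by
    simpa only [add_assoc] using hz.add (hqr.trans hg2)
  have hlog := (isBigO_clog_one_add_sub_quadratic.comp_tendsto (hζ.trans_tendsto hg)).trans
    (hζ.pow 3)
  have hcross : (fun x => 2⁻¹ * ((q x + r x) * ((z x + q x + r x) + z x))) =O[l]
      fun x => g x ^ 3 := by
    simpa only [pow_succ (g _) 2] using (hqr.mul (hζ.add hz)).const_mul_left 2⁻¹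
  refine ((hlog.add hr).sub hcross).congr_left fun x => ?_
  simp only [Function.comp_apply]
  ring

end Perturbation

/-! ### The matrix exponential -/

section MatrixExponential

variable {X n : Type*} {l : Filter X} {g : X → ℝ}

attribute [local instance] Matrix.linftyOpNormedRing Matrix.linftyOpNormedAlgebra

theorem isBigO_matrix_iff [Fintype n] [DecidableEq n] {A : X → Matrix n n ℝ} :
    A =O[l] g ↔ ∀ i j, (fun x => A x i j) =O[l] g := by
  refine ⟨fun h i j => ?_, fun h => ?_⟩
  · exact ((Matrix.entryLinearMap ℝ ℝ i j).toContinuousLinearMap.isBigO_comp A l).trans h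
  · rw [funext fun x => Matrix.matrix_eq_sum_single (A x)]
    refine IsBigO.fun_sum fun i _ => IsBigO.fun_sum fun j _ => ?_
    exact ((Matrix.singleLinearMap ℝ i j).toContinuousLinearMap.isBigO_comp _ l).trans (h i j)

theorem matExp_eq_exp (A : Matrix (Fin 2) (Fin 2) ℝ) : matExp A = NormedSpace.exp A :=
  (congrFun (NormedSpace.exp_eq_tsum ℝ) A).symm

theorem isBigO_matExp_add_sub_quadratic (hg : Tendsto g l (𝓝 0))
    {Q R : X → Matrix (Fin 2) (Fin 2) ℝ} (hQ : ∀ i j, (fun x => Q x i j) =O[l] g)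
    (hR : ∀ i j, (fun x => R x i j) =O[l] fun x => g x ^ 3) (i j : Fin 2) :
    (fun x => (matExp (Q x + R x) - (1 + Q x + (1 / 2 : ℝ) • Q x ^ 2) :
        Matrix (Fin 2) (Fin 2) ℝ) i j)
      =O[l] fun x => g x ^ 3 := by
  simp only [matExp_eq_exp]
  exact isBigO_matrix_iff.1
    (isBigO_exp_add_sub_quadratic hg (isBigO_matrix_iff.2 hQ) (isBigO_matrix_iff.2 hR)) i j

end MatrixExponential

/-! ### Matrix elements between `v` and `v̄` -/

section MatrixElements

theorem dotc_vplus_mulVec_vplus (A : Matrix (Fin 2) (Fin 2) ℂ) :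
    dotc vplus (A.mulVec vplus) = (A 0 0 + A 1 1 + Complex.I * (A 1 0 - A 0 1)) / 2 := by
  have hsqrt : ((√2 : ℝ) : ℂ) ^ 2 = 2 := by exact_mod_cast Real.sq_sqrt zero_le_two
  simp only [dotc, vplus, Matrix.mulVec, dotProduct, Fin.sum_univ_two, Matrix.cons_val_zero,
    Matrix.cons_val_one, map_div₀, map_neg, map_one, Complex.conj_I, Complex.conj_ofReal]
  field_simp
  simp only [hsqrt]
  linear_combination (-2 * A 1 1) * Complex.I_sq

theorem dotc_vminus_mulVec_vplus (A : Matrix (Fin 2) (Fin 2) ℂ) :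
    dotc vminus (A.mulVec vplus) = (A 0 0 - A 1 1 - Complex.I * (A 1 0 + A 0 1)) / 2 := by
  have hsqrt : ((√2 : ℝ) : ℂ) ^ 2 = 2 := by exact_mod_cast Real.sq_sqrt zero_le_two
  simp only [dotc, vplus, vminus, Matrix.mulVec, dotProduct, Fin.sum_univ_two,
    Matrix.cons_val_zero, Matrix.cons_val_one, map_div₀, map_one, Complex.conj_I,
    Complex.conj_ofReal]
  field_simp
  simp only [hsqrt]
  linear_combination (2 * A 1 1) * Complex.I_sq

theorem alphaC_eq (P : Matrix (Fin 2) (Fin 2) ℝ) :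
    alphaC P = (P 0 0 + P 1 1 + Complex.I * (P 1 0 - P 0 1)) / 2 :=
  dotc_vplus_mulVec_vplus (toC P)

theorem betaC_eq (P : Matrix (Fin 2) (Fin 2) ℝ) :
    betaC P = (P 0 0 - P 1 1 - Complex.I * (P 1 0 + P 0 1)) / 2 :=
  dotc_vminus_mulVec_vplus (toC P)

theorem alphaC_add (P R : Matrix (Fin 2) (Fin 2) ℝ) : alphaC (P + R) = alphaC P + alphaC R := by
  simp only [alphaC_eq, Matrix.add_apply, Complex.ofReal_add]
  ring

theorem betaC_add (P R : Matrix (Fin 2) (Fin 2) ℝ) : betaC (P + R) = betaC P + betaC R := by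
  simp only [betaC_eq, Matrix.add_apply, Complex.ofReal_add]
  ring

theorem alphaC_smul (r : ℝ) (P : Matrix (Fin 2) (Fin 2) ℝ) : alphaC (r • P) = r * alphaC P := by
  simp only [alphaC_eq, Matrix.smul_apply, smul_eq_mul, Complex.ofReal_mul]
  ring

theorem betaC_smul (r : ℝ) (P : Matrix (Fin 2) (Fin 2) ℝ) : betaC (r • P) = r * betaC P := by
  simp only [betaC_eq, Matrix.smul_apply, smul_eq_mul, Complex.ofReal_mul]
  ring

theorem alphaC_one : alphaC 1 = 1 := by
  simp [alphaC_eq]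

theorem betaC_one : betaC 1 = 0 := by
  simp [betaC_eq]

theorem re_alphaC (P : Matrix (Fin 2) (Fin 2) ℝ) : (alphaC P).re = P.trace / 2 := by
  simp [alphaC_eq, Matrix.trace_fin_two]

theorem conj_alphaC_of_trace_eq_zero {P : Matrix (Fin 2) (Fin 2) ℝ} (hP : P.trace = 0) :
    starRingEnd ℂ (alphaC P) = -alphaC P := by
  apply Complex.ext <;> simp [re_alphaC, hP]

theorem gammaC_eq (P : Matrix (Fin 2) (Fin 2) ℝ) : gammaC P = 2 * alphaC P * betaC P := by
  rw [gammaC, dotc_vminus_mulVec_vplus, alphaC_eq, betaC_eq]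
  simp only [toC, Matrix.mul_apply, Matrix.conjTranspose_apply, Matrix.map_apply, RCLike.star_def,
    Complex.conj_ofReal, Fin.sum_univ_two]
  linear_combination (P 1 0 ^ 2 - P 0 1 ^ 2 : ℂ) / 2 * Complex.I_sq

theorem deltaC_eq (P R : Matrix (Fin 2) (Fin 2) ℝ) :
    deltaC P R = (alphaC P + (alphaC P).re) * betaC R + (alphaC R + (alphaC R).re) * betaC P := by
  rw [deltaC, dotc_vminus_mulVec_vplus, re_alphaC, re_alphaC, alphaC_eq, betaC_eq, alphaC_eq,
    betaC_eq]
  simp only [toC, Matrix.add_apply, Matrix.mul_apply, Matrix.map_apply, Matrix.conjTranspose_apply,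
    RCLike.star_def, Complex.conj_ofReal, Fin.sum_univ_two, Matrix.trace_fin_two,
    Complex.ofReal_div, Complex.ofReal_add, Complex.ofReal_ofNat]
  linear_combination (P 1 0 * R 1 0 - P 0 1 * R 0 1 : ℂ) / 2 * Complex.I_sq

theorem sq_eq_smul_one_of_trace_eq_zero {P : Matrix (Fin 2) (Fin 2) ℝ} (hP : P.trace = 0) :
    P ^ 2 = (Complex.normSq (betaC P) - Complex.normSq (alphaC P)) •
      (1 : Matrix (Fin 2) (Fin 2) ℝ) := by
  rw [Matrix.trace_fin_two, ← eq_neg_iff_add_eq_zero] at hP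
  ext i j
  fin_cases i <;> fin_cases j <;>
    simp [alphaC_eq, betaC_eq, pow_two, Matrix.mul_apply, hP, Complex.normSq_apply] <;> ring

end MatrixElements

section BigO

variable {X : Type*} {l : Filter X} {g : X → ℝ} {A : X → Matrix (Fin 2) (Fin 2) ℝ}

theorem isBigO_alphaC (hA : ∀ i j, (fun x => A x i j) =O[l] g) :
    (fun x => alphaC (A x)) =O[l] g := by
  have hA' (i j : Fin 2) : (fun x => (A x i j : ℂ)) =O[l] g := Complex.isBigO_ofReal_left.2 (hA i j)
  have h := (((hA' 0 0).add (hA' 1 1)).add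
    (((hA' 1 0).sub (hA' 0 1)).const_mul_left Complex.I)).const_mul_left (1 / 2)
  exact h.congr_left fun x => by rw [alphaC_eq]; ring

theorem isBigO_betaC (hA : ∀ i j, (fun x => A x i j) =O[l] g) :
    (fun x => betaC (A x)) =O[l] g := by
  have hA' (i j : Fin 2) : (fun x => (A x i j : ℂ)) =O[l] g := Complex.isBigO_ofReal_left.2 (hA i j)
  have h := (((hA' 0 0).sub (hA' 1 1)).sub
    (((hA' 1 0).add (hA' 0 1)).const_mul_left Complex.I)).const_mul_left (1 / 2)
  exact h.congr_left fun x => by rw [betaC_eq]; ring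

theorem isBigO_exp_mul_I (c : ℝ) (θ : X → ℝ) :
    (fun x => Complex.exp (c * θ x * Complex.I)) =O[l] fun _ => (1 : ℝ) :=
  IsBigO.of_bound' (Eventually.of_forall fun x => by
    rw [← Complex.ofReal_mul, Complex.norm_exp_ofReal_mul_I, norm_one])

end BigO

/-! ### The quotient of `P e_θ` by `e_θ` -/

section AngularRatio

/-- The quotient `⟨v|P|e_θ⟩ / ⟨v|e_θ⟩`: identifying `ℝ²` with `ℂ`, it is `P e_θ` divided by the unit
complex number `e_θ`. -/
noncomputable def angularRatio (P : Matrix (Fin 2) (Fin 2) ℝ) (θ : ℝ) : ℂ :=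
  (((P *ᵥ ![cos θ, sin θ]) 0 : ℝ) + ((P *ᵥ ![cos θ, sin θ]) 1 : ℝ) * Complex.I) *
    Complex.exp (-(θ : ℂ) * Complex.I)

theorem angularRatio_eq (P : Matrix (Fin 2) (Fin 2) ℝ) (θ : ℝ) :
    angularRatio P θ =
      alphaC P + starRingEnd ℂ (betaC P * Complex.exp (2 * θ * Complex.I)) := by
  have hconj : starRingEnd ℂ (Complex.exp (2 * θ * Complex.I)) =
      Complex.exp (-(θ : ℂ) * Complex.I) ^ 2 := by
    rw [← Complex.exp_conj, ← Complex.exp_nat_mul]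
    congr 1
    simp only [map_mul, Complex.conj_ofNat, Complex.conj_ofReal, Complex.conj_I, Nat.cast_ofNat]
    ring
  have hexp : Complex.exp (-(θ : ℂ) * Complex.I) = Complex.cos θ - Complex.sin θ * Complex.I := by
    rw [Complex.exp_mul_I, Complex.cos_neg, Complex.sin_neg]
    ring
  have hcs := Complex.sin_sq_add_cos_sq θ
  rw [angularRatio, map_mul, hconj, hexp, alphaC_eq, betaC_eq]
  simp only [Matrix.mulVec, dotProduct, Fin.sum_univ_two, Matrix.cons_val_zero,
    Matrix.cons_val_one, Complex.ofReal_add, Complex.ofReal_mul, Complex.ofReal_cos,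
    Complex.ofReal_sin, map_div₀, map_add, map_sub, map_mul, Complex.conj_ofReal, Complex.conj_I,
    Complex.conj_ofNat]
  linear_combination (P 0 0 + P 1 1 + Complex.I * (P 1 0 - P 0 1) : ℂ) / 2 * hcs +
    (P 0 1 * Complex.cos θ * Complex.sin θ -
      Complex.sin θ ^ 2 / 2 * (P 0 0 + P 1 1 + Complex.I * (P 0 1 + P 1 0)) : ℂ) * Complex.I_sq

theorem norm_angularRatio (P : Matrix (Fin 2) (Fin 2) ℝ) (θ : ℝ) :
    ‖angularRatio P θ‖ = vnorm (P *ᵥ ![cos θ, sin θ]) := by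
  rw [angularRatio, norm_mul, Complex.norm_add_mul_I, ← Complex.ofReal_neg,
    Complex.norm_exp_ofReal_mul_I, mul_one, vnorm]

theorem vnorm_smul (c : ℝ) (w : Fin 2 → ℝ) : vnorm (c • w) = |c| * vnorm w := by
  rw [vnorm, vnorm, ← sqrt_sq_eq_abs, ← sqrt_mul (sq_nonneg c)]
  simp only [Pi.smul_apply, smul_eq_mul]
  ring_nf

theorem polP_eq (P : Matrix (Fin 2) (Fin 2) ℝ) (θ : ℝ) :
    polP P θ = (alphaC P - betaC P * Complex.exp (2 * θ * Complex.I)).im := by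
  rw [show polP P θ = (angularRatio P θ).im from rfl, angularRatio_eq, Complex.add_im,
    Complex.conj_im, Complex.sub_im, sub_eq_add_neg]

theorem angularRatio_add (P R : Matrix (Fin 2) (Fin 2) ℝ) (θ : ℝ) :
    angularRatio (P + R) θ = angularRatio P θ + angularRatio R θ := by
  simp only [angularRatio_eq, alphaC_add, betaC_add, add_mul, map_add]
  ring

theorem angularRatio_smul_one (r θ : ℝ) : angularRatio (r • 1) θ = r := by
  simp [angularRatio_eq, alphaC_smul, betaC_smul, alphaC_one, betaC_one]

theorem isBigO_angularRatio {X : Type*} {l : Filter X} {g : X → ℝ}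
    {A : X → Matrix (Fin 2) (Fin 2) ℝ} (hA : ∀ i j, (fun x => A x i j) =O[l] g) (θ : X → ℝ) :
    (fun x => angularRatio (A x) (θ x)) =O[l] g := by
  have hβ : (fun x => starRingEnd ℂ (betaC (A x) * Complex.exp (2 * θ x * Complex.I))) =O[l] g := by
    refine ((Complex.conjCLE : ℂ →L[ℝ] ℂ).isBigO_comp _ l).trans ?_
    simpa using (isBigO_betaC hA).mul (isBigO_exp_mul_I 2 θ)
  exact ((isBigO_alphaC hA).add hβ).congr_left fun x => (angularRatio_eq _ _).symm

end AngularRatio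

/-! ### The expansion for a single generator -/

section Coefficients

/-- The coefficient `β_P e^{2iθ}` of the first-order term of the expansion. -/
noncomputable def firstOrderCoeff (P : Matrix (Fin 2) (Fin 2) ℝ) (θ : ℝ) : ℂ :=
  betaC P * Complex.exp (2 * θ * Complex.I)

/-- The coefficient `|β_P|² + γ_P e^{2iθ} - β_P² e^{4iθ}` of the diagonal second-order term. -/
noncomputable def secondOrderCoeff (P : Matrix (Fin 2) (Fin 2) ℝ) (θ : ℝ) : ℂ :=
  (Complex.normSq (betaC P) : ℂ) + gammaC P * Complex.exp (2 * θ * Complex.I) -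
    betaC P ^ 2 * Complex.exp (4 * θ * Complex.I)

/-- The coefficient `β_P β̄_R + δ_{P,R} e^{2iθ} - β_P β_R e^{4iθ}` of a mixed second-order term. -/
noncomputable def crossCoeff (P R : Matrix (Fin 2) (Fin 2) ℝ) (θ : ℝ) : ℂ :=
  betaC P * starRingEnd ℂ (betaC R) + deltaC P R * Complex.exp (2 * θ * Complex.I) -
    betaC P * betaC R * Complex.exp (4 * θ * Complex.I)

theorem crossCoeff_self {P : Matrix (Fin 2) (Fin 2) ℝ} (hP : P.trace = 0) (θ : ℝ) :
    crossCoeff P P θ = secondOrderCoeff P θ := by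
  rw [crossCoeff, secondOrderCoeff, Complex.mul_conj, deltaC_eq, gammaC_eq, re_alphaC, hP]
  push_cast
  ring

theorem re_angularRatio_quadratic {P : Matrix (Fin 2) (Fin 2) ℝ} (hP : P.trace = 0) (θ : ℝ) :
    (angularRatio P θ +
        ((Complex.normSq (betaC P) - Complex.normSq (alphaC P) : ℝ) : ℂ) / 2 -
        angularRatio P θ ^ 2 / 2).re =
      (firstOrderCoeff P θ + secondOrderCoeff P θ / 2).re := by
  have hexp : Complex.exp (4 * θ * Complex.I) = Complex.exp (2 * θ * Complex.I) ^ 2 := by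
    rw [← Complex.exp_nat_mul]
    congr 1
    push_cast
    ring
  have hα := conj_alphaC_of_trace_eq_zero hP
  have hαsq : (Complex.normSq (alphaC P) : ℂ) = -alphaC P ^ 2 := by
    rw [← Complex.mul_conj, hα]
    ring
  have hconj : angularRatio P θ +
        ((Complex.normSq (betaC P) - Complex.normSq (alphaC P) : ℝ) : ℂ) / 2 -
        angularRatio P θ ^ 2 / 2 =
      alphaC P + starRingEnd ℂ (firstOrderCoeff P θ + secondOrderCoeff P θ / 2) := by
    rw [angularRatio_eq, firstOrderCoeff, secondOrderCoeff, gammaC_eq, hexp, Complex.ofReal_sub,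
      hαsq]
    simp only [map_add, map_sub, map_mul, map_div₀, map_pow, Complex.conj_ofReal,
      Complex.conj_ofNat, hα]
    ring
  rw [hconj, Complex.add_re, Complex.conj_re, re_alphaC, hP, zero_div, zero_add]

end Coefficients

section SingleGenerator

variable {X : Type*} {l : Filter X} {g : X → ℝ}

theorem isBigO_log_vnorm_matExp_add (hg : Tendsto g l (𝓝 0))
    {Q R : X → Matrix (Fin 2) (Fin 2) ℝ} (hQtr : ∀ x, (Q x).trace = 0)
    (hQ : ∀ i j, (fun x => Q x i j) =O[l] g)
    (hR : ∀ i j, (fun x => R x i j) =O[l] fun x => g x ^ 3) (θ : X → ℝ) :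
    (fun x => log (vnorm (matExp (Q x + R x) *ᵥ ![cos (θ x), sin (θ x)])) -
        (firstOrderCoeff (Q x) (θ x) + secondOrderCoeff (Q x) (θ x) / 2).re)
      =O[l] fun x => g x ^ 3 := by
  let q (x : X) : ℝ := Complex.normSq (betaC (Q x)) - Complex.normSq (alphaC (Q x))
  let r (x : X) : Matrix (Fin 2) (Fin 2) ℝ :=
    matExp (Q x + R x) - (1 + Q x + (1 / 2 : ℝ) • Q x ^ 2)
  have hratio (x : X) : angularRatio (matExp (Q x + R x)) (θ x) =
      1 + (angularRatio (Q x) (θ x) + (q x : ℂ) / 2 + angularRatio (r x) (θ x)) := by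
    have hsplit : matExp (Q x + R x) = (1 + q x / 2) • 1 + Q x + r x := by
      simp only [r, sq_eq_smul_one_of_trace_eq_zero (hQtr x)]
      module
    rw [hsplit, angularRatio_add, angularRatio_add, angularRatio_smul_one]
    push_cast
    ring
  have hq : (fun x => (q x : ℂ) / 2) =O[l] fun x => g x ^ 2 := by
    have hnormSq {f : X → ℂ} (hf : f =O[l] g) :
        (fun x => Complex.normSq (f x)) =O[l] fun x => g x ^ 2 :=
      (hf.norm_left.pow 2).congr_left fun x => (Complex.normSq_eq_norm_sq _).symm
    have h := (hnormSq (isBigO_betaC hQ)).sub (hnormSq (isBigO_alphaC hQ))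
    exact ((Complex.isBigO_ofReal_left.2 h).const_mul_left (1 / 2)).congr_left
      fun x => by simp only [q]; ring
  have hlog := isBigO_clog_one_add_sub hg (isBigO_angularRatio hQ θ) hq
    (isBigO_angularRatio (isBigO_matExp_add_sub_quadratic hg hQ hR) θ)
  refine ((Complex.reCLM.isBigO_comp _ l).trans hlog).congr_left fun x => ?_
  rw [Complex.reCLM_apply, Complex.sub_re, ← hratio, Complex.log_re, norm_angularRatio,
    re_angularRatio_quadratic (hQtr x)]

end SingleGenerator

/-! ### Superposition of several generators -/

theorem quadraticMap_sum_eq_sum_add_sum_lt {R M N ι : Type*} [CommRing R] [AddCommGroup M]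
    [AddCommGroup N] [Module R M] [Module R N] [LinearOrder ι] (q : QuadraticMap R M N)
    (s : Finset ι) (f : ι → M) :
    q (∑ i ∈ s, f i) = ∑ i ∈ s, q (f i) +
      ∑ ij ∈ s ×ˢ s with ij.1 < ij.2, QuadraticMap.polar q (f ij.1) (f ij.2) := by
  have hfilter : {ij ∈ s.offDiag | ij.1 < ij.2} = {ij ∈ s ×ˢ s | ij.1 < ij.2} := by
    ext ij
    simpa only [Finset.mem_filter, Finset.mem_offDiag, Finset.mem_product, and_assoc,
      and_congr_right_iff] using fun _ _ => and_iff_right_of_imp ne_of_lt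
  rw [q.map_sum, Finset.sum_sym2_filter_not_isDiag, hfilter]
  rfl

section Superposition

variable {ι : Type*}

theorem re_crossCoeff_comm (P R : Matrix (Fin 2) (Fin 2) ℝ) (θ : ℝ) :
    (crossCoeff P R θ).re = (crossCoeff R P θ).re := by
  have hβ : (betaC P * starRingEnd ℂ (betaC R)).re = (betaC R * starRingEnd ℂ (betaC P)).re := by
    rw [← Complex.conj_re, map_mul, Complex.conj_conj, mul_comm]
  simp only [crossCoeff, Complex.sub_re, Complex.add_re, hβ, deltaC_eq P R, deltaC_eq R P,
    add_comm, mul_comm (betaC P) (betaC R)]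

/-- The real part of `crossCoeff` as a bilinear form in the two generators. -/
noncomputable def crossForm (θ : ℝ) : LinearMap.BilinForm ℝ (Matrix (Fin 2) (Fin 2) ℝ) :=
  LinearMap.mk₂ ℝ (fun P R => (crossCoeff P R θ).re)
    (fun P P' R => by
      rw [← Complex.add_re]
      congr 1
      simp only [crossCoeff, deltaC_eq, alphaC_add, betaC_add, Complex.add_re, Complex.ofReal_add]
      ring)
    (fun r P R => by
      rw [smul_eq_mul, ← Complex.re_ofReal_mul]
      congr 1
      simp only [crossCoeff, deltaC_eq, alphaC_smul, betaC_smul, Complex.re_ofReal_mul,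
        Complex.ofReal_mul]
      ring)
    (fun P R R' => by
      rw [← Complex.add_re]
      congr 1
      simp only [crossCoeff, deltaC_eq, alphaC_add, betaC_add, Complex.add_re, Complex.ofReal_add,
        map_add]
      ring)
    (fun r P R => by
      rw [smul_eq_mul, ← Complex.re_ofReal_mul]
      congr 1
      simp only [crossCoeff, deltaC_eq, alphaC_smul, betaC_smul, Complex.re_ofReal_mul,
        Complex.ofReal_mul, map_mul, Complex.conj_ofReal]
      ring)

theorem firstOrderCoeff_sum (K : Finset ι) (c : ι → ℝ) (P : ι → Matrix (Fin 2) (Fin 2) ℝ)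
    (θ : ℝ) :
    firstOrderCoeff (∑ k ∈ K, c k • P k) θ = ∑ k ∈ K, (c k : ℂ) * firstOrderCoeff (P k) θ := by
  have hsum : betaC (∑ k ∈ K, c k • P k) = ∑ k ∈ K, betaC (c k • P k) :=
    map_sum (AddMonoidHom.mk' betaC betaC_add) _ K
  simp only [firstOrderCoeff, hsum, betaC_smul, Finset.sum_mul, mul_assoc]

theorem trace_sum_smul_eq_zero {K : Finset ι} {P : ι → Matrix (Fin 2) (Fin 2) ℝ}
    (hP : ∀ k ∈ K, (P k).trace = 0) (c : ι → ℝ) : (∑ k ∈ K, c k • P k).trace = 0 := by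
  rw [Matrix.trace_sum]
  exact Finset.sum_eq_zero fun k hk => by rw [Matrix.trace_smul, hP k hk, smul_zero]

theorem re_secondOrderCoeff_sum [LinearOrder ι] {K : Finset ι}
    {P : ι → Matrix (Fin 2) (Fin 2) ℝ} (hP : ∀ k ∈ K, (P k).trace = 0) (c : ι → ℝ) (θ : ℝ) :
    (secondOrderCoeff (∑ k ∈ K, c k • P k) θ).re =
      ∑ k ∈ K, c k ^ 2 * (secondOrderCoeff (P k) θ).re +
        ∑ kk ∈ K ×ˢ K with kk.1 < kk.2,
          2 * (c kk.1 * c kk.2 * (crossCoeff (P kk.1) (P kk.2) θ).re) := by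
  have hdiag (Q : Matrix (Fin 2) (Fin 2) ℝ) (hQ : Q.trace = 0) :
      (crossForm θ).toQuadraticMap Q = (secondOrderCoeff Q θ).re := by
    rw [← crossCoeff_self hQ]
    rfl
  have hpolar (Q R : Matrix (Fin 2) (Fin 2) ℝ) :
      QuadraticMap.polar (crossForm θ).toQuadraticMap Q R = 2 * (crossCoeff Q R θ).re := by
    rw [LinearMap.BilinMap.polar_toQuadraticMap, two_mul]
    exact congrArg _ (re_crossCoeff_comm R Q θ)
  rw [← hdiag _ (trace_sum_smul_eq_zero hP c), quadraticMap_sum_eq_sum_add_sum_lt]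
  congr 1
  · refine Finset.sum_congr rfl fun k hk => ?_
    rw [QuadraticMap.map_smul, hdiag _ (hP k hk), smul_eq_mul, sq]
  · refine Finset.sum_congr rfl fun kk _ => ?_
    rw [QuadraticMap.polar_smul_left, QuadraticMap.polar_smul_right, hpolar]
    simp only [smul_eq_mul]
    ring

/-- The second-order expansion of the growth of `e_θ` under `exp (∑ k, lam ^ η k • P k)`, where the
linear, diagonal quadratic and mixed terms are summed over `K₁`, `K₂` and `L` respectively. -/
noncomputable def secondOrderExpansion (K₁ K₂ : Finset ι) (L : Finset (ι × ι)) (η : ι → ℝ)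
    (P : ι → Matrix (Fin 2) (Fin 2) ℝ) (lam θ : ℝ) : ℂ :=
  ∑ k ∈ K₁, ((lam ^ η k : ℝ) : ℂ) * firstOrderCoeff (P k) θ +
    ∑ k ∈ K₂, ((lam ^ (2 * η k) / 2 : ℝ) : ℂ) * secondOrderCoeff (P k) θ +
    ∑ kk ∈ L, ((lam ^ (η kk.1 + η kk.2) : ℝ) : ℂ) * crossCoeff (P kk.1) (P kk.2) θ

theorem re_secondOrderExpansion [LinearOrder ι] {K : Finset ι}
    {P : ι → Matrix (Fin 2) (Fin 2) ℝ} (hP : ∀ k ∈ K, (P k).trace = 0) (η : ι → ℝ) {lam : ℝ}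
    (hlam : 0 < lam) (θ : ℝ) :
    (secondOrderExpansion K K {kk ∈ K ×ˢ K | kk.1 < kk.2} η P lam θ).re =
      (firstOrderCoeff (∑ k ∈ K, lam ^ η k • P k) θ +
        secondOrderCoeff (∑ k ∈ K, lam ^ η k • P k) θ / 2).re := by
  rw [Complex.add_re, Complex.div_ofNat_re, firstOrderCoeff_sum, re_secondOrderCoeff_sum hP,
    add_div, Finset.sum_div, Finset.sum_div, ← add_assoc]
  simp only [secondOrderExpansion, Complex.add_re, Complex.re_sum, Complex.re_ofReal_mul]
  congr 2
  · refine Finset.sum_congr rfl fun k _ => ?_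
    rw [mul_comm 2 (η k), Real.rpow_mul hlam.le, Real.rpow_two]
    ring
  · funext kk
    rw [Real.rpow_add hlam]
    ring

end Superposition

section CoefficientBounds

variable {X : Type*} {l : Filter X} {g h : X → ℝ} {A B : X → Matrix (Fin 2) (Fin 2) ℝ}

theorem isBigO_firstOrderCoeff (hA : ∀ i j, (fun x => A x i j) =O[l] g) (θ : X → ℝ) :
    (fun x => firstOrderCoeff (A x) (θ x)) =O[l] g := by
  simpa [firstOrderCoeff] using (isBigO_betaC hA).mul (isBigO_exp_mul_I 2 θ)

theorem isBigO_deltaC (hA : ∀ i j, (fun x => A x i j) =O[l] g)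
    (hB : ∀ i j, (fun x => B x i j) =O[l] h) :
    (fun x => deltaC (A x) (B x)) =O[l] fun x => g x * h x := by
  have hα {D : X → Matrix (Fin 2) (Fin 2) ℝ} {k : X → ℝ} (hD : ∀ i j, (fun x => D x i j) =O[l] k) :
      (fun x => alphaC (D x) + (alphaC (D x)).re) =O[l] k := by
    exact (isBigO_alphaC hD).add (Complex.isBigO_ofReal_left.2
      ((Complex.reCLM.isBigO_comp _ l).trans (isBigO_alphaC hD)))
  simp only [deltaC_eq]
  exact ((hα hA).mul (isBigO_betaC hB)).add
    (((hα hB).mul (isBigO_betaC hA)).congr_right fun x => mul_comm _ _)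

theorem isBigO_crossCoeff (hA : ∀ i j, (fun x => A x i j) =O[l] g)
    (hB : ∀ i j, (fun x => B x i j) =O[l] h) (θ : X → ℝ) :
    (fun x => crossCoeff (A x) (B x) (θ x)) =O[l] fun x => g x * h x := by
  have hconj : (fun x => starRingEnd ℂ (betaC (B x))) =O[l] h :=
    ((Complex.conjCLE : ℂ →L[ℝ] ℂ).isBigO_comp _ l).trans (isBigO_betaC hB)
  have hδ := ((isBigO_deltaC hA hB).mul (isBigO_exp_mul_I 2 θ)).congr_right fun x => mul_one _
  have hβ := (((isBigO_betaC hA).mul (isBigO_betaC hB)).mul (isBigO_exp_mul_I 4 θ)).congr_right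
    fun x => mul_one _
  simpa [crossCoeff] using (((isBigO_betaC hA).mul hconj).add hδ).sub hβ

end CoefficientBounds

/-! ### Uniform asymptotics as `lam → 0⁺` -/

section Uniform

variable {Y ι : Type*}

theorem isBigO_nhdsGT_prod_top_iff {f : ℝ × Y → ℝ} {g : ℝ → ℝ} {a : ℝ} :
    f =O[𝓝[>] a ×ˢ ⊤] (fun x => g x.1) ↔
      ∃ C > 0, ∃ b > a, ∀ x, a < x → x ≤ b → ∀ y, |f (x, y)| ≤ C * |g x| := by
  rw [isBigO_iff']
  refine exists_congr fun C => and_congr_right fun _ => ?_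
  rw [Filter.Eventually, mem_prod_top, mem_nhdsGT_iff_exists_Ioc_subset]
  exact exists_congr fun b => and_congr_right fun _ =>
    ⟨fun h x hax hxb => h ⟨hax, hxb⟩, fun h x hx => h x hx.1 hx.2⟩

theorem isBigO_rpow_of_le {a b : ℝ} (h : a ≤ b) :
    (fun x : ℝ × Y => x.1 ^ b) =O[𝓝[>] 0 ×ˢ ⊤] fun x => x.1 ^ a := by
  refine (isBigO_nhdsGT_prod_top_iff (g := (· ^ a))).2
    ⟨1, one_pos, 1, one_pos, fun x hx hx1 _ => ?_⟩
  rw [one_mul, abs_of_nonneg (rpow_nonneg hx.le b), abs_of_nonneg (rpow_nonneg hx.le a)]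
  exact rpow_le_rpow_of_exponent_ge hx hx1 h

theorem isBigO_sum_sub_sum_filter {K : Finset ι} {e : ι → ℝ} {b : ι → ℝ × Y → ℂ} {ρ : ℝ}
    (hb : ∀ k ∈ K, b k =O[𝓝[>] 0 ×ˢ ⊤] fun x => x.1 ^ e k) :
    (fun x => ∑ k ∈ K, b k x - ∑ k ∈ K with e k < ρ, b k x) =O[𝓝[>] 0 ×ˢ ⊤] fun x => x.1 ^ ρ := by
  have htail (x : ℝ × Y) : ∑ k ∈ K, b k x - ∑ k ∈ K with e k < ρ, b k x =
      ∑ k ∈ K with ¬ e k < ρ, b k x := by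
    rw [← Finset.sum_filter_add_sum_filter_not K (e · < ρ), add_sub_cancel_left]
  simp only [htail]
  refine IsBigO.fun_sum fun k hk => ?_
  obtain ⟨hkK, hk⟩ := Finset.mem_filter.1 hk
  exact (hb k hkK).trans (isBigO_rpow_of_le (not_lt.1 hk))

theorem isBigO_secondOrderExpansion_sub_filter [LinearOrder ι] {K : Finset ι}
    {P : ι → Y → Matrix (Fin 2) (Fin 2) ℝ} (hPtr : ∀ k ∈ K, ∀ y, (P k y).trace = 0)
    (hPbdd : ∀ k ∈ K, ∀ i j, (fun y => P k y i j) =O[⊤] fun _ => (1 : ℝ)) (η : ι → ℝ) (ρ : ℝ)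
    (θ : Y → ℝ) :
    (fun x => secondOrderExpansion K K {kk ∈ K ×ˢ K | kk.1 < kk.2} η (P · x.2) x.1 (θ x.2) -
        secondOrderExpansion {k ∈ K | η k < ρ} {k ∈ K | 2 * η k < ρ}
          {kk ∈ K ×ˢ K | kk.1 < kk.2 ∧ η kk.1 + η kk.2 < ρ} η (P · x.2) x.1 (θ x.2))
      =O[𝓝[>] 0 ×ˢ ⊤] fun x => x.1 ^ ρ := by
  have hpow (c : ℝ) {f : ℝ × Y → ℂ} (hf : f =O[𝓝[>] 0 ×ˢ ⊤] fun _ => (1 : ℝ)) :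
      (fun x => ((x.1 ^ c : ℝ) : ℂ) * f x) =O[𝓝[>] 0 ×ˢ ⊤] fun x => x.1 ^ c := by
    simpa using (Complex.isBigO_ofReal_left.2 (isBigO_refl (fun x : ℝ × Y => x.1 ^ c) _)).mul hf
  have hP (k : ι) (hk : k ∈ K) (i j : Fin 2) :
      (fun x : ℝ × Y => P k x.2 i j) =O[𝓝[>] 0 ×ˢ ⊤] fun _ => (1 : ℝ) :=
    (hPbdd k hk i j).comp_tendsto tendsto_snd
  have hcross (k k' : ι) (hk : k ∈ K) (hk' : k' ∈ K) :
      (fun x : ℝ × Y => crossCoeff (P k x.2) (P k' x.2) (θ x.2)) =O[𝓝[>] 0 ×ˢ ⊤]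
        fun _ => (1 : ℝ) := by
    simpa only [mul_one] using isBigO_crossCoeff (hP k hk) (hP k' hk') (fun x => θ x.2)
  have hfirst := isBigO_sum_sub_sum_filter (K := K) (e := η) (ρ := ρ) fun k hk =>
    hpow (η k) (isBigO_firstOrderCoeff (hP k hk) fun x => θ x.2)
  have hsecond := isBigO_sum_sub_sum_filter (K := K) (e := (2 * η ·)) (ρ := ρ)
    (b := fun k x => ((x.1 ^ (2 * η k) / 2 : ℝ) : ℂ) * secondOrderCoeff (P k x.2) (θ x.2))
    fun k hk => ((hpow (2 * η k) (hcross k k hk hk)).const_mul_left (1 / 2)).congr_left fun x => by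
      rw [crossCoeff_self (hPtr k hk x.2), Complex.ofReal_div, Complex.ofReal_ofNat]
      ring
  have hmixed := isBigO_sum_sub_sum_filter (K := {kk ∈ K ×ˢ K | kk.1 < kk.2})
    (e := fun kk => η kk.1 + η kk.2) (ρ := ρ) fun kk hkk =>
      have hkK := Finset.mem_product.1 (Finset.mem_filter.1 hkk).1
      hpow (η kk.1 + η kk.2) (hcross kk.1 kk.2 hkK.1 hkK.2)
  refine ((hfirst.add hsecond).add hmixed).congr_left fun x => ?_
  simp only [secondOrderExpansion, Finset.filter_filter]
  ring

theorem isBigO_log_vnorm_matExp_sum_add [LinearOrder ι] {K : Finset ι} {η : ι → ℝ} {η₀ : ℝ}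
    (hη₀ : 0 < η₀) (hη : ∀ k ∈ K, η₀ ≤ η k) {P : ι → Y → Matrix (Fin 2) (Fin 2) ℝ}
    (hPtr : ∀ k ∈ K, ∀ y, (P k y).trace = 0)
    (hPbdd : ∀ k ∈ K, ∀ i j, (fun y => P k y i j) =O[⊤] fun _ => (1 : ℝ))
    {R : ℝ × Y → Matrix (Fin 2) (Fin 2) ℝ}
    (hR : ∀ i j, (fun x => R x i j) =O[𝓝[>] 0 ×ˢ ⊤] fun x => x.1 ^ (3 * η₀)) (θ : Y → ℝ) :
    (fun x => log (vnorm (matExp (∑ k ∈ K, x.1 ^ η k • P k x.2 + R x) *ᵥ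
          ![cos (θ x.2), sin (θ x.2)])) -
        (secondOrderExpansion {k ∈ K | η k < 3 * η₀} {k ∈ K | 2 * η k < 3 * η₀}
          {kk ∈ K ×ˢ K | kk.1 < kk.2 ∧ η kk.1 + η kk.2 < 3 * η₀} η (P · x.2) x.1 (θ x.2)).re)
      =O[𝓝[>] 0 ×ˢ ⊤] fun x => x.1 ^ (3 * η₀) := by
  have hpos : ∀ᶠ x : ℝ × Y in 𝓝[>] 0 ×ˢ ⊤, 0 < x.1 := tendsto_fst.eventually self_mem_nhdsWithin
  have hcube : (fun x : ℝ × Y => x.1 ^ (3 * η₀)) =ᶠ[𝓝[>] 0 ×ˢ ⊤] fun x => (x.1 ^ η₀) ^ 3 :=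
    hpos.mono fun x hx => by
      simp only
      rw [mul_comm, ← Nat.cast_ofNat, rpow_mul_natCast hx.le]
  have hg : Tendsto (fun x : ℝ × Y => x.1 ^ η₀) (𝓝[>] 0 ×ˢ ⊤) (𝓝 0) := by
    have h := (continuousAt_rpow_const 0 η₀ (Or.inr hη₀.le)).tendsto
    rw [zero_rpow hη₀.ne'] at h
    exact (h.mono_left nhdsWithin_le_nhds).comp tendsto_fst
  have hQ (i j : Fin 2) : (fun x : ℝ × Y => (∑ k ∈ K, x.1 ^ η k • P k x.2) i j)
      =O[𝓝[>] 0 ×ˢ ⊤] fun x => x.1 ^ η₀ := by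
    simp only [Matrix.sum_apply, Matrix.smul_apply, smul_eq_mul]
    refine IsBigO.fun_sum fun k hk => ?_
    simpa using (isBigO_rpow_of_le (hη k hk)).mul ((hPbdd k hk i j).comp_tendsto tendsto_snd)
  have hlog := isBigO_log_vnorm_matExp_add hg
    (fun x => trace_sum_smul_eq_zero (fun k hk => hPtr k hk x.2) _) hQ
    (fun i j => (hR i j).trans_eventuallyEq hcube) (fun x => θ x.2)
  have htrunc := isBigO_secondOrderExpansion_sub_filter hPtr hPbdd η (3 * η₀) θ
  have htrunc_re := (Complex.reCLM.isBigO_comp _ _).trans htrunc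
  refine ((hlog.trans_eventuallyEq hcube.symm).add htrunc_re).congr' ?_ EventuallyEq.rfl
  filter_upwards [hpos] with x hx
  rw [Complex.reCLM_apply, Complex.sub_re, re_secondOrderExpansion (fun k hk => hPtr k hk x.2) η hx,
    sub_add_sub_cancel]

end Uniform

theorem log_norm_expansion_general {S ι : Type*} [LinearOrder ι]
    (A : ℝ → S → Matrix (Fin 2) (Fin 2) ℝ) (K : Finset ι) (η : ι → ℝ)
    (P : ι → S → Matrix (Fin 2) (Fin 2) ℝ) {η₀ ρ : ℝ} (hη₀ : 0 < η₀) (hη : ∀ k ∈ K, η₀ ≤ η k)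
    (hρ : 3 * η₀ ≤ ρ) (hPtr : ∀ k ∈ K, ∀ σ, (P k σ).trace = 0)
    (hPbdd : ∀ k ∈ K, ∃ Cb : ℝ, ∀ σ i j, |P k σ i j| ≤ Cb)
    (s : S → ℝ) (hs : ∀ σ, s σ = 1 ∨ s σ = -1)
    (hexp : ∃ Cr > (0 : ℝ), ∃ lamr > (0 : ℝ), ∀ lam : ℝ, 0 < lam → lam ≤ lamr → ∀ σ : S,
      ∃ R : Matrix (Fin 2) (Fin 2) ℝ,
        A lam σ = s σ • matExp ((∑ k ∈ K, lam ^ η k • P k σ) + R) ∧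
        ∀ i j, |R i j| ≤ Cr * lam ^ ρ) :
    (∀ k σ θ, polP (P k σ) θ =
      (alphaC (P k σ) - betaC (P k σ) * Complex.exp (2 * θ * Complex.I)).im) ∧
    ∃ C > (0 : ℝ), ∃ lam₀ > (0 : ℝ), ∀ lam : ℝ, 0 < lam → lam ≤ lam₀ → ∀ σ : S, ∀ θ : ℝ,
      |log (vnorm (A lam σ *ᵥ ![cos θ, sin θ])) -
        (secondOrderExpansion {k ∈ K | η k < 3 * η₀} {k ∈ K | 2 * η k < 3 * η₀}
          {kk ∈ K ×ˢ K | kk.1 < kk.2 ∧ η kk.1 + η kk.2 < 3 * η₀} η (P · σ) lam θ).re|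
        ≤ C * lam ^ (3 * η₀) := by
  refine ⟨fun k σ θ => polP_eq (P k σ) θ, ?_⟩
  obtain ⟨Cr, hCr, lamr, hlamr, hexp⟩ := hexp
  choose! R hAR hR using hexp
  have hPbdd' (k : ι) (hk : k ∈ K) (i j : Fin 2) :
      (fun y : S × ℝ => P k y.1 i j) =O[⊤] fun _ => (1 : ℝ) := by
    obtain ⟨Cb, hCb⟩ := hPbdd k hk
    exact isBigO_top.2 ⟨Cb, fun y => by simpa using hCb y.1 i j⟩
  have hR' (i j : Fin 2) : (fun x : ℝ × S × ℝ => R x.1 x.2.1 i j) =O[𝓝[>] 0 ×ˢ ⊤]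
      fun x => x.1 ^ (3 * η₀) := by
    refine IsBigO.trans ?_ (isBigO_rpow_of_le hρ)
    refine (isBigO_nhdsGT_prod_top_iff (g := (· ^ ρ))).2
      ⟨Cr, hCr, lamr, hlamr, fun lam h0 h1 y => ?_⟩
    rw [abs_of_nonneg (rpow_nonneg h0.le ρ)]
    exact hR lam h0 h1 y.1 i j
  have hlog := isBigO_log_vnorm_matExp_sum_add hη₀ hη (fun k hk y => hPtr k hk y.1) hPbdd' hR'
    Prod.snd
  obtain ⟨C, hC, lam₀, hlam₀, hbound⟩ :=
    (isBigO_nhdsGT_prod_top_iff (g := (· ^ (3 * η₀)))).1 hlog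
  refine ⟨C, hC, min lam₀ lamr, lt_min hlam₀ hlamr, fun lam h0 h1 σ θ => ?_⟩
  have hvnorm : vnorm (A lam σ *ᵥ ![cos θ, sin θ]) =
      vnorm (matExp (∑ k ∈ K, lam ^ η k • P k σ + R lam σ) *ᵥ ![cos θ, sin θ]) := by
    have hsσ : |s σ| = 1 := by rcases hs σ with h | h <;> simp [h]
    rw [hAR lam h0 (h1.trans (min_le_right _ _)) σ, Matrix.smul_mulVec, vnorm_smul, hsσ, one_mul]
  have h := hbound lam h0 (h1.trans (min_le_left _ _)) (σ, θ)
  rw [abs_of_nonneg (rpow_nonneg h0.le _)] at h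
  rwa [hvnorm]

/-- **Lemma 1, part 1.**  (a) `p_{k,σ}(θ) = Im(α_{η_k,σ} - β_{η_k,σ} e^{2iθ})`, and
(b) the uniform expansion of `log‖M T_{λ,σ} M⁻¹ e_θ‖` up to errors `O(λ^{3η_1})`,
the sums running over the finitely many exponents `η_k < 3η_1`, `2η_k < 3η_1`,
respectively `η_{k_1} + η_{k_2} < 3η_1`. -/
theorem log_norm_expansion
    {S : Type*} [MeasurableSpace S] (μ : Measure S) [IsProbabilityMeasure μ]
    (T : ℝ → S → Matrix (Fin 2) (Fin 2) ℝ)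
    (hTdet : ∀ lam σ, (T lam σ).det = 1)
    (M : Matrix (Fin 2) (Fin 2) ℝ) (hM : M.det = 1)
    (η : ℕ → ℝ) (P : ℕ → S → Matrix (Fin 2) (Fin 2) ℝ)
    (hηpos : ∀ k, 1 ≤ k → 0 < η k)
    (hηmono : ∀ j k, 1 ≤ j → j < k → η j < η k)
    (hPtr : ∀ k σ, (P k σ).trace = 0)
    (hPmeas : ∀ k i j, Measurable fun σ => P k σ i j)
    (hPbdd : ∃ Cb : ℝ, ∀ k σ i j, |P k σ i j| ≤ Cb)
    -- truncation of the expansion: all exponents `≤ 3η_1` are among `η_1,…,η_{K'}`: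
    (K' : ℕ) (hK' : 1 ≤ K') (h3η : 3 * η 1 ≤ η (K' + 1))
    (s : S → ℝ) (hs : ∀ σ, s σ = 1 ∨ s σ = -1)
    (hexp : ∃ Cr > (0:ℝ), ∃ lamr > (0:ℝ), ∀ lam : ℝ, 0 < lam → lam ≤ lamr → ∀ σ : S,
      ∃ R : Matrix (Fin 2) (Fin 2) ℝ,
        M * T lam σ * M⁻¹ =
          s σ • matExp ((∑ k ∈ Finset.Icc 1 K', lam ^ (η k) • P k σ) + R) ∧
        ∀ i j, |R i j| ≤ Cr * lam ^ (η (K' + 1))) :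
    -- (a)
    (∀ k : ℕ, ∀ σ : S, ∀ θ : ℝ,
      polP (P k σ) θ =
        (alphaC (P k σ) - betaC (P k σ) * Complex.exp (2 * θ * Complex.I)).im) ∧
    -- (b)
    (∃ C > (0:ℝ), ∃ lam₀ > (0:ℝ), ∀ lam : ℝ, 0 < lam → lam ≤ lam₀ → ∀ σ : S, ∀ θ : ℝ,
      |Real.log (vnorm ((M * T lam σ * M⁻¹).mulVec ![Real.cos θ, Real.sin θ])) -
        ((∑ k ∈ (Finset.Icc 1 K').filter (fun k => η k < 3 * η 1),
            ((lam ^ (η k) : ℝ) : ℂ) * (betaC (P k σ) * Complex.exp (2 * θ * Complex.I))) +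
         (∑ k ∈ (Finset.Icc 1 K').filter (fun k => 2 * η k < 3 * η 1),
            ((lam ^ (2 * η k) / 2 : ℝ) : ℂ) *
              ((Complex.normSq (betaC (P k σ)) : ℂ) +
                gammaC (P k σ) * Complex.exp (2 * θ * Complex.I) -
                betaC (P k σ) ^ 2 * Complex.exp (4 * θ * Complex.I))) +
         (∑ kk ∈ ((Finset.Icc 1 K') ×ˢ (Finset.Icc 1 K')).filter
              (fun kk => kk.1 < kk.2 ∧ η kk.1 + η kk.2 < 3 * η 1),
            ((lam ^ (η kk.1 + η kk.2) : ℝ) : ℂ) *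
              (betaC (P kk.1 σ) * starRingEnd ℂ (betaC (P kk.2 σ)) +
                deltaC (P kk.1 σ) (P kk.2 σ) * Complex.exp (2 * θ * Complex.I) -
                betaC (P kk.1 σ) * betaC (P kk.2 σ) *
                  Complex.exp (4 * θ * Complex.I)))).re|
        ≤ C * lam ^ (3 * η 1)) := by
  obtain ⟨Cb, hCb⟩ := hPbdd
  have hη_ge (k : ℕ) (hk : k ∈ Finset.Icc 1 K') : η 1 ≤ η k := by
    rcases (Finset.mem_Icc.1 hk).1.eq_or_lt with rfl | h1k
    exacts [le_rfl, (hηmono 1 k le_rfl h1k).le]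
  exact log_norm_expansion_general _ (Finset.Icc 1 K') η P (hηpos 1 le_rfl) hη_ge h3η
    (fun k _ => hPtr k) (fun k _ => ⟨Cb, hCb k⟩) s hs hexp

end Anomaly10
end

section
/- (Expansion of the projective action at an anomaly.) With the expansion M T_{λ,σ} M^{−1} = ± exp(Σ_{k≥1} λ^{η_k} P_{η_k,σ}), where the exponents satisfy 0 < η_1 < η_2 < ⋯, η_K = 2η_1 and η_{K+1} ≤ η_1+η_2, the projective action satisfies, uniformly in θ and σ: S_{λ,σ}(θ) = θ + Σ_{k=1}^{K} λ^{η_k} p_{k,σ}(θ) + (1/2) λ^{2η_1} p_{1,σ}(θ) ∂_θ p_{1,σ}(θ) + O(λ^{η_{K+1}}), and similarly the inverse action satisfies S_{λ,σ}^{−1}(θ) = θ − Σ_{k=1}^{K} λ^{η_k} p_{k,σ}(θ) + (1/2) λ^{2η_1} p_{1,σ}(θ) ∂_θ p_{1,σ}(θ) + O(λ^{η_{K+1}}). Moreover, if P = [[a,b],[c,−a]], then the associated trigonometric polynomial is Im(⟨v|P|e_θ⟩/⟨v|e_θ⟩) = c cos²θ − b sin²θ − a sin(2θ). -/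
/- Statement 12: expansion of the projective action of the transfer matrices at an
anomaly: S_{λ,σ}(θ) = θ + Σ_{k=1}^K λ^{η_k} p_{k,σ}(θ) + ½λ^{2η_1} p_{1,σ}∂_θp_{1,σ}(θ)
+ O(λ^{η_{K+1}}), and the analogous formula for the inverse action; moreover the
explicit form of the trigonometric polynomials p_{k,σ}. -/

open MeasureTheory Filter Real Set

namespace Anomaly12

/-- The exponential of a 2×2 real matrix, `exp A = Σ_n A^n / n!`. -/
noncomputable def matExp (A : Matrix (Fin 2) (Fin 2) ℝ) : Matrix (Fin 2) (Fin 2) ℝ :=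
  ∑' n : ℕ, ((n.factorial : ℝ)⁻¹) • A ^ n

/-- The action of `A ∈ SL(2,ℝ)` on the Prüfer phases: a representative of the angle
`S_A(θ) ∈ ℝ/πℤ` with `e_{S_A(θ)} = ± A e_θ / ‖A e_θ‖`. -/
noncomputable def act (A : Matrix (Fin 2) (Fin 2) ℝ) (θ : ℝ) : ℝ :=
  Complex.arg (((A.mulVec ![Real.cos θ, Real.sin θ]) 0 : ℝ) +
    ((A.mulVec ![Real.cos θ, Real.sin θ]) 1 : ℝ) * Complex.I)

/-- The phase shift `S_A(θ) - θ`, taken as the representative in `(-π/2, π/2]`. -/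
noncomputable def phaseShift (A : Matrix (Fin 2) (Fin 2) ℝ) (θ : ℝ) : ℝ :=
  toIocMod Real.pi_pos (-(π / 2)) (act A θ - θ)

/-- The trigonometric polynomial `p_P(θ) = Im(⟨v|P|e_θ⟩/⟨v|e_θ⟩)`, `v = (1,-i)ᵀ/√2`. -/
noncomputable def polP (P : Matrix (Fin 2) (Fin 2) ℝ) (θ : ℝ) : ℝ :=
  ((((P.mulVec ![Real.cos θ, Real.sin θ]) 0 : ℝ) +
      ((P.mulVec ![Real.cos θ, Real.sin θ]) 1 : ℝ) * Complex.I) *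
    Complex.exp (-(θ : ℂ) * Complex.I)).im

/-!
Read as a complex number and rotated back by `θ`, the vector `A e_θ` is a unital linear functional
`q(A) = ⟨v|A|e_θ⟩ / ⟨v|e_θ⟩` of the matrix `A`, and the phase shift of `e^A` is `arg q(e^A)`, the
imaginary part of `log q(e^A)`. For small `A` the second-order cumulant expansion
`log q(e^A) = q(A) + (q(A²) - q(A)²) / 2 + O(‖A‖³)` holds uniformly in `θ`, and Cayley–Hamilton
turns the imaginary part of the second cumulant into `p_A ∂_θ p_A`. For
`A = λ^{η₁} P₁ + O(λ^{η₂})` the second-order term may be computed from `λ^{η₁} P₁` alone, at the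
price of an error `O(λ^{η₁ + η₂})`. Scalar factors act trivially on phases, so the inverse
`(c e^A)⁻¹ = c⁻¹ e^{-A}` is covered by replacing `A` with `-A`. Uniformity in `(σ, θ)` is
expressed by big-`O` along `𝓝[>] 0 ×ˢ ⊤`.
-/

section Asymptotics

open Asymptotics Topology

theorem isBigO_nhdsGT_prod_top_iff {β E : Type*} [Norm E] {f : ℝ × β → E} {g : ℝ → ℝ}
    (hg : ∀ t, 0 < t → 0 ≤ g t) :
    (f =O[𝓝[>] 0 ×ˢ ⊤] fun p => g p.1) ↔
      ∃ C > 0, ∃ t₀ > 0, ∀ t, 0 < t → t ≤ t₀ → ∀ b, ‖f (t, b)‖ ≤ C * g t := by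
  constructor
  · intro h
    obtain ⟨C, hC, hbound⟩ := h.exists_pos
    obtain ⟨t₀, ht₀, hsub⟩ := mem_nhdsGT_iff_exists_Ioc_subset.1 (mem_prod_top.1 hbound.bound)
    refine ⟨C, hC, t₀, ht₀, fun t ht htle b => ?_⟩
    have hb : ‖f (t, b)‖ ≤ C * ‖g t‖ := hsub ⟨ht, htle⟩ b
    rwa [Real.norm_of_nonneg (hg t ht)] at hb
  · rintro ⟨C, -, t₀, ht₀, h⟩
    refine IsBigO.of_bound C (mem_prod_top.2 ?_)
    filter_upwards [Ioc_mem_nhdsGT ht₀] with t ht b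
    simpa only [mem_ofPred_eq, Real.norm_of_nonneg (hg t ht.1)] using h t ht.1 ht.2 b

theorem rpow_isBigO_rpow_nhdsGT_zero {a b : ℝ} (hab : a ≤ b) :
    (fun t : ℝ => t ^ b) =O[𝓝[>] 0] fun t => t ^ a := by
  refine IsBigO.of_norm_eventuallyLE ?_ |>.trans (isBigO_refl _ _)
  filter_upwards [Ioo_mem_nhdsGT (zero_lt_one (α := ℝ))] with t ht
  rw [Real.norm_of_nonneg (rpow_nonneg ht.1.le _)]
  exact rpow_le_rpow_of_exponent_ge ht.1 ht.2.le hab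

theorem tendsto_rpow_nhdsGT_zero {a : ℝ} (ha : 0 < a) :
    Tendsto (fun t : ℝ => t ^ a) (𝓝[>] 0) (𝓝 0) := by
  have h := (continuousAt_rpow_const 0 a (Or.inr ha.le)).tendsto
  rw [zero_rpow ha.ne'] at h
  exact h.mono_left nhdsWithin_le_nhds

theorem isBigO_mul_sub_mul {ι 𝔸 : Type*} [SeminormedRing 𝔸] {l : Filter ι}
    {a₁ a₂ b₁ b₂ : ι → 𝔸} {x y : ι → ℝ} (ha₁ : a₁ =O[l] x) (hb₂ : b₂ =O[l] x)
    (ha : (fun i => a₁ i - a₂ i) =O[l] y) (hb : (fun i => b₁ i - b₂ i) =O[l] y) :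
    (fun i => a₁ i * b₁ i - a₂ i * b₂ i) =O[l] fun i => x i * y i :=
  ((ha₁.mul hb).add ((ha.mul hb₂).congr_right fun i => mul_comm _ _)).congr_left fun i => by
    noncomm_ring

/-! ### The second cumulant of a unital functional -/

section Cumulant

variable {𝔸 ι : Type*} [NormedRing 𝔸] [NormedAlgebra ℝ 𝔸] {φ : ι → 𝔸 →ₗ[ℝ] ℂ} {C : ℝ}

theorem apply_isBigO_norm (hφ_le : ∀ i a, ‖φ i a‖ ≤ C * ‖a‖) (l : Filter (𝔸 × ι)) :
    (fun p : 𝔸 × ι => φ p.2 p.1) =O[l] fun p => ‖p.1‖ :=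
  IsBigO.of_bound C (Eventually.of_forall fun p => by simpa only [norm_norm] using hφ_le p.2 p.1)

variable [CompleteSpace 𝔸]

theorem exp_sub_quadratic_isBigO :
    (fun a : 𝔸 => NormedSpace.exp a - (1 + a + (1 / 2 : ℝ) • (a * a))) =O[𝓝 0]
      fun a => ‖a‖ ^ 3 := by
  refine ((NormedSpace.exp_hasFPowerSeriesAt_zero
    (𝕂 := ℝ) (𝔸 := 𝔸)).isBigO_sub_partialSum_pow 3).congr_left fun a => ?_
  simp [FormalMultilinearSeries.partialSum, Finset.sum_range_succ,
    NormedSpace.expSeries_apply_eq, pow_two]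

theorem log_one_add_sub_quadratic_isBigO :
    (fun w : ℂ => Complex.log (1 + w) - (w - w ^ 2 / 2)) =O[𝓝 0] fun w => w ^ 3 := by
  refine (Complex.log_sub_logTaylor_isBigO 2).congr_left fun w => ?_
  simp only [Complex.logTaylor_succ, Complex.logTaylor_zero, Pi.add_apply]
  norm_num
  ring

theorem apply_exp_sub_quadratic_isBigO (hφ_one : ∀ i, φ i 1 = 1)
    (hφ_le : ∀ i a, ‖φ i a‖ ≤ C * ‖a‖) :
    (fun p : 𝔸 × ι => φ p.2 (NormedSpace.exp p.1) - 1 -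
        (φ p.2 p.1 + φ p.2 (p.1 * p.1) / 2)) =O[𝓝 0 ×ˢ ⊤] fun p => ‖p.1‖ ^ 3 := by
  have h := (IsBigO.of_bound C (Eventually.of_forall fun p : 𝔸 × ι => hφ_le p.2 _)).trans
    ((exp_sub_quadratic_isBigO (𝔸 := 𝔸)).comp_tendsto (tendsto_fst (g := (⊤ : Filter ι))))
  refine h.congr_left fun p => ?_
  simp only [Function.comp_apply, map_sub, map_add, map_smul, hφ_one, Complex.real_smul]
  push_cast
  ring

theorem apply_exp_sub_linear_isBigO (hφ_one : ∀ i, φ i 1 = 1)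
    (hφ_le : ∀ i a, ‖φ i a‖ ≤ C * ‖a‖) :
    (fun p : 𝔸 × ι => φ p.2 (NormedSpace.exp p.1) - 1 - φ p.2 p.1) =O[𝓝 0 ×ˢ ⊤]
      fun p => ‖p.1‖ ^ 2 := by
  have hcube : (fun p : 𝔸 × ι => ‖p.1‖ ^ 3) =O[𝓝 0 ×ˢ ⊤] fun p => ‖p.1‖ ^ 2 :=
    (isLittleO_norm_pow_norm_pow (E' := 𝔸) (by norm_num : 2 < 3)).isBigO.comp_tendsto tendsto_fst
  have hsq : (fun p : 𝔸 × ι => φ p.2 (p.1 * p.1)) =O[𝓝 0 ×ˢ ⊤] fun p => ‖p.1‖ ^ 2 :=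
    (IsBigO.of_bound C (Eventually.of_forall fun p : 𝔸 × ι => hφ_le p.2 _)).trans
      (IsBigO.of_norm_le fun p => (norm_mul_le p.1 p.1).trans_eq (pow_two _).symm)
  refine (((apply_exp_sub_quadratic_isBigO hφ_one hφ_le).trans hcube).add
    (hsq.const_mul_left (1 / 2))).congr_left fun p => ?_
  ring

theorem apply_exp_sub_one_isBigO (hφ_one : ∀ i, φ i 1 = 1)
    (hφ_le : ∀ i a, ‖φ i a‖ ≤ C * ‖a‖) :
    (fun p : 𝔸 × ι => φ p.2 (NormedSpace.exp p.1) - 1) =O[𝓝 0 ×ˢ ⊤] fun p => ‖p.1‖ := by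
  have hsq : (fun p : 𝔸 × ι => ‖p.1‖ ^ 2) =O[𝓝 0 ×ˢ ⊤] fun p => ‖p.1‖ := by
    simpa only [pow_one, Function.comp_def] using (isLittleO_norm_pow_norm_pow (E' := 𝔸)
      one_lt_two).isBigO.comp_tendsto (tendsto_fst (g := (⊤ : Filter ι)))
  exact (((apply_exp_sub_linear_isBigO hφ_one hφ_le).trans hsq).add
    (apply_isBigO_norm hφ_le _)).congr_left fun p => sub_add_cancel _ _

theorem tendsto_apply_exp_sub_one (hφ_one : ∀ i, φ i 1 = 1)
    (hφ_le : ∀ i a, ‖φ i a‖ ≤ C * ‖a‖) :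
    Tendsto (fun p : 𝔸 × ι => φ p.2 (NormedSpace.exp p.1) - 1) (𝓝 0 ×ˢ ⊤) (𝓝 0) :=
  (apply_exp_sub_one_isBigO hφ_one hφ_le).trans_tendsto (tendsto_norm_zero.comp tendsto_fst)

theorem log_apply_exp_sub_cumulants_isBigO (hφ_one : ∀ i, φ i 1 = 1)
    (hφ_le : ∀ i a, ‖φ i a‖ ≤ C * ‖a‖) :
    (fun p : 𝔸 × ι => Complex.log (φ p.2 (NormedSpace.exp p.1)) -
        (φ p.2 p.1 + (φ p.2 (p.1 * p.1) - φ p.2 p.1 ^ 2) / 2)) =O[𝓝 0 ×ˢ ⊤]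
      fun p => ‖p.1‖ ^ 3 := by
  have hquad := apply_exp_sub_quadratic_isBigO hφ_one hφ_le
  have hlin := apply_exp_sub_linear_isBigO hφ_one hφ_le
  have hone := apply_exp_sub_one_isBigO hφ_one hφ_le
  have hsq := (isBigO_mul_sub_mul hone (apply_isBigO_norm hφ_le _) hlin hlin).congr_right
    (g₂ := fun p => ‖p.1‖ ^ 3) fun p => by ring
  have hlog := (log_one_add_sub_quadratic_isBigO.comp_tendsto
    (tendsto_apply_exp_sub_one hφ_one hφ_le)).trans (hone.pow 3)
  refine ((hlog.add hquad).sub (hsq.const_mul_left (1 / 2))).congr_left fun p => ?_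
  simp only [Function.comp_apply, add_sub_cancel]
  ring

end Cumulant

end Asymptotics

/-! ### The quotient `⟨v|A|e_θ⟩ / ⟨v|e_θ⟩` -/

/-- The quotient `⟨v|A|e_θ⟩ / ⟨v|e_θ⟩` as a linear functional of `A`. As `⟨v|x⟩ = (x₀ + i x₁)/√2`,
it is the vector `A e_θ`, read as a complex number, rotated back by `θ`. -/
noncomputable def phaseQuot (θ : ℝ) : Matrix (Fin 2) (Fin 2) ℝ →ₗ[ℝ] ℂ where
  toFun A := (((A.mulVec ![Real.cos θ, Real.sin θ]) 0 : ℝ) +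
      ((A.mulVec ![Real.cos θ, Real.sin θ]) 1 : ℝ) * Complex.I) *
    Complex.exp (-(θ : ℂ) * Complex.I)
  map_add' A B := by
    simp only [Matrix.add_mulVec, Pi.add_apply]
    push_cast
    ring
  map_smul' c A := by
    simp only [Matrix.smul_mulVec, Pi.smul_apply, smul_eq_mul, RingHom.id_apply,
      Complex.real_smul]
    push_cast
    ring

theorem polP_eq_im_phaseQuot (A : Matrix (Fin 2) (Fin 2) ℝ) (θ : ℝ) :
    polP A θ = (phaseQuot θ A).im :=
  rfl

theorem phaseQuot_apply (A : Matrix (Fin 2) (Fin 2) ℝ) (θ : ℝ) :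
    phaseQuot θ A =
      ((A 0 0 * cos θ + A 0 1 * sin θ : ℝ) + (A 1 0 * cos θ + A 1 1 * sin θ : ℝ) * Complex.I) *
        ((cos θ : ℝ) - (sin θ : ℝ) * Complex.I) := by
  have hexp : Complex.exp (-(θ : ℂ) * Complex.I) = (cos θ : ℝ) - (sin θ : ℝ) * Complex.I := by
    rw [Complex.exp_mul_I, Complex.cos_neg, Complex.sin_neg, Complex.ofReal_cos,
      Complex.ofReal_sin, neg_mul, sub_eq_add_neg]
  rw [phaseQuot, LinearMap.coe_mk, AddHom.coe_mk, hexp]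
  simp only [Matrix.mulVec, dotProduct, Fin.sum_univ_two, Matrix.cons_val_zero,
    Matrix.cons_val_one, Matrix.cons_val_fin_one]

theorem phaseQuot_re (A : Matrix (Fin 2) (Fin 2) ℝ) (θ : ℝ) :
    (phaseQuot θ A).re =
      A 0 0 * cos θ ^ 2 + A 1 1 * sin θ ^ 2 + (A 0 1 + A 1 0) * (sin θ * cos θ) := by
  rw [phaseQuot_apply]
  simp only [Complex.mul_re, Complex.mul_im, Complex.add_re, Complex.add_im, Complex.sub_re,
    Complex.sub_im, Complex.ofReal_re, Complex.ofReal_im, Complex.I_re, Complex.I_im]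
  ring

theorem polP_eq (A : Matrix (Fin 2) (Fin 2) ℝ) (θ : ℝ) :
    polP A θ =
      A 1 0 * cos θ ^ 2 - A 0 1 * sin θ ^ 2 + (A 1 1 - A 0 0) * (sin θ * cos θ) := by
  rw [polP_eq_im_phaseQuot, phaseQuot_apply]
  simp only [Complex.mul_re, Complex.mul_im, Complex.add_re, Complex.add_im, Complex.sub_re,
    Complex.sub_im, Complex.ofReal_re, Complex.ofReal_im, Complex.I_re, Complex.I_im]
  ring

theorem polP_of_traceless (a b c θ : ℝ) :
    polP !![a, b; c, -a] θ = c * cos θ ^ 2 - b * sin θ ^ 2 - a * sin (2 * θ) := by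
  rw [polP_eq, sin_two_mul]
  simp only [Matrix.of_apply, Matrix.cons_val', Matrix.cons_val_zero, Matrix.cons_val_one,
    Matrix.cons_val_fin_one]
  ring

theorem phaseQuot_one (θ : ℝ) : phaseQuot θ 1 = 1 := by
  apply Complex.ext
  · simp [phaseQuot_re]
  · simp [← polP_eq_im_phaseQuot, polP_eq]

theorem polP_sub (A B : Matrix (Fin 2) (Fin 2) ℝ) (θ : ℝ) :
    polP (A - B) θ = polP A θ - polP B θ := by
  simp only [polP_eq_im_phaseQuot, map_sub, Complex.sub_im]

theorem polP_neg (A : Matrix (Fin 2) (Fin 2) ℝ) : polP (-A) = -polP A := by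
  funext θ
  simp only [polP_eq_im_phaseQuot, map_neg, Complex.neg_im, Pi.neg_apply]

theorem polP_add (A B : Matrix (Fin 2) (Fin 2) ℝ) (θ : ℝ) :
    polP (A + B) θ = polP A θ + polP B θ := by
  simp only [polP_eq_im_phaseQuot, map_add, Complex.add_im]

theorem polP_smul (c : ℝ) (A : Matrix (Fin 2) (Fin 2) ℝ) : polP (c • A) = c • polP A := by
  funext θ
  simp only [polP_eq_im_phaseQuot, map_smul, Complex.smul_im, Pi.smul_apply]

theorem polP_sum_smul {κ : Type*} (s : Finset κ) (c : κ → ℝ)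
    (A : κ → Matrix (Fin 2) (Fin 2) ℝ) (θ : ℝ) :
    polP (∑ k ∈ s, c k • A k) θ = ∑ k ∈ s, c k * polP (A k) θ := by
  simp only [polP_eq_im_phaseQuot, map_sum, map_smul, Complex.im_sum, Complex.smul_im, smul_eq_mul]

theorem deriv_polP (A : Matrix (Fin 2) (Fin 2) ℝ) (θ : ℝ) :
    deriv (polP A) θ = A.trace - 2 * (phaseQuot θ A).re := by
  have hderiv := ((((hasDerivAt_cos θ).pow 2).const_mul (A 1 0)).sub
    (((hasDerivAt_sin θ).pow 2).const_mul (A 0 1))).add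
    (((hasDerivAt_sin θ).mul (hasDerivAt_cos θ)).const_mul (A 1 1 - A 0 0))
  rw [show polP A = _ from funext (polP_eq A)]
  refine hderiv.deriv.trans ?_
  rw [phaseQuot_re, Matrix.trace_fin_two]
  push_cast
  linear_combination (A 0 0 + A 1 1) * sin_sq_add_cos_sq θ

theorem deriv_polP_sub (A B : Matrix (Fin 2) (Fin 2) ℝ) (θ : ℝ) :
    deriv (polP (A - B)) θ = deriv (polP A) θ - deriv (polP B) θ := by
  simp only [deriv_polP, Matrix.trace_sub, map_sub, Complex.sub_re]
  ring

theorem mul_self_eq_trace_smul_sub_det_smul {R : Type*} [CommRing R]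
    (A : Matrix (Fin 2) (Fin 2) R) : A * A = A.trace • A - A.det • 1 := by
  nontriviality R
  have h := Matrix.aeval_self_charpoly A
  simp only [Matrix.charpoly_fin_two, map_add, map_sub, map_mul, map_pow, Polynomial.aeval_X,
    Polynomial.aeval_C, Algebra.algebraMap_eq_smul_one, smul_mul_assoc, one_mul] at h
  rw [← pow_two, eq_sub_iff_add_eq, ← sub_eq_zero, ← h]
  abel

-- By Cayley–Hamilton `Im q(A²) = tr A · Im q(A)`, while `Im (q(A)²) = 2 Re q(A) Im q(A)`.
theorem im_phaseQuot_cumulant (A : Matrix (Fin 2) (Fin 2) ℝ) (θ : ℝ) :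
    (phaseQuot θ (A * A) - phaseQuot θ A ^ 2).im = polP A θ * deriv (polP A) θ := by
  rw [mul_self_eq_trace_smul_sub_det_smul, deriv_polP, polP_eq_im_phaseQuot, map_sub, map_smul,
    map_smul, phaseQuot_one, pow_two]
  simp only [Complex.sub_im, Complex.smul_im, Complex.one_im, Complex.mul_im, smul_eq_mul]
  ring

/-! ### The phase shift as an argument -/

theorem modEq_pi_of_coe_angle_eq {a b : ℝ} (h : (a : Real.Angle) = b) : a ≡ b [PMOD π] :=
  AddCommGroup.ModEq.of_nsmul (n := 2) <| by
    rw [nsmul_eq_mul]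
    exact AddCommGroup.modEq_iff_eq_mod_zmultiples.2 h

theorem arg_ofReal_mul_modEq {c : ℝ} (hc : c ≠ 0) (z : ℂ) :
    Complex.arg (c * z) ≡ Complex.arg z [PMOD π] := by
  rcases eq_or_ne z 0 with rfl | hz
  · rw [mul_zero]
  rcases hc.lt_or_gt with hneg | hpos
  · have h : Complex.arg (c * z) ≡ Complex.arg z + π [PMOD π] := by
      refine modEq_pi_of_coe_angle_eq ?_
      rw [← neg_neg ((c : ℂ) * z), ← neg_mul, ← Complex.ofReal_neg, Complex.arg_neg_coe_angle,
        Complex.arg_real_mul z (neg_pos.2 hneg), Real.Angle.coe_add]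
      exact mul_ne_zero (Complex.ofReal_ne_zero.2 (neg_ne_zero.2 hc)) hz
    exact h.trans (by simp)
  · rw [Complex.arg_real_mul z hpos]

theorem phaseShift_eq_of_modEq {A B : Matrix (Fin 2) (Fin 2) ℝ} {θ : ℝ}
    (h : act A θ ≡ act B θ [PMOD π]) : phaseShift A θ = phaseShift B θ :=
  (toIocMod_eq_toIocMod pi_pos).2 (AddCommGroup.modEq_iff_zsmul'.1 (h.sub_right θ))

theorem phaseShift_smul {c : ℝ} (hc : c ≠ 0) (A : Matrix (Fin 2) (Fin 2) ℝ) (θ : ℝ) :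
    phaseShift (c • A) θ = phaseShift A θ := by
  have hact : act (c • A) θ = Complex.arg (c * ((A.mulVec ![cos θ, sin θ] 0 : ℝ) +
      (A.mulVec ![cos θ, sin θ] 1 : ℝ) * Complex.I)) := by
    simp only [act, Matrix.smul_mulVec, Pi.smul_apply, smul_eq_mul, Complex.ofReal_mul, mul_add,
      mul_assoc]
  exact phaseShift_eq_of_modEq (hact ▸ arg_ofReal_mul_modEq hc _)

theorem act_modEq_arg_phaseQuot_add {A : Matrix (Fin 2) (Fin 2) ℝ} {θ : ℝ}
    (hA : phaseQuot θ A ≠ 0) : act A θ ≡ (phaseQuot θ A).arg + θ [PMOD π] := by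
  have hact : act A θ = (phaseQuot θ A * Complex.exp (θ * Complex.I)).arg := by
    rw [phaseQuot, LinearMap.coe_mk, AddHom.coe_mk, mul_assoc, ← Complex.exp_add, neg_mul,
      neg_add_cancel, Complex.exp_zero, mul_one, act]
  refine modEq_pi_of_coe_angle_eq ?_
  rw [hact, Complex.arg_mul_coe_angle hA (Complex.exp_ne_zero _), Real.Angle.coe_add,
    Complex.arg_exp_mul_I]
  simp

theorem phaseShift_eq_arg_phaseQuot {A : Matrix (Fin 2) (Fin 2) ℝ} {θ : ℝ}
    (hA : 0 < (phaseQuot θ A).re) : phaseShift A θ = (phaseQuot θ A).arg := by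
  have hne : phaseQuot θ A ≠ 0 := fun h => by simp [h] at hA
  have hrange := abs_lt.1 (Complex.abs_arg_lt_pi_div_two_iff.2 (Or.inl hA))
  have hmod := AddCommGroup.sub_modEq_iff_modEq_add.2 (act_modEq_arg_phaseQuot_add hne)
  exact (toIocMod_eq_iff pi_pos).2 ⟨⟨hrange.1, by linarith [hrange.2]⟩,
    AddCommGroup.modEq_iff_eq_add_zsmul.1 hmod.symm⟩

section Expansion

open Asymptotics Topology
open scoped Matrix.Norms.Operator

/-! ### Bounds in the operator norm -/

theorem norm_entry_le_linfty_opNorm {m n α : Type*} [Fintype m] [Fintype n]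
    [SeminormedAddCommGroup α] (A : Matrix m n α) (i : m) (j : n) : ‖A i j‖ ≤ ‖A‖ :=
  (PiLp.norm_apply_le (WithLp.toLp 1 (A i)) j).trans
    (norm_le_pi_norm (fun i => WithLp.toLp 1 (A i)) i)

theorem isBigO_of_entries {ι m n 𝕜 : Type*} [Fintype m] [Fintype n] [NormedField 𝕜]
    {l : Filter ι} {A : ι → Matrix m n 𝕜} {g : ι → ℝ} (h : ∀ i j, (fun a => A a i j) =O[l] g) :
    A =O[l] g := by
  classical
  have hentry (i : m) (j : n) : (fun a => Matrix.single i j (A a i j)) =O[l] g := by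
    have hunit := isBigO_const_const (Matrix.single i j (1 : 𝕜)) (one_ne_zero (α := ℝ)) l
    simpa only [Matrix.smul_single, smul_eq_mul, mul_one] using (h i j).smul hunit
  exact (IsBigO.fun_sum fun i _ => IsBigO.fun_sum fun j _ => hentry i j).congr_left
    fun a => (Matrix.matrix_eq_sum_single (A a)).symm

theorem norm_trace_le {n α : Type*} [Fintype n] [SeminormedAddCommGroup α] (A : Matrix n n α) :
    ‖A.trace‖ ≤ Fintype.card n * ‖A‖ := by
  rw [← nsmul_eq_mul, ← Finset.card_univ]
  exact norm_sum_le_of_le _ (fun i _ => norm_entry_le_linfty_opNorm A i i) |>.trans_eq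
    (Finset.sum_const _)

theorem norm_phaseQuot_le (θ : ℝ) (A : Matrix (Fin 2) (Fin 2) ℝ) :
    ‖phaseQuot θ A‖ ≤ 2 * ‖A‖ := by
  have hunit : ‖![cos θ, sin θ]‖ ≤ 1 := by
    rw [pi_norm_le_iff_of_nonneg zero_le_one, Fin.forall_fin_two]
    exact ⟨abs_cos_le_one θ, abs_sin_le_one θ⟩
  have hcoord (i : Fin 2) : ‖(A.mulVec ![cos θ, sin θ]) i‖ ≤ ‖A‖ :=
    (norm_le_pi_norm _ i).trans <| (Matrix.linfty_opNorm_mulVec _ _).trans <|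
      mul_le_of_le_one_right (norm_nonneg _) hunit
  have hrot : ‖Complex.exp (-(θ : ℂ) * Complex.I)‖ = 1 := by
    rw [← Complex.ofReal_neg, Complex.norm_exp_ofReal_mul_I]
  rw [phaseQuot, LinearMap.coe_mk, AddHom.coe_mk, norm_mul, hrot, mul_one, two_mul]
  refine (norm_add_le _ _).trans ?_
  rw [norm_mul, Complex.norm_I, mul_one, Complex.norm_real, Complex.norm_real]
  exact add_le_add (hcoord 0) (hcoord 1)

theorem abs_polP_le (A : Matrix (Fin 2) (Fin 2) ℝ) (θ : ℝ) : |polP A θ| ≤ 2 * ‖A‖ :=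
  (Complex.abs_im_le_norm _).trans (norm_phaseQuot_le θ A)

theorem abs_deriv_polP_le (A : Matrix (Fin 2) (Fin 2) ℝ) (θ : ℝ) :
    |deriv (polP A) θ| ≤ 6 * ‖A‖ := by
  have hre := (Complex.abs_re_le_norm _).trans (norm_phaseQuot_le θ A)
  have htrace : |A.trace| ≤ 2 * ‖A‖ := norm_trace_le A
  rw [deriv_polP]
  refine (abs_sub _ _).trans ?_
  rw [abs_mul, abs_two]
  linarith

section Filter

variable {ι : Type*} {l : Filter ι} {A B : ι → Matrix (Fin 2) (Fin 2) ℝ} {x y : ι → ℝ}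

theorem isBigO_polP (h : A =O[l] x) (θ : ι → ℝ) : (fun i => polP (A i) (θ i)) =O[l] x :=
  (IsBigO.of_bound 2 (Eventually.of_forall fun i => abs_polP_le (A i) (θ i))).trans h

theorem isBigO_deriv_polP (h : A =O[l] x) (θ : ι → ℝ) :
    (fun i => deriv (polP (A i)) (θ i)) =O[l] x :=
  (IsBigO.of_bound 6 (Eventually.of_forall fun i => abs_deriv_polP_le (A i) (θ i))).trans h

theorem isBigO_polP_mul_deriv_sub (hA : A =O[l] x) (hB : B =O[l] x)
    (hAB : (fun i => A i - B i) =O[l] y) (θ : ι → ℝ) :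
    (fun i => polP (A i) (θ i) * deriv (polP (A i)) (θ i) -
      polP (B i) (θ i) * deriv (polP (B i)) (θ i)) =O[l] fun i => x i * y i :=
  isBigO_mul_sub_mul (isBigO_polP hA θ) (isBigO_deriv_polP hB θ)
    ((isBigO_polP hAB θ).congr_left fun _ => polP_sub _ _ _)
    ((isBigO_deriv_polP hAB θ).congr_left fun _ => deriv_polP_sub _ _ _)

end Filter

/-! ### The expansion of the phase shift -/

theorem matExp_eq_exp : matExp = NormedSpace.exp := by
  rw [NormedSpace.exp_eq_tsum ℝ]
  rfl

theorem inv_smul_matExp {c : ℝ} (hc : c ≠ 0) (A : Matrix (Fin 2) (Fin 2) ℝ) :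
    (c • matExp A)⁻¹ = c⁻¹ • matExp (-A) := by
  have hdet : IsUnit (matExp A).det := by
    rw [matExp_eq_exp]
    exact (Matrix.isUnit_iff_isUnit_det _).1 (Matrix.isUnit_exp A)
  refine Matrix.inv_eq_right_inv ?_
  rw [smul_mul_smul_comm, mul_inv_cancel₀ hc, one_smul, matExp_eq_exp, Matrix.exp_neg,
    ← matExp_eq_exp, Matrix.mul_nonsing_inv _ hdet]

theorem eventually_phaseQuot_matExp_re_pos :
    ∀ᶠ p : Matrix (Fin 2) (Fin 2) ℝ × ℝ in 𝓝 0 ×ˢ ⊤, 0 < (phaseQuot p.2 (matExp p.1)).re := by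
  have htendsto : Tendsto (fun p : Matrix (Fin 2) (Fin 2) ℝ × ℝ =>
      (phaseQuot p.2 (matExp p.1) - 1).re) (𝓝 0 ×ˢ ⊤) (𝓝 0) := by
    rw [matExp_eq_exp]
    exact (Complex.continuous_re.tendsto 0).comp
      (tendsto_apply_exp_sub_one phaseQuot_one norm_phaseQuot_le)
  filter_upwards [htendsto.eventually (lt_mem_nhds neg_one_lt_zero)] with p hp
  rw [Complex.sub_re, Complex.one_re] at hp
  linarith

theorem log_phaseQuot_matExp_isBigO :
    (fun p : Matrix (Fin 2) (Fin 2) ℝ × ℝ => Complex.log (phaseQuot p.2 (matExp p.1)) -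
        (phaseQuot p.2 p.1 + (phaseQuot p.2 (p.1 * p.1) - phaseQuot p.2 p.1 ^ 2) / 2))
      =O[𝓝 0 ×ˢ ⊤] fun p => ‖p.1‖ ^ 3 := by
  rw [matExp_eq_exp]
  exact log_apply_exp_sub_cumulants_isBigO phaseQuot_one norm_phaseQuot_le

theorem phaseShift_matExp_isBigO :
    (fun p : Matrix (Fin 2) (Fin 2) ℝ × ℝ => phaseShift (matExp p.1) p.2 -
        (polP p.1 p.2 + 1 / 2 * (polP p.1 p.2 * deriv (polP p.1) p.2))) =O[𝓝 0 ×ˢ ⊤]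
      fun p => ‖p.1‖ ^ 3 := by
  refine ((Complex.imCLM.isBigO_comp _ _).trans log_phaseQuot_matExp_isBigO).congr' ?_
    EventuallyEq.rfl
  filter_upwards [eventually_phaseQuot_matExp_re_pos] with p hp
  rw [Complex.imCLM_apply, ← im_phaseQuot_cumulant, phaseShift_eq_arg_phaseQuot hp,
    ← Complex.log_im, polP_eq_im_phaseQuot, Complex.sub_im, Complex.add_im, Complex.div_ofNat_im]
  ring

theorem phaseShift_matExp_isBigO_of_principalPart {ι : Type*} {l : Filter ι}
    {A B : ι → Matrix (Fin 2) (Fin 2) ℝ} {x y e : ι → ℝ} (hx : Tendsto x l (𝓝 0))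
    (hyx : y =O[l] x) (hxxx : (fun i => x i ^ 3) =O[l] e) (hxy : (fun i => x i * y i) =O[l] e)
    (hB : B =O[l] x) (hAB : (fun i => A i - B i) =O[l] y) (θ : ι → ℝ) :
    (fun i => phaseShift (matExp (A i)) (θ i) - (polP (A i) (θ i) +
      1 / 2 * (polP (B i) (θ i) * deriv (polP (B i)) (θ i)))) =O[l] e := by
  have hA : A =O[l] x := ((hAB.trans hyx).add hB).congr_left fun i => sub_add_cancel _ _
  have hcubic := phaseShift_matExp_isBigO.comp_tendsto
    ((hA.trans_tendsto hx).prodMk (tendsto_top (f := θ)))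
  have hsecond := (isBigO_polP_mul_deriv_sub hA hB hAB θ).trans hxy
  refine ((hcubic.trans ((hA.norm_left.pow 3).trans hxxx)).add
    (hsecond.const_mul_left (1 / 2))).congr_left fun i => ?_
  simp only [Function.comp_apply]
  ring

section Series

variable {β : Type*} {η : ℕ → ℝ} {K : ℕ} {P : ℕ → β → Matrix (Fin 2) (Fin 2) ℝ}

theorem sum_rpow_smul_sub_head_isBigO (hη : MonotoneOn η (Ici 1)) (hK : 1 ≤ K)
    (hP : ∀ k ∈ Finset.Ioc 1 K, P k =O[⊤] fun _ => (1 : ℝ)) :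
    (fun p : ℝ × β => (∑ k ∈ Finset.Icc 1 K, p.1 ^ η k • P k p.2) - p.1 ^ η 1 • P 1 p.2)
      =O[𝓝[>] 0 ×ˢ ⊤] fun p => p.1 ^ η 2 := by
  have htail : (fun p : ℝ × β => ∑ k ∈ Finset.Ioc 1 K, p.1 ^ η k • P k p.2)
      =O[𝓝[>] 0 ×ˢ ⊤] fun p => p.1 ^ η 2 := by
    refine IsBigO.fun_sum fun k hk => ?_
    have h1k : 1 < k := (Finset.mem_Ioc.1 hk).1
    have hpow := (rpow_isBigO_rpow_nhdsGT_zero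
      (hη (mem_Ici.2 one_le_two) (mem_Ici.2 h1k.le) h1k)).comp_tendsto
      (tendsto_fst (g := (⊤ : Filter β)))
    have hPk := (hP k hk).comp_tendsto
      (tendsto_snd (f := 𝓝[>] (0 : ℝ)))
    exact (hpow.smul hPk).congr_right fun p => mul_one _
  refine htail.congr_left fun p => ?_
  rw [← Finset.add_sum_Ioc_eq_sum_Icc hK, add_sub_cancel_left]

theorem phaseShift_matExp_series_isBigO {R : ℝ × β → Matrix (Fin 2) (Fin 2) ℝ}
    (hη₁ : 0 < η 1) (hη : MonotoneOn η (Ici 1)) (hK : 1 ≤ K) (hη₃ : η (K + 1) ≤ 3 * η 1)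
    (hη₁₂ : η (K + 1) ≤ η 1 + η 2) (hP : ∀ k ∈ Finset.Icc 1 K, P k =O[⊤] fun _ => (1 : ℝ))
    (hR : R =O[𝓝[>] 0 ×ˢ ⊤] fun p => p.1 ^ η (K + 1)) (θ : β → ℝ) :
    (fun p : ℝ × β =>
      phaseShift (matExp ((∑ k ∈ Finset.Icc 1 K, p.1 ^ η k • P k p.2) + R p)) (θ p.2) -
        ((∑ k ∈ Finset.Icc 1 K, p.1 ^ η k * polP (P k p.2) (θ p.2)) +
          1 / 2 * p.1 ^ (2 * η 1) * (polP (P 1 p.2) (θ p.2) * deriv (polP (P 1 p.2)) (θ p.2))))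
      =O[𝓝[>] 0 ×ˢ ⊤] fun p => p.1 ^ η (K + 1) := by
  have hpow {a b : ℝ} (hab : a ≤ b) :
      (fun p : ℝ × β => p.1 ^ b) =O[𝓝[>] 0 ×ˢ ⊤] fun p => p.1 ^ a :=
    (rpow_isBigO_rpow_nhdsGT_zero hab).comp_tendsto tendsto_fst
  have hpos : ∀ᶠ p : ℝ × β in 𝓝[>] 0 ×ˢ ⊤, 0 < p.1 :=
    tendsto_fst.eventually self_mem_nhdsWithin
  have hη12 : η 1 ≤ η 2 := hη (mem_Ici.2 le_rfl) (mem_Ici.2 one_le_two) one_le_two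
  have hη2K : η 2 ≤ η (K + 1) := hη (mem_Ici.2 one_le_two) (mem_Ici.2 (by lia)) (by lia)
  have hP1 : (fun p : ℝ × β => p.1 ^ η 1 • P 1 p.2) =O[𝓝[>] 0 ×ˢ ⊤] fun p => p.1 ^ η 1 :=
    ((isBigO_refl _ _).smul ((hP 1 (Finset.mem_Icc.2 ⟨le_rfl, hK⟩)).comp_tendsto
      tendsto_snd)).congr_right fun p => mul_one _
  have hdiff := ((sum_rpow_smul_sub_head_isBigO hη hK fun k hk =>
    hP k (Finset.Ioc_subset_Icc_self hk)).add (hR.trans (hpow hη2K))).congr_left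
    fun p => sub_add_eq_add_sub _ _ _
  have hcube : (fun p : ℝ × β => (p.1 ^ η 1) ^ 3) =O[𝓝[>] 0 ×ˢ ⊤] fun p => p.1 ^ η (K + 1) := by
    refine (hpow hη₃).congr' (hpos.mono fun p hp => ?_) EventuallyEq.rfl
    beta_reduce
    rw [mul_comm, rpow_mul hp.le, rpow_ofNat]
  have hprod : (fun p : ℝ × β => p.1 ^ η 1 * p.1 ^ η 2) =O[𝓝[>] 0 ×ˢ ⊤]
      fun p => p.1 ^ η (K + 1) :=
    (hpow hη₁₂).congr' (hpos.mono fun p hp => rpow_add hp _ _) EventuallyEq.rfl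
  have hmain := phaseShift_matExp_isBigO_of_principalPart
    ((tendsto_rpow_nhdsGT_zero hη₁).comp tendsto_fst) (hpow hη12) hcube hprod hP1 hdiff
    fun p => θ p.2
  refine (hmain.add (isBigO_polP hR fun p => θ p.2)).congr' (hpos.mono fun p hp => ?_)
    EventuallyEq.rfl
  have hsq : p.1 ^ (2 * η 1) = p.1 ^ η 1 * p.1 ^ η 1 := by rw [two_mul, rpow_add hp]
  simp only [polP_add, polP_sum_smul, polP_smul, deriv_const_smul_field, Pi.smul_apply,
    smul_eq_mul, hsq]
  ring

end Series

theorem projective_action_expansion_general {S : Type*} (A : ℝ → S → Matrix (Fin 2) (Fin 2) ℝ)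
    (η : ℕ → ℝ) (P : ℕ → S → Matrix (Fin 2) (Fin 2) ℝ) (hη₁ : 0 < η 1)
    (hη : MonotoneOn η (Ici 1)) (K : ℕ) (hK : 1 ≤ K) (hη₃ : η (K + 1) ≤ 3 * η 1)
    (hη₁₂ : η (K + 1) ≤ η 1 + η 2)
    (hP : ∀ k ∈ Finset.Icc 1 K, ∃ C : ℝ, ∀ σ i j, |P k σ i j| ≤ C)
    (s : S → ℝ) (hs : ∀ σ, s σ ≠ 0)
    (hexp : ∃ Cr > (0 : ℝ), ∃ lamr > (0 : ℝ), ∀ lam : ℝ, 0 < lam → lam ≤ lamr → ∀ σ : S,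
      ∃ R : Matrix (Fin 2) (Fin 2) ℝ,
        A lam σ = s σ • matExp ((∑ k ∈ Finset.Icc 1 K, lam ^ η k • P k σ) + R) ∧
        ∀ i j, |R i j| ≤ Cr * lam ^ η (K + 1)) :
    ∃ C > (0 : ℝ), ∃ lam₀ > (0 : ℝ), ∀ lam : ℝ, 0 < lam → lam ≤ lam₀ → ∀ σ : S, ∀ θ : ℝ,
      |phaseShift (A lam σ) θ -
          ((∑ k ∈ Finset.Icc 1 K, lam ^ η k * polP (P k σ) θ) +
            1 / 2 * lam ^ (2 * η 1) * (polP (P 1 σ) θ * deriv (polP (P 1 σ)) θ))|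
        ≤ C * lam ^ η (K + 1) ∧
      |phaseShift (A lam σ)⁻¹ θ -
          (-(∑ k ∈ Finset.Icc 1 K, lam ^ η k * polP (P k σ) θ) +
            1 / 2 * lam ^ (2 * η 1) * (polP (P 1 σ) θ * deriv (polP (P 1 σ)) θ))|
        ≤ C * lam ^ η (K + 1) := by
  have hnonneg (t : ℝ) (ht : 0 < t) : 0 ≤ t ^ η (K + 1) := rpow_nonneg ht.le _
  obtain ⟨Cr, hCr, lamr, hlamr, hexp⟩ := hexp
  choose! R hAR hRle using hexp
  have hR : (fun p : ℝ × (S × ℝ) => R p.1 p.2.1) =O[𝓝[>] 0 ×ˢ ⊤] fun p => p.1 ^ η (K + 1) :=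
    isBigO_of_entries fun i j => (isBigO_nhdsGT_prod_top_iff hnonneg).2
      ⟨Cr, hCr, lamr, hlamr, fun t ht htle b => hRle t ht htle b.1 i j⟩
  have hPO (k) (hk : k ∈ Finset.Icc 1 K) :
      (fun b : S × ℝ => P k b.1) =O[⊤] fun _ => (1 : ℝ) := by
    obtain ⟨C, hC⟩ := hP k hk
    exact isBigO_of_entries fun i j => isBigO_top.2 ⟨C, fun b => by simpa using hC b.1 i j⟩
  have hforward := phaseShift_matExp_series_isBigO hη₁ hη hK hη₃ hη₁₂ hPO hR Prod.snd
  have hinverse := phaseShift_matExp_series_isBigO hη₁ hη hK hη₃ hη₁₂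
    (fun k hk => (hPO k hk).neg_left) hR.neg_left Prod.snd
  obtain ⟨C, hC, t₀, ht₀, hbound⟩ :=
    (isBigO_nhdsGT_prod_top_iff hnonneg).1 (hforward.prod_left hinverse)
  refine ⟨C, hC, min lamr t₀, lt_min hlamr ht₀, fun lam hlam hle σ θ => ?_⟩
  obtain ⟨hle_r, hle₀⟩ := le_min_iff.1 hle
  obtain ⟨hfwd, hinv⟩ := norm_prod_le_iff.1 (hbound lam hlam hle₀ (σ, θ))
  rw [hAR lam hlam hle_r σ, inv_smul_matExp (hs σ), phaseShift_smul (hs σ),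
    phaseShift_smul (inv_ne_zero (hs σ))]
  refine ⟨hfwd, ?_⟩
  simpa only [polP_neg, Pi.neg_apply, smul_neg, mul_neg, Finset.sum_neg_distrib, deriv.neg,
    neg_mul, neg_neg, neg_add, Real.norm_eq_abs] using hinv

end Expansion

/-- **Expansion of the projective action at an anomaly.**  Uniformly in `θ` and `σ`,
`S_{λ,σ}(θ) = θ + Σ_{k=1}^K λ^{η_k} p_{k,σ}(θ) + ½λ^{2η_1} p_{1,σ}∂_θ p_{1,σ}(θ) +
O(λ^{η_{K+1}})`, and similarly for the inverse action with the sign of the sum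
reversed; moreover for `P = [[a,b],[c,-a]]` one has
`Im(⟨v|P|e_θ⟩/⟨v|e_θ⟩) = c cos²θ - b sin²θ - a sin 2θ`. -/
theorem projective_action_expansion
    {S : Type*} [MeasurableSpace S] (μ : Measure S) [IsProbabilityMeasure μ]
    (T : ℝ → S → Matrix (Fin 2) (Fin 2) ℝ)
    (hTdet : ∀ lam σ, (T lam σ).det = 1)
    (M : Matrix (Fin 2) (Fin 2) ℝ) (hM : M.det = 1)
    (η : ℕ → ℝ) (P : ℕ → S → Matrix (Fin 2) (Fin 2) ℝ)
    (hηpos : ∀ k, 1 ≤ k → 0 < η k)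
    (hηmono : ∀ j k, 1 ≤ j → j < k → η j < η k)
    (hPtr : ∀ k σ, (P k σ).trace = 0)
    (hPmeas : ∀ k i j, Measurable fun σ => P k σ i j)
    (hPbdd : ∃ Cb : ℝ, ∀ k σ i j, |P k σ i j| ≤ Cb)
    (K : ℕ) (hK : 1 < K) (hηK : η K = 2 * η 1) (hηK1 : η (K + 1) ≤ η 1 + η 2)
    (s : S → ℝ) (hs : ∀ σ, s σ = 1 ∨ s σ = -1)
    (hexp : ∃ Cr > (0:ℝ), ∃ lamr > (0:ℝ), ∀ lam : ℝ, 0 < lam → lam ≤ lamr → ∀ σ : S,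
      ∃ R : Matrix (Fin 2) (Fin 2) ℝ,
        M * T lam σ * M⁻¹ =
          s σ • matExp ((∑ k ∈ Finset.Icc 1 K, lam ^ (η k) • P k σ) + R) ∧
        ∀ i j, |R i j| ≤ Cr * lam ^ (η (K + 1))) :
    -- expansion of the action and of the inverse action:
    (∃ C > (0:ℝ), ∃ lam₀ > (0:ℝ), ∀ lam : ℝ, 0 < lam → lam ≤ lam₀ → ∀ σ : S, ∀ θ : ℝ,
      |phaseShift (M * T lam σ * M⁻¹) θ -
          ((∑ k ∈ Finset.Icc 1 K, lam ^ (η k) * polP (P k σ) θ) +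
            1 / 2 * lam ^ (2 * η 1) * (polP (P 1 σ) θ * deriv (polP (P 1 σ)) θ))|
        ≤ C * lam ^ (η (K + 1)) ∧
      |phaseShift ((M * T lam σ * M⁻¹)⁻¹) θ -
          (-(∑ k ∈ Finset.Icc 1 K, lam ^ (η k) * polP (P k σ) θ) +
            1 / 2 * lam ^ (2 * η 1) * (polP (P 1 σ) θ * deriv (polP (P 1 σ)) θ))|
        ≤ C * lam ^ (η (K + 1))) ∧
    -- explicit form of the trigonometric polynomials:
    (∀ a b c θ : ℝ,
      polP !![a, b; c, -a] θ =
        c * Real.cos θ ^ 2 - b * Real.sin θ ^ 2 - a * Real.sin (2 * θ)) := by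
  have hη : MonotoneOn η (Ici 1) := fun j hj k _ hjk =>
    hjk.eq_or_lt.elim (fun h => h ▸ le_rfl) fun h => (hηmono j k hj h).le
  have hη₃ : η (K + 1) ≤ 3 * η 1 := by
    linarith [hη (mem_Ici.2 one_le_two) (mem_Ici.2 hK.le) hK]
  have hs₀ (σ) : s σ ≠ 0 := by rcases hs σ with h | h <;> simp [h]
  exact ⟨projective_action_expansion_general _ η P (hηpos 1 le_rfl) hη K hK.le hη₃ hηK1
    (fun k _ => hPbdd.imp fun _ h => h k) s hs₀ hexp, polP_of_traceless⟩

end Anomaly12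
end

section
/- (Appendix A: the transfer matrix at a band edge is a nontrivial Jordan block.) Let E ↦ T^E be a map from ℝ to SL(2,ℝ) which is differentiable at E = 0 (it suffices that T^E = T^0 + E·T' + o(E) entrywise with det T^E = 1 for all E near 0), and suppose Tr(T^0) = 2 and (d/dE)Tr(T^E)|_{E=0} ≠ 0. Then T^0 ≠ 𝟙; consequently, since Tr(T^0) = 2 and det(T^0) = 1, the eigenvalue 1 of T^0 has geometric multiplicity 1 and T^0 is not diagonalizable (its Jordan normal form is a nontrivial Jordan block). The analogous statement holds when Tr(T^0) = −2: then T^0 ≠ −𝟙 and the eigenvalue −1 has geometric multiplicity 1. -/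
/- Statement 13 (Appendix A): at a band edge (trace ±2 with nonvanishing energy
derivative of the trace), the transfer matrix is a nontrivial Jordan block: it is not
±𝟙, the eigenvalue ±1 has geometric multiplicity 1, and it is not diagonalizable. -/

open Matrix

namespace JordanBlock

/-!
If `T x` is a scalar matrix `a • 1`, then `a • adjugate (T x) = det (T x) • 1`, so Jacobi's formula
`(det T)' = tr (adjugate T * T')` becomes `a * (det T)' = det T * tr T'` at `x`. When `det T` is
locally constant and invertible this forces `tr T' = 0`. A matrix with characteristic polynomial
`(X - c) ^ n` which is not scalar is not diagonalizable, and for `n = 2` its eigenspace, being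
neither zero nor the whole plane, is a line.
-/

open Polynomial Topology

section Det

variable {R n : Type*} [CommRing R] [Fintype n] [DecidableEq n]

lemma det_updateCol_eq_sum_perm (A : Matrix n n R) (j : n) (b : n → R) :
    (A.updateCol j b).det =
      ∑ σ : Equiv.Perm n, (σ.sign : ℤ) • ((∏ i ∈ Finset.univ.erase j, A (σ i) i) * b (σ j)) := by
  rw [det_apply]
  refine Finset.sum_congr rfl fun σ _ => ?_
  rw [← Finset.prod_erase_mul _ _ (Finset.mem_univ j), updateCol_self]
  congr 2
  exact Finset.prod_congr rfl fun i hi => updateCol_ne (Finset.ne_of_mem_erase hi)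

lemma trace_adjugate_mul (A B : Matrix n n R) :
    (A.adjugate * B).trace = ∑ j, (A.updateCol j (B.col j)).det := by
  refine Finset.sum_congr rfl fun j _ => ?_
  rw [← cramer_apply, cramer_eq_adjugate_mulVec]
  rfl

end Det

section Jacobi

variable {𝕜 R n : Type*} [NontriviallyNormedField 𝕜] [NormedCommRing R] [NormedAlgebra 𝕜 R]
  [Fintype n] {T : 𝕜 → Matrix n n R} {T' : Matrix n n R} {x : 𝕜}

lemma hasDerivAt_trace (hT : ∀ i j, HasDerivAt (fun t => T t i j) (T' i j) x) :
    HasDerivAt (fun t => (T t).trace) T'.trace x :=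
  HasDerivAt.fun_sum fun i _ => hT i i

variable [DecidableEq n]

lemma hasDerivAt_det (hT : ∀ i j, HasDerivAt (fun t => T t i j) (T' i j) x) :
    HasDerivAt (fun t => (T t).det) ((T x).adjugate * T').trace x := by
  have hperm (σ : Equiv.Perm n) :
      HasDerivAt (fun t => (σ.sign : ℤ) • ∏ i, T t (σ i) i)
        ((σ.sign : ℤ) • ∑ j, (∏ i ∈ Finset.univ.erase j, T x (σ i) i) * T' (σ j) j) x :=
    (HasDerivAt.fun_finsetProd fun i _ => hT (σ i) i).fun_const_smul _
  have hsum := HasDerivAt.fun_sum fun (σ : Equiv.Perm n) (_ : σ ∈ Finset.univ) => hperm σ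
  convert! hsum using 1
  · funext t
    exact det_apply (T t)
  · simp only [trace_adjugate_mul, det_updateCol_eq_sum_perm, Finset.smul_sum, col_apply]
    exact Finset.sum_comm

lemma trace_eq_zero_of_eq_smul_one_of_eventually_det_eq {a d : R} (hd : IsUnit d)
    (hT : ∀ i j, HasDerivAt (fun t => T t i j) (T' i j) x)
    (hdet : ∀ᶠ t in 𝓝 x, (T t).det = d) (hx : T x = a • 1) : T'.trace = 0 := by
  have hjacobi : ((T x).adjugate * T').trace = 0 :=
    (hasDerivAt_det hT).unique ((hasDerivAt_const x d).congr_of_eventuallyEq hdet)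
  have hadj : a • (T x).adjugate = d • 1 := by
    rw [← hdet.self_of_nhds, ← mul_adjugate, hx, smul_mul, one_mul]
  refine hd.mul_right_eq_zero.1 ?_
  calc d * T'.trace = ((d • 1 : Matrix n n R) * T').trace := by simp
    _ = a * ((T x).adjugate * T').trace := by rw [← hadj, smul_mul, trace_smul, smul_eq_mul]
    _ = 0 := by rw [hjacobi, mul_zero]

lemma ne_smul_one_of_deriv_trace_ne_zero {d : R} (hd : IsUnit d)
    (hT : ∀ i j, DifferentiableAt 𝕜 (fun t => T t i j) x)
    (hdet : ∀ᶠ t in 𝓝 x, (T t).det = d) (htr : deriv (fun t => (T t).trace) x ≠ 0) (a : R) :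
    T x ≠ a • 1 := by
  intro hx
  have hT' (i j : n) : HasDerivAt (fun t => T t i j)
      (of (fun i j => deriv (fun t => T t i j) x) i j) x := (hT i j).hasDerivAt
  exact htr <| (hasDerivAt_trace hT').deriv.trans <|
    trace_eq_zero_of_eq_smul_one_of_eventually_det_eq hd hT' hdet hx

end Jacobi

section Diagonalization

variable {R n : Type*} [CommRing R] [IsReduced R] [Fintype n] [DecidableEq n]
  {A P : Matrix n n R} {c : R}

lemma eq_smul_one_of_isDiag_of_charpoly_eq (hA : A.IsDiag)
    (hchar : A.charpoly = (X - C c) ^ Fintype.card n) : A = c • 1 := by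
  have hdiag (i : n) : A i i = c := by
    have hpow : (A i i - c) ^ Fintype.card n = 0 :=
      calc (A i i - c) ^ Fintype.card n
          = A.charpoly.eval (A i i) := by simp [hchar]
        _ = ∏ j, (A i i - A j j) := by
          rw [← hA.diagonal_diag, charpoly_diagonal]; simp [eval_prod]
        _ = 0 := Finset.prod_eq_zero (Finset.mem_univ i) (sub_self _)
    exact sub_eq_zero.1 (eq_zero_of_pow_eq_zero hpow)
  rw [← hA.diagonal_diag, smul_one_eq_diagonal]
  exact congrArg diagonal (funext hdiag)

lemma eq_smul_one_of_isDiag_conj_of_charpoly_eq (hP : IsUnit P.det) (hD : (P⁻¹ * A * P).IsDiag)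
    (hchar : A.charpoly = (X - C c) ^ Fintype.card n) : A = c • 1 := by
  have hconj_char : (P⁻¹ * A * P).charpoly = A.charpoly :=
    charpoly_units_conj' (nonsingInvUnit P hP) A
  have hconj : P⁻¹ * A * P = c • 1 :=
    eq_smul_one_of_isDiag_of_charpoly_eq hD (hconj_char.trans hchar)
  calc A = P * (P⁻¹ * A * P) * P⁻¹ := by
        rw [mul_assoc P⁻¹, mul_nonsing_inv_cancel_left _ _ hP, mul_nonsing_inv_cancel_right _ _ hP]
    _ = c • 1 := by rw [hconj, mul_smul_comm, mul_one, smul_mul_assoc, mul_nonsing_inv _ hP]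

end Diagonalization

lemma finrank_eigenspace_eq_one_of_finrank_eq_two {K V : Type*} [Field K] [AddCommGroup V]
    [Module K V] {f : Module.End K V} {μ : K} (hV : Module.finrank K V = 2) (hμ : f.HasEigenvalue μ)
    (hf : f ≠ μ • 1) : Module.finrank K (f.eigenspace μ) = 1 := by
  have : FiniteDimensional K V := Module.finite_of_finrank_eq_succ hV
  have hne_top : f.eigenspace μ ≠ ⊤ := by
    rw [Module.End.eigenspace_def, Ne, LinearMap.ker_eq_top, sub_eq_zero]
    exact hf
  have hpos := Submodule.one_le_finrank_iff.2 hμ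
  have hlt := Submodule.finrank_lt hne_top
  lia

lemma charpoly_fin_two_eq_X_sub_C_sq {R : Type*} [CommRing R]
    {A : Matrix (Fin 2) (Fin 2) R} {c : R} (htr : A.trace = 2 * c) (hdet : A.det = c ^ 2) :
    A.charpoly = (X - C c) ^ 2 := by
  nontriviality R
  rw [charpoly_fin_two, htr, hdet]
  simp only [map_mul, map_pow, map_ofNat]
  ring

lemma hasEigenvalue_toLin'_iff_isRoot_charpoly {R n : Type*} [CommRing R] [IsDomain R]
    [Fintype n] [DecidableEq n] (A : Matrix n n R) (μ : R) :
    Module.End.HasEigenvalue (toLin' A) μ ↔ A.charpoly.IsRoot μ := by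
  rw [Module.End.hasEigenvalue_iff_isRoot_charpoly, charpoly_toLin']

theorem transfer_matrix_band_edge_jordan_general {𝕜 K : Type*} [NontriviallyNormedField 𝕜]
    [NormedField K] [NormedAlgebra 𝕜 K] {T : 𝕜 → Matrix (Fin 2) (Fin 2) K} {x : 𝕜} {c : K}
    (hc : c ≠ 0) (hdiff : ∀ i j, DifferentiableAt 𝕜 (fun t => T t i j) x)
    (hdet : ∀ᶠ t in 𝓝 x, (T t).det = c ^ 2) (htr : (T x).trace = 2 * c)
    (hderiv : deriv (fun t => (T t).trace) x ≠ 0) :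
    (∀ a : K, T x ≠ a • 1) ∧
    Module.finrank K (Module.End.eigenspace (toLin' (T x)) c) = 1 ∧
    ¬ ∃ P : Matrix (Fin 2) (Fin 2) K, IsUnit P.det ∧ (P⁻¹ * T x * P).IsDiag := by
  have hscalar := ne_smul_one_of_deriv_trace_ne_zero (pow_ne_zero 2 hc).isUnit hdiff hdet hderiv
  have hchar := charpoly_fin_two_eq_X_sub_C_sq htr hdet.self_of_nhds
  have heigen : Module.End.HasEigenvalue (toLin' (T x)) c := by
    simp [hasEigenvalue_toLin'_iff_isRoot_charpoly, hchar]
  have hlin : toLin' (T x) ≠ c • 1 := fun h =>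
    hscalar c (toLin'.injective (by simp [h, Module.End.one_eq_id]))
  refine ⟨hscalar, finrank_eigenspace_eq_one_of_finrank_eq_two (by simp) heigen hlin, ?_⟩
  rintro ⟨P, hP, hD⟩
  exact hscalar c (eq_smul_one_of_isDiag_conj_of_charpoly_eq hP hD hchar)

/-- **Appendix A.**  Let `E ↦ T^E ∈ SL(2,ℝ)` be differentiable (entrywise) at `E = 0`
with `Tr(T⁰) = ±2` and `∂_E Tr(T^E)|₀ ≠ 0`.  Then `T⁰ ≠ ±𝟙`, the eigenvalue
`Tr(T⁰)/2 = ±1` of `T⁰` has geometric multiplicity `1`, and `T⁰` is not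
diagonalizable. -/
theorem transfer_matrix_band_edge_jordan
    (T : ℝ → Matrix (Fin 2) (Fin 2) ℝ)
    (hdiff : ∀ i j, DifferentiableAt ℝ (fun E => T E i j) 0)
    (hdet : ∀ᶠ E in nhds (0:ℝ), (T E).det = 1)
    (htr : (T 0).trace = 2 ∨ (T 0).trace = -2)
    (hderiv : deriv (fun E => (T E).trace) 0 ≠ 0) :
    T 0 ≠ 1 ∧ T 0 ≠ -1 ∧
    Module.finrank ℝ
      ↥(Module.End.eigenspace (Matrix.toLin' (T 0)) ((T 0).trace / 2)) = 1 ∧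
    ¬ ∃ Pm : Matrix (Fin 2) (Fin 2) ℝ, IsUnit Pm.det ∧ (Pm⁻¹ * T 0 * Pm).IsDiag := by
  have hsq : ((T 0).trace / 2) ^ 2 = 1 := by rcases htr with h | h <;> norm_num [h]
  have hne : (T 0).trace / 2 ≠ 0 := by intro h; norm_num [h] at hsq
  obtain ⟨hscalar, hjordan⟩ := transfer_matrix_band_edge_jordan_general
    hne hdiff (by rwa [hsq]) (by ring) hderiv
  exact ⟨by simpa using hscalar 1, by simpa using hscalar (-1), hjordan⟩

end JordanBlock
end

section
/- (Appendix B, nonexistence.) Consider the ODE p y′ + q y = r on U = (a,b), where p, q, r ∈ C^m(U), p has a zero of order l_p at x̂ ∈ U, q has a zero of order l_q at x̂ (with l_p, l_q < m), p and q have no other zeros in U, and r has a zero of order l_r at x̂. If l_r < min{l_p, l_q}, then there is no solution y ∈ C¹(U) of p y′ + q y = r on U. -/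
/- Statement 14 (Appendix B, nonexistence): if in the singular ODE p y' + q y = r the
inhomogeneity r vanishes at xh to strictly lower order than both p and q, then there
is no C¹ solution on U = (a,b). -/

open Set

namespace SingularODE14

/-- `g` has a zero of order `l` at `xh`: the first `l-1` derivatives vanish at `xh` and
the `l`-th does not (order `0` meaning `g xh ≠ 0`). -/
def HasZeroOfOrder (g : ℝ → ℝ) (xh : ℝ) (l : ℕ) : Prop :=
  (∀ k < l, iteratedDeriv k g xh = 0) ∧ iteratedDeriv l g xh ≠ 0

/-!
If a function with `n` continuous derivatives is `o((x - x₀)^n)`, even only along a set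
accumulating at `x₀`, Taylor's formula forces its derivatives up to order `n` to vanish at `x₀`,
and conversely. With `n = l_r`, both `p` and `q` are `o((x - x₀)^n)`. A function `y` with bounded
derivative is itself bounded near `x₀`, so `r = p y' + q y` is `o((x - x₀)^n)` too, contradicting
`r⁽ⁿ⁾(x₀) ≠ 0`.
-/

open Filter Topology Asymptotics
open scoped Nat

section Flatness

variable {E : Type*} [NormedAddCommGroup E] [NormedSpace ℝ E] {x₀ : ℝ} {n : ℕ} {s : Set ℝ}
  {g : ℝ → E}

theorem isLittleO_sub_sum_iteratedDeriv (hg : ContDiffAt ℝ n g x₀) :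
    (fun x ↦ g x - ∑ k ∈ Finset.range (n + 1), ((x - x₀) ^ k / k !) • iteratedDeriv k g x₀)
      =o[𝓝 x₀] fun x ↦ (x - x₀) ^ n := by
  obtain ⟨u, hu, hgu⟩ := hg.contDiffOn le_rfl (by simp)
  obtain ⟨ε, hε, hεu⟩ := Metric.mem_nhds_iff.1 hu
  have hx₀ : x₀ ∈ Metric.ball x₀ ε := Metric.mem_ball_self hε
  have taylor := taylor_isLittleO (convex_ball x₀ ε) hx₀ (hgu.mono hεu)
  rw [Metric.isOpen_ball.nhdsWithin_eq hx₀] at taylor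
  simpa only [taylor_within_apply, iteratedDerivWithin_of_isOpen Metric.isOpen_ball hx₀,
    inv_mul_eq_div] using taylor

theorem isLittleO_sub_pow_smul_iteratedDeriv (hg : ContDiffAt ℝ n g x₀)
    (hzero : ∀ k < n, iteratedDeriv k g x₀ = 0) :
    (fun x ↦ g x - ((x - x₀) ^ n / n !) • iteratedDeriv n g x₀)
      =o[𝓝 x₀] fun x ↦ (x - x₀) ^ n := by
  refine (isLittleO_sub_sum_iteratedDeriv hg).congr_left fun x ↦ ?_
  have lower_terms : ∑ k ∈ Finset.range n, ((x - x₀) ^ k / k !) • iteratedDeriv k g x₀ = 0 :=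
    Finset.sum_eq_zero fun k hk ↦ by rw [hzero k (Finset.mem_range.1 hk), smul_zero]
  rw [Finset.sum_range_succ, lower_terms, zero_add]

theorem eq_zero_of_pow_sub_smul_isLittleO (hs : AccPt x₀ (𝓟 s)) {c : E}
    (hc : (fun x ↦ (x - x₀) ^ n • c) =o[𝓝[s] x₀] fun x ↦ (x - x₀) ^ n) : c = 0 := by
  by_contra hne
  have pow_isBigO : (fun x ↦ (x - x₀) ^ n) =O[𝓝[s] x₀] fun x ↦ (x - x₀) ^ n • c :=
    .of_bound ‖c‖⁻¹ <| .of_forall fun x ↦ by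
      rw [norm_smul, mul_comm, mul_inv_cancel_right₀ (norm_ne_zero_iff.2 hne)]
  have pow_ne_zero_frequently : ∃ᶠ x in 𝓝[s] x₀, (x - x₀) ^ n ≠ 0 :=
    frequently_nhdsWithin_iff.2 <| (accPt_iff_frequently.1 hs).mono fun x hx ↦
      ⟨pow_ne_zero n (sub_ne_zero.2 hx.1), hx.2⟩
  exact isLittleO_irrefl pow_ne_zero_frequently (pow_isBigO.trans_isLittleO hc)

theorem pow_sub_isBigO_pow_sub (x₀ : ℝ) {k n : ℕ} (hk : k ≤ n) :
    (fun x ↦ (x - x₀) ^ n) =O[𝓝 x₀] fun x ↦ (x - x₀) ^ k := by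
  rcases hk.eq_or_lt with rfl | hk
  · exact isBigO_refl _ _
  · exact (isLittleO_pow_pow hk).isBigO.comp_tendsto (tendsto_sub_nhds_zero_iff.2 tendsto_id)

theorem isLittleO_pow_sub_iff_iteratedDeriv_eq_zero (hs : AccPt x₀ (𝓟 s))
    (hg : ContDiffAt ℝ n g x₀) :
    g =o[𝓝[s] x₀] (fun x ↦ (x - x₀) ^ n) ↔ ∀ k ≤ n, iteratedDeriv k g x₀ = 0 := by
  constructor
  · intro hflat k
    induction k using Nat.strong_induction_on with
    | _ k ih =>
      intro hk
      have hflat_k : g =o[𝓝[s] x₀] fun x ↦ (x - x₀) ^ k :=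
        hflat.trans_isBigO ((pow_sub_isBigO_pow_sub x₀ hk).mono nhdsWithin_le_nhds)
      have leading_term := isLittleO_sub_pow_smul_iteratedDeriv (hg.of_le (mod_cast hk))
        fun j hj ↦ ih j hj (hj.le.trans hk)
      have hcoeff : (k ! : ℝ)⁻¹ • iteratedDeriv k g x₀ = 0 :=
        eq_zero_of_pow_sub_smul_isLittleO hs <|
          (hflat_k.sub (leading_term.mono nhdsWithin_le_nhds)).congr_left fun x ↦ by
            rw [sub_sub_cancel, smul_smul, div_eq_mul_inv]
      exact (smul_eq_zero_iff_right (inv_ne_zero (mod_cast k.factorial_ne_zero))).1 hcoeff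
  · intro hzero
    refine ((isLittleO_sub_pow_smul_iteratedDeriv hg fun k hk ↦ hzero k hk.le).mono
      nhdsWithin_le_nhds).congr_left fun x ↦ ?_
    rw [hzero n le_rfl, smul_zero, sub_zero]

end Flatness

section Equation

variable {E : Type*} [NormedAddCommGroup E] [NormedSpace ℝ E] {x₀ : ℝ} {s : Set ℝ} {y : ℝ → E}

theorem isBigO_one_of_deriv_isBigO_one (hs : Convex ℝ s)
    (hy : ∀ᶠ x in 𝓝[s] x₀, DifferentiableAt ℝ y x)
    (hy' : deriv y =O[𝓝[s] x₀] fun _ ↦ (1 : ℝ)) : y =O[𝓝[s] x₀] fun _ ↦ (1 : ℝ) := by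
  obtain ⟨C, hC⟩ := hy'.bound
  simp only [norm_one, mul_one] at hC
  obtain ⟨ε, hε, hball⟩ := Metric.nhdsWithin_basis_ball.eventually_iff.1 (hy.and hC)
  have hmem : Metric.ball x₀ ε ∩ s ∈ 𝓝[s] x₀ := Metric.nhdsWithin_basis_ball.mem_of_mem hε
  rcases (Metric.ball x₀ ε ∩ s).eq_empty_or_nonempty with hempty | ⟨z, hz⟩
  · have hbot : 𝓝[s] x₀ = ⊥ := empty_mem_iff_bot.1 (hempty ▸ hmem)
    exact hbot ▸ isBigO_bot _ _
  have hconvex : Convex ℝ (Metric.ball x₀ ε ∩ s) := (convex_ball x₀ ε).inter hs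
  have lipschitz_at_z : (fun x ↦ y x - y z) =O[𝓝[s] x₀] fun x ↦ x - z :=
    .of_bound C <| eventually_of_mem hmem fun x hx ↦
      hconvex.norm_image_sub_le_of_norm_deriv_le (fun t ht ↦ (hball ht).1)
        (fun t ht ↦ (hball ht).2) hz hx
  have sub_isBigO_one : (fun x ↦ x - z) =O[𝓝[s] x₀] fun _ ↦ (1 : ℝ) :=
    ((continuous_sub_right z).continuousAt.isBigO_one ℝ).mono nhdsWithin_le_nhds
  simpa only [sub_add_cancel] using
    (lipschitz_at_z.trans sub_isBigO_one).add (isBigO_const_const (y z) one_ne_zero _)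

variable {𝔸 : Type*} [NormedRing 𝔸] [Module 𝔸 E] [IsBoundedSMul 𝔸 E]

theorem isLittleO_smul_deriv_add_smul {p q : ℝ → 𝔸} {w : ℝ → ℝ} (hs : Convex ℝ s)
    (hp : p =o[𝓝[s] x₀] w) (hq : q =o[𝓝[s] x₀] w)
    (hy : ∀ᶠ x in 𝓝[s] x₀, DifferentiableAt ℝ y x)
    (hy' : deriv y =O[𝓝[s] x₀] fun _ ↦ (1 : ℝ)) :
    (fun x ↦ p x • deriv y x + q x • y x) =o[𝓝[s] x₀] w := by
  simpa only [smul_eq_mul, mul_one] using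
    (hp.smul_isBigO hy').add (hq.smul_isBigO (isBigO_one_of_deriv_isBigO_one hs hy hy'))

/-- With `s = Ioi x₀` or `s = Iio x₀` this excludes solutions on one side of `x₀`. -/
theorem no_solution_general [NormedSpace ℝ 𝔸] {p q : ℝ → 𝔸} {r : ℝ → E} {n : ℕ}
    (hs : Convex ℝ s) (hx₀ : AccPt x₀ (𝓟 s))
    (hp : ContDiffAt ℝ n p x₀) (hq : ContDiffAt ℝ n q x₀) (hr : ContDiffAt ℝ n r x₀)
    (hp_zero : ∀ k ≤ n, iteratedDeriv k p x₀ = 0) (hq_zero : ∀ k ≤ n, iteratedDeriv k q x₀ = 0)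
    (hr_ne : iteratedDeriv n r x₀ ≠ 0) :
    ¬ ∃ y : ℝ → E, (∀ᶠ x in 𝓝[s] x₀, DifferentiableAt ℝ y x) ∧
        deriv y =O[𝓝[s] x₀] (fun _ ↦ (1 : ℝ)) ∧
        ∀ᶠ x in 𝓝[s] x₀, p x • deriv y x + q x • y x = r x := by
  rintro ⟨y, hy, hy', hode⟩
  have hp_flat := (isLittleO_pow_sub_iff_iteratedDeriv_eq_zero hx₀ hp).2 hp_zero
  have hq_flat := (isLittleO_pow_sub_iff_iteratedDeriv_eq_zero hx₀ hq).2 hq_zero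
  have hr_flat : r =o[𝓝[s] x₀] fun x ↦ (x - x₀) ^ n :=
    (isLittleO_smul_deriv_add_smul hs hp_flat hq_flat hy hy').congr' hode .rfl
  exact hr_ne ((isLittleO_pow_sub_iff_iteratedDeriv_eq_zero hx₀ hr).1 hr_flat n le_rfl)

end Equation

/-- **Appendix B, nonexistence.**  If `p, q, r ∈ C^m((a,b))` have zeros of orders
`l_p, l_q, l_r` at `xh ∈ (a,b)`, `p` and `q` have no further zeros, and
`l_r < min{l_p, l_q}`, then `p y' + q y = r` has no solution `y ∈ C¹((a,b))`. -/
theorem no_solution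
    (a b xh : ℝ) (hx : xh ∈ Ioo a b) (m : ℕ∞)
    (p q r : ℝ → ℝ) (lp lq lr : ℕ)
    (hpC : ContDiffOn ℝ m p (Ioo a b))
    (hqC : ContDiffOn ℝ m q (Ioo a b))
    (hrC : ContDiffOn ℝ m r (Ioo a b))
    (hlpm : (lp : ℕ∞) < m) (hlqm : (lq : ℕ∞) < m)
    (hzp : HasZeroOfOrder p xh lp)
    (hzq : HasZeroOfOrder q xh lq)
    (hzr : HasZeroOfOrder r xh lr)
    (hnop : ∀ x ∈ Ioo a b, x ≠ xh → p x ≠ 0)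
    (hnoq : ∀ x ∈ Ioo a b, x ≠ xh → q x ≠ 0)
    (hlt : lr < min lp lq) :
    ¬ ∃ y : ℝ → ℝ, ContDiffOn ℝ 1 y (Ioo a b) ∧
        ∀ x ∈ Ioo a b, p x * deriv y x + q x * y x = r x := by
  rintro ⟨y, hy, hode⟩
  obtain ⟨hlrp, hlrq⟩ := lt_min_iff.1 hlt
  have hlrm : (lr : WithTop ℕ∞) ≤ m := mod_cast ((Nat.cast_lt.2 hlrp).trans hlpm).le
  have hsmooth {g : ℝ → ℝ} (hg : ContDiffOn ℝ m g (Ioo a b)) : ContDiffAt ℝ lr g xh :=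
    (hg.of_le hlrm).contDiffAt (isOpen_Ioo.mem_nhds hx)
  have hy_diff : ∀ x ∈ Ioo a b, DifferentiableAt ℝ y x := fun x hx ↦
    (hy.differentiableOn one_ne_zero).differentiableAt (isOpen_Ioo.mem_nhds hx)
  have hy'_cont : ContinuousOn (deriv y) (Ioo a b) :=
    hy.continuousOn_deriv_of_isOpen isOpen_Ioo le_rfl
  exact no_solution_general (convex_Ioo a b) (isOpen_Ioo.preperfect xh hx)
    (hsmooth hpC) (hsmooth hqC) (hsmooth hrC)
    (fun k hk ↦ hzp.1 k (hk.trans_lt hlrp)) (fun k hk ↦ hzq.1 k (hk.trans_lt hlrq)) hzr.2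
    ⟨y, eventually_nhdsWithin_of_forall hy_diff, (hy'_cont xh hx).isBigO_one ℝ,
      eventually_nhdsWithin_of_forall hode⟩

end SingularODE14
end
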